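/- Every connected bridgeless cubic planar simple graph with n ≥ 4 vertices has at least 2^(√n / 100) circuit double covers. -/

import Mathlib

namespace CiDC

open SimpleGraph

/-- A circuit in a graph: a connected 2-regular subgraph. -/
def IsCircuit {V : Type*} {G : SimpleGraph V} (H : G.Subgraph) : Prop :=
  H.Connected ∧ ∀ v ∈ H.verts, (H.neighborSet v).ncard = 2

open scoped Classical in
/-- A circuit double cover: a multiset of circuits covering every edge exactly twice
(counted with multiplicity). -/
def IsCiDC {V : Type*} (G : SimpleGraph V) (C : Multiset G.Subgraph) : Prop :=
  (∀ H ∈ C, IsCircuit H) ∧ ∀ e ∈ G.edgeSet, C.countP (fun H => e ∈ H.edgeSet) = 2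

/-- ν(G): the number of circuit double covers of `G`. -/
noncomputable def nu {V : Type*} (G : SimpleGraph V) : ℕ :=
  {C : Multiset G.Subgraph | IsCiDC G C}.ncard

/-- A cubic graph: every vertex has degree 3. -/
def IsCubic {V : Type*} (G : SimpleGraph V) : Prop :=
  ∀ v : V, (G.neighborSet v).ncard = 3



/-- A rotation system on a graph: a permutation of the darts fixing the tail of each dart
and acting with a single cycle on the darts at each vertex (i.e. a cyclic ordering of the
edge-ends at each vertex). -/
structure RotationSystem {V : Type*} (G : SimpleGraph V) where
  σ : Equiv.Perm G.Dart
  fst_eq : ∀ d : G.Dart, (σ d).fst = d.fst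
  cyclic : ∀ d d' : G.Dart, d.fst = d'.fst → ∃ n : ℕ, (σ ^ n) d = d'

/-- The face-tracing map of a rotation system: traverse a dart, then turn to the next
dart in the cyclic order at its head. -/
def RotationSystem.faceMap {V : Type*} {G : SimpleGraph V} (rs : RotationSystem G) :
    Equiv.Perm G.Dart :=
  (Function.Involutive.toPerm Dart.symm (fun d => Dart.symm_symm d)).trans rs.σ

/-- The faces of a rotation system are the orbits of the face-tracing map. -/
def RotationSystem.faceSetoid {V : Type*} {G : SimpleGraph V} (rs : RotationSystem G) :
    Setoid G.Dart where
  r := rs.faceMap.SameCycle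
  iseqv := ⟨fun _ => Equiv.Perm.SameCycle.refl _ _,
    Equiv.Perm.SameCycle.symm, Equiv.Perm.SameCycle.trans⟩

/-- The number of faces of a rotation system. -/
noncomputable def RotationSystem.numFaces {V : Type*} {G : SimpleGraph V}
    (rs : RotationSystem G) : ℕ :=
  Nat.card (Quotient rs.faceSetoid)

/-- A connected graph is planar iff some rotation system satisfies Euler's formula
`n - m + F = 2` (written additively to avoid truncated subtraction). -/
def HasPlanarEmbedding {V : Type*} [Fintype V] (G : SimpleGraph V) : Prop :=
  ∃ rs : RotationSystem G, Fintype.card V + rs.numFaces = 2 + G.edgeSet.ncard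

/-!
Splitting along a nontrivial `3`-edge-cut writes the graph as a three-sum, and gluing covers of the
two summands shows that `ν` is supermultiplicative; as `√` is subadditive, the bound passes from the
summands to the graph. Without such a cut, either there are at most four vertices and two covers
suffice, or there is no `2`-edge-cut and the planar dual is a simple triangulation without
separating triangles.

In the latter case the faces adjacent to a face `f` induce a graph of maximum degree two, which can
be properly coloured with three colours. Replacing `f` and its neighbours by the three sums over
`𝔽₂` of `f` with a colour class gives another double cover by even sets, which then decomposes into
circuits. If some face has at least `0.63 √n` neighbours, far apart pieces of its neighbourhood can
be coloured independently; otherwise there are many faces with at most six neighbours and disjoint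
closed neighbourhoods, around which the replacement can be switched on independently.
-/

section FinsetParity

open Finset

lemma card_symmDiff_add_two_mul_card_inter {β : Type*} [DecidableEq β] (A B : Finset β) :
    (symmDiff A B).card + 2 * (A ∩ B).card = A.card + B.card := by
  have hdisj : Disjoint (A \ B) (B \ A) := disjoint_sdiff_sdiff
  have hA := card_sdiff_add_card_inter A B
  have hB := card_sdiff_add_card_inter B A
  rw [inter_comm] at hB
  rw [symmDiff_def, sup_eq_union, card_union_of_disjoint hdisj]
  omega

lemma even_card_symmDiff_iff {β : Type*} [DecidableEq β] {A B : Finset β} :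
    Even (symmDiff A B).card ↔ (Even A.card ↔ Even B.card) := by
  have h := congrArg Even (card_symmDiff_add_two_mul_card_inter A B)
  simpa only [Nat.even_add, even_two_mul, iff_true, eq_iff_iff] using h

lemma even_card_filter_odd_card {β γ : Type*} (s : Finset β) (t : Finset γ)
    (r : β → γ → Prop) [∀ b c, Decidable (r b c)]
    (h : ∀ b ∈ s, Even (t.filter fun c => r b c).card) :
    Even (t.filter fun c => Odd (s.filter fun b => r b c).card).card := by
  have hcount := sum_card_bipartiteAbove_eq_sum_card_bipartiteBelow (s := s) (t := t) r
  rw [← even_sum_iff_even_card_odd]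
  exact hcount ▸ even_sum _ h

lemma exists_forall_mem_iff_of_card_filter_eq_two {ι : Type*} {s : Finset ι} {p : ι → Prop}
    [DecidablePred p] (h : (s.filter p).card = 2) :
    ∃ i j, i ≠ j ∧ ∀ k, (k ∈ s ∧ p k) ↔ k = i ∨ k = j := by
  classical
  obtain ⟨i, j, hij, hs⟩ := card_eq_two.1 h
  refine ⟨i, j, hij, fun k => ?_⟩
  rw [← mem_filter, hs, mem_insert, mem_singleton]

lemma card_filter_eq_two_of_forall_mem_iff {ι : Type*} {s : Finset ι} {p : ι → Prop}
    [DecidablePred p] {i j : ι} (hij : i ≠ j) (h : ∀ k, (k ∈ s ∧ p k) ↔ k = i ∨ k = j) :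
    (s.filter p).card = 2 := by
  classical
  refine card_eq_two.2 ⟨i, j, hij, ?_⟩
  ext k
  rw [mem_filter, h, mem_insert, mem_singleton]

end FinsetParity

/-- A finite loopless multigraph, given by its vertices and the set of edges at each of them.
Contracting one side of a `3`-edge-cut can create parallel edges, so the induction cannot stay
inside simple graphs. The values of `inc` outside `verts` are irrelevant. -/
structure IncGraph (α E : Type*) where
  verts : Finset α
  inc : α → Finset E

namespace IncGraph

open Finset

section Basic

variable {α E : Type*} [DecidableEq E]

/-- The edges of a multigraph: all edges incident to some vertex. -/
def edges (G : IncGraph α E) : Finset E := G.verts.biUnion G.inc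

/-- Cubic multigraphs. The second condition says that every edge has two distinct ends. -/
structure IsCubic (G : IncGraph α E) : Prop where
  card_inc : ∀ v ∈ G.verts, (G.inc v).card = 3
  card_ends : ∀ e ∈ G.edges, (G.verts.filter fun v => e ∈ G.inc v).card = 2

/-- The edge cut of `S`: the edges with an odd number of ends in `S`. -/
def cut (G : IncGraph α E) (S : Finset α) : Finset E :=
  G.edges.filter fun e => Odd (S.filter fun v => e ∈ G.inc v).card

/-- Connected and bridgeless, expressed by the sizes of the edge cuts. -/
def IsTwoEdgeConnected (G : IncGraph α E) : Prop :=
  ∀ S ⊆ G.verts, S.Nonempty → S ≠ G.verts → 2 ≤ (G.cut S).card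

/-- The edge sets of even subgraphs, i.e. the elements of the cycle space over `𝔽₂`. -/
structure IsEven (G : IncGraph α E) (C : Finset E) : Prop where
  subset : C ⊆ G.edges
  even : ∀ v ∈ G.verts, Even (C ∩ G.inc v).card

/-- The edge sets of circuits: the minimal nonempty even sets. -/
structure IsCircuit (G : IncGraph α E) (C : Finset E) : Prop where
  isEven : G.IsEven C
  nonempty : C.Nonempty
  eq_of_subset : ∀ D ⊆ C, G.IsEven D → D.Nonempty → D = C

/-- Circuit double covers without repeated circuits, as sets of edge sets. -/
structure IsCDC (G : IncGraph α E) (𝒞 : Finset (Finset E)) : Prop where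
  isCircuit : ∀ C ∈ 𝒞, G.IsCircuit C
  card_filter_mem : ∀ e ∈ G.edges, (𝒞.filter fun C => e ∈ C).card = 2

open scoped Classical in
/-- All circuit double covers without repeated circuits. -/
noncomputable def cdcs (G : IncGraph α E) : Finset (Finset (Finset E)) :=
  G.edges.powerset.powerset.filter G.IsCDC

/-- The number of circuit double covers without repeated circuits. -/
noncomputable def nu (G : IncGraph α E) : ℕ := G.cdcs.card

/-- `𝓕` behaves like the set of faces of a planar embedding: it is a circuit double cover, and
every edge set that is orthogonal over `𝔽₂` to all its members is an edge cut. The second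
condition says that `𝓕` generates the cycle space, as in Mac Lane's planarity criterion. -/
structure IsFaceSystem (G : IncGraph α E) (𝓕 : Finset (Finset E)) : Prop where
  isCDC : G.IsCDC 𝓕
  exists_eq_cut : ∀ D ⊆ G.edges, (∀ f ∈ 𝓕, Even (D ∩ f).card) → ∃ S ⊆ G.verts, D = G.cut S

/-- An indexed family of even sets covering every edge exactly twice. -/
structure IsEvenDoubleCover {ι : Type*} (G : IncGraph α E) (s : Finset ι) (A : ι → Finset E) :
    Prop where
  isEven : ∀ i ∈ s, G.IsEven (A i)
  card_filter_mem : ∀ e ∈ G.edges, (s.filter fun i => e ∈ A i).card = 2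

open scoped Classical in
/-- The circuits contained in `A`; for even `A` in a cubic graph these are its components. -/
noncomputable def circuitsIn (G : IncGraph α E) (A : Finset E) : Finset (Finset E) :=
  A.powerset.filter G.IsCircuit

/-- The circuits obtained by decomposing every member of a family of edge sets. -/
noncomputable def decomposition {ι : Type*} (G : IncGraph α E) (s : Finset ι)
    (A : ι → Finset E) : Finset (Finset E) :=
  s.biUnion fun i => G.circuitsIn (A i)

/-- The sum over `𝔽₂` of a set of edge sets. -/
def symmSum (G : IncGraph α E) (M : Finset (Finset E)) : Finset E :=
  G.edges.filter fun e => Odd (M.filter fun g => e ∈ g).card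

variable {G : IncGraph α E}

lemma mem_edges {e : E} : e ∈ G.edges ↔ ∃ v ∈ G.verts, e ∈ G.inc v := mem_biUnion

lemma inc_subset_edges {v : α} (hv : v ∈ G.verts) : G.inc v ⊆ G.edges :=
  subset_biUnion_of_mem G.inc hv

lemma cut_subset_edges (S : Finset α) : G.cut S ⊆ G.edges := filter_subset _ _

lemma mem_cdcs {𝒞 : Finset (Finset E)} : 𝒞 ∈ G.cdcs ↔ G.IsCDC 𝒞 := by
  simp only [cdcs, mem_filter, mem_powerset, and_iff_right_iff_imp]
  exact fun h C hC => mem_powerset.2 (h.isCircuit C hC).isEven.subset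

lemma mem_circuitsIn {A C : Finset E} : C ∈ G.circuitsIn A ↔ C ⊆ A ∧ G.IsCircuit C := by
  simp only [circuitsIn, mem_filter, mem_powerset]

lemma mem_decomposition {ι : Type*} {s : Finset ι} {A : ι → Finset E} {C : Finset E} :
    C ∈ G.decomposition s A ↔ ∃ i ∈ s, C ⊆ A i ∧ G.IsCircuit C := by
  simp only [decomposition, mem_biUnion, mem_circuitsIn]

lemma IsCDC.isEvenDoubleCover {𝒞 : Finset (Finset E)} (h : G.IsCDC 𝒞) :
    G.IsEvenDoubleCover 𝒞 id :=
  ⟨fun C hC => (h.isCircuit C hC).isEven, h.card_filter_mem⟩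

lemma isEven_empty : G.IsEven ∅ :=
  ⟨empty_subset _, fun v _ => by rw [empty_inter, card_empty]; exact Even.zero⟩

protected lemma IsEven.symmDiff {C D : Finset E} (hC : G.IsEven C) (hD : G.IsEven D) :
    G.IsEven (symmDiff C D) := by
  refine ⟨symmDiff_le_sup.trans (union_subset hC.subset hD.subset), fun v hv => ?_⟩
  have hdistrib : symmDiff C D ∩ G.inc v = symmDiff (C ∩ G.inc v) (D ∩ G.inc v) :=
    inf_symmDiff_distrib_right C D (G.inc v)
  rw [hdistrib, even_card_symmDiff_iff]
  exact iff_of_true (hC.even v hv) (hD.even v hv)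

lemma IsEven.sdiff {C D : Finset E} (hC : G.IsEven C) (hD : G.IsEven D) (h : D ⊆ C) :
    G.IsEven (C \ D) :=
  symmDiff_of_ge h ▸ hC.symmDiff hD

lemma IsEven.even_card_inter_cut {C : Finset E} (hC : G.IsEven C) {S : Finset α}
    (hS : S ⊆ G.verts) : Even (C ∩ G.cut S).card := by
  have hparity := even_card_filter_odd_card S C (fun v e => e ∈ G.inc v) fun v hv => by
    rw [filter_mem_eq_inter]
    exact hC.even v (hS hv)
  rwa [cut, inter_filter, inter_eq_left.2 hC.subset]

lemma isEven_symmSum {M : Finset (Finset E)} (hM : ∀ g ∈ M, G.IsEven g) :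
    G.IsEven (G.symmSum M) := by
  refine ⟨filter_subset _ _, fun v hv => ?_⟩
  have hparity := even_card_filter_odd_card M (G.inc v) (fun g e => e ∈ g) fun g hg => by
    rw [filter_mem_eq_inter, inter_comm]
    exact (hM g hg).even v hv
  rwa [symmSum, filter_inter, inter_eq_right.2 (inc_subset_edges hv)]

lemma IsCubic.even_card_cut_iff (hG : G.IsCubic) {S : Finset α} (hS : S ⊆ G.verts) :
    Even (G.cut S).card ↔ Even S.card := by
  have hcount : ∑ e ∈ G.edges, (S.filter fun v => e ∈ G.inc v).card = S.card * 3 := by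
    rw [← sum_const_nat (f := fun v => (G.edges.filter fun e => e ∈ G.inc v).card)]
    · exact (sum_card_bipartiteAbove_eq_sum_card_bipartiteBelow (fun v e => e ∈ G.inc v)).symm
    · intro v hv
      rw [filter_mem_eq_inter, inter_eq_right.2 (inc_subset_edges (hS hv)),
        hG.card_inc v (hS hv)]
  rw [cut, ← even_sum_iff_even_card_odd, hcount, Nat.even_mul]
  exact or_iff_left (by decide)

lemma IsEven.exists_mem_circuitsIn {A : Finset E} (hA : G.IsEven A) {e : E} (he : e ∈ A) :
    ∃ C ∈ G.circuitsIn A, e ∈ C := by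
  classical
  obtain ⟨C, hC, hmin⟩ := (A.powerset.filter fun C => G.IsEven C ∧ e ∈ C).exists_min_image
    card ⟨A, mem_filter.2 ⟨mem_powerset_self A, hA, he⟩⟩
  simp only [mem_filter, mem_powerset] at hC hmin
  obtain ⟨hCA, hCeven, heC⟩ := hC
  refine ⟨C, mem_circuitsIn.2 ⟨hCA, hCeven, ⟨e, heC⟩, fun D hD hDeven hDne => ?_⟩, heC⟩
  by_cases heD : e ∈ D
  · exact eq_of_subset_of_card_le hD (hmin D ⟨hD.trans hCA, hDeven, heD⟩)
  · have hle := hmin (C \ D)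
      ⟨sdiff_subset.trans hCA, hCeven.sdiff hDeven hD, mem_sdiff.2 ⟨heC, heD⟩⟩
    have hlt := card_lt_card (sdiff_ssubset hD hDne)
    omega

lemma IsEven.exists_ne_mem_inc {C : Finset E} (hC : G.IsEven C) {v : α} (hv : v ∈ G.verts)
    {a : E} (haC : a ∈ C) (hav : a ∈ G.inc v) : ∃ b ∈ C, b ∈ G.inc v ∧ a ≠ b := by
  have hpos : 0 < (C ∩ G.inc v).card := card_pos.2 ⟨a, mem_inter.2 ⟨haC, hav⟩⟩
  obtain ⟨k, hk⟩ := hC.even v hv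
  obtain ⟨b, hb, hba⟩ := exists_mem_ne (s := C ∩ G.inc v) (by omega) a
  exact ⟨b, (mem_inter.1 hb).1, (mem_inter.1 hb).2, hba.symm⟩

lemma IsCubic.card_inter_inc_le_two (hG : G.IsCubic) {C : Finset E} (hC : G.IsEven C) {v : α}
    (hv : v ∈ G.verts) : (C ∩ G.inc v).card ≤ 2 := by
  have hle : (C ∩ G.inc v).card ≤ 3 := hG.card_inc v hv ▸ card_le_card inter_subset_right
  obtain ⟨k, hk⟩ := hC.even v hv
  omega

lemma IsCubic.inter_inc_eq_pair (hG : G.IsCubic) {C : Finset E} (hC : G.IsEven C) {v : α}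
    (hv : v ∈ G.verts) {a b : E} (haC : a ∈ C) (hbC : b ∈ C) (hav : a ∈ G.inc v)
    (hbv : b ∈ G.inc v) (hab : a ≠ b) : C ∩ G.inc v = {a, b} := by
  have hsub : {a, b} ⊆ C ∩ G.inc v :=
    insert_subset (mem_inter.2 ⟨haC, hav⟩) (singleton_subset_iff.2 (mem_inter.2 ⟨hbC, hbv⟩))
  exact (eq_of_subset_of_card_le hsub
    (card_pair hab ▸ hG.card_inter_inc_le_two hC hv)).symm

lemma IsCubic.inter_inc_eq_of_subset (hG : G.IsCubic) {A C : Finset E} (hA : G.IsEven A)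
    (hC : G.IsEven C) (hCA : C ⊆ A) {v : α} (hv : v ∈ G.verts) {e : E} (heC : e ∈ C)
    (hev : e ∈ G.inc v) : C ∩ G.inc v = A ∩ G.inc v := by
  obtain ⟨b, hbC, hbv, hne⟩ := hC.exists_ne_mem_inc hv heC hev
  rw [hG.inter_inc_eq_pair hC hv heC hbC hev hbv hne,
    hG.inter_inc_eq_pair hA hv (hCA heC) (hCA hbC) hev hbv hne]

lemma IsCubic.isEven_inter_of_subset (hG : G.IsCubic) {A C C' : Finset E} (hA : G.IsEven A)
    (hC : G.IsEven C) (hC' : G.IsEven C') (hCA : C ⊆ A) (hC'A : C' ⊆ A) :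
    G.IsEven (C ∩ C') := by
  refine ⟨inter_subset_left.trans hC.subset, fun v hv => ?_⟩
  rcases (C ∩ C' ∩ G.inc v).eq_empty_or_nonempty with h | ⟨x, hx⟩
  · rw [h, card_empty]
    exact Even.zero
  · simp only [mem_inter] at hx
    obtain ⟨⟨hxC, hxC'⟩, hxv⟩ := hx
    rw [inter_assoc, hG.inter_inc_eq_of_subset hA hC' hC'A hv hxC' hxv,
      ← hG.inter_inc_eq_of_subset hA hC hCA hv hxC hxv, ← inter_assoc, inter_self]
    exact hC.even v hv

lemma IsCubic.eq_of_mem_circuitsIn (hG : G.IsCubic) {A C C' : Finset E} (hA : G.IsEven A) {e : E}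
    (hC : C ∈ G.circuitsIn A) (hC' : C' ∈ G.circuitsIn A) (he : e ∈ C) (he' : e ∈ C') :
    C = C' := by
  rw [mem_circuitsIn] at hC hC'
  have heven := hG.isEven_inter_of_subset hA hC.2.isEven hC'.2.isEven hC.1 hC'.1
  have hne : (C ∩ C').Nonempty := ⟨e, mem_inter.2 ⟨he, he'⟩⟩
  rw [← hC.2.eq_of_subset _ inter_subset_left heven hne]
  exact hC'.2.eq_of_subset _ inter_subset_right heven hne

lemma IsCubic.even_card_inter_of_circuitsIn (hG : G.IsCubic) {A D : Finset E} (hA : G.IsEven A)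
    (h : ∀ C ∈ G.circuitsIn A, Even (D ∩ C).card) : Even (D ∩ A).card := by
  have hdecomp : D ∩ A = (G.circuitsIn A).biUnion fun C => D ∩ C := by
    ext e
    simp only [mem_inter, mem_biUnion]
    constructor
    · rintro ⟨heD, heA⟩
      obtain ⟨C, hC, heC⟩ := hA.exists_mem_circuitsIn heA
      exact ⟨C, hC, heD, heC⟩
    · rintro ⟨C, hC, heD, heC⟩
      exact ⟨heD, (mem_circuitsIn.1 hC).1 heC⟩
  rw [hdecomp, card_biUnion]
  · exact even_sum _ h
  · intro C hC C' hC' hne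
    refine disjoint_left.2 fun e he he' => hne ?_
    exact hG.eq_of_mem_circuitsIn hA hC hC' (mem_inter.1 he).2 (mem_inter.1 he').2

lemma IsCubic.exists_inc_eq_triple (hG : G.IsCubic) {v : α} (hv : v ∈ G.verts) {a b : E}
    (ha : a ∈ G.inc v) (hb : b ∈ G.inc v) (hab : a ≠ b) :
    ∃ c, a ≠ c ∧ b ≠ c ∧ G.inc v = {a, b, c} := by
  have hsub : {a, b} ⊆ G.inc v := insert_subset ha (singleton_subset_iff.2 hb)
  have hcard : (G.inc v \ {a, b}).card = 1 := by
    rw [card_sdiff_of_subset hsub, hG.card_inc v hv, card_pair hab]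
  obtain ⟨c, hc⟩ := card_eq_one.1 hcard
  have hmem : c ∈ G.inc v \ {a, b} := hc ▸ mem_singleton_self c
  simp only [mem_sdiff, mem_insert, mem_singleton, not_or] at hmem
  refine ⟨c, Ne.symm hmem.2.1, Ne.symm hmem.2.2, ?_⟩
  rw [← union_sdiff_of_subset hsub, hc, insert_union, singleton_union]

lemma IsEven.mem_iff_of_inc_eq_triple {C : Finset E} (hC : G.IsEven C) {v : α}
    (hv : v ∈ G.verts) {a b c : E} (hab : a ≠ b) (hac : a ≠ c) (hbc : b ≠ c)
    (hinc : G.inc v = {a, b, c}) : c ∈ C ↔ Xor (a ∈ C) (b ∈ C) := by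
  have heven := hC.even v hv
  rw [hinc, inter_comm, ← filter_mem_eq_inter, filter_insert, filter_insert,
    filter_singleton] at heven
  have not_even_three : ¬ Even 3 := by decide
  by_cases ha : a ∈ C <;> by_cases hb : b ∈ C <;> by_cases hc : c ∈ C <;>
    simp_all [Xor, Nat.even_add_one]

-- At a cubic vertex the two members through each edge are forced to distribute over the three
-- pairs of edges.
lemma IsEvenDoubleCover.existsUnique_mem_pair {ι : Type*} {s : Finset ι} {A : ι → Finset E}
    (h : G.IsEvenDoubleCover s A) (hG : G.IsCubic) {v : α} (hv : v ∈ G.verts) {a b : E}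
    (ha : a ∈ G.inc v) (hb : b ∈ G.inc v) (hab : a ≠ b) :
    ∃! i, i ∈ s ∧ a ∈ A i ∧ b ∈ A i := by
  classical
  obtain ⟨c, hac, hbc, hinc⟩ := hG.exists_inc_eq_triple hv ha hb hab
  have hc : c ∈ G.inc v := by simp only [hinc, mem_insert, mem_singleton, or_true]
  have hsymm : (s.filter fun i => c ∈ A i) =
      symmDiff (s.filter fun i => a ∈ A i) (s.filter fun i => b ∈ A i) := by
    ext i
    simp only [mem_symmDiff, mem_filter]
    have hxor := fun hi : i ∈ s =>
      (h.isEven i hi).mem_iff_of_inc_eq_triple hv hab hac hbc hinc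
    simp only [Xor] at hxor
    tauto
  have hcard := card_symmDiff_add_two_mul_card_inter
    (s.filter fun i => a ∈ A i) (s.filter fun i => b ∈ A i)
  rw [← hsymm, h.card_filter_mem a (inc_subset_edges hv ha),
    h.card_filter_mem b (inc_subset_edges hv hb),
    h.card_filter_mem c (inc_subset_edges hv hc), ← filter_and] at hcard
  obtain ⟨i, hi⟩ := card_eq_one.1 (show (s.filter fun i => a ∈ A i ∧ b ∈ A i).card = 1 by omega)
  refine ⟨i, mem_filter.1 (hi ▸ mem_singleton_self i), fun j hj => ?_⟩
  exact mem_singleton.1 (hi ▸ mem_filter.2 hj)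

lemma IsEvenDoubleCover.not_subset_of_ne {ι : Type*} {s : Finset ι} {A : ι → Finset E}
    (h : G.IsEvenDoubleCover s A) (hG : G.IsCubic) {i j : ι} (hi : i ∈ s) (hj : j ∈ s)
    (hij : i ≠ j) {C : Finset E} (hC : G.IsCircuit C) (hCi : C ⊆ A i) : ¬ C ⊆ A j := by
  intro hCj
  obtain ⟨a, ha⟩ := hC.nonempty
  obtain ⟨v, hv, hav⟩ := mem_edges.1 (hC.isEven.subset ha)
  obtain ⟨b, hb, hbv, hab⟩ := hC.isEven.exists_ne_mem_inc hv ha hav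
  exact hij ((h.existsUnique_mem_pair hG hv hav hbv hab).unique
    ⟨hi, hCi ha, hCi hb⟩ ⟨hj, hCj ha, hCj hb⟩)

lemma IsEvenDoubleCover.isCDC_decomposition {ι : Type*} {s : Finset ι} {A : ι → Finset E}
    (h : G.IsEvenDoubleCover s A) (hG : G.IsCubic) : G.IsCDC (G.decomposition s A) := by
  refine ⟨fun C hC => ?_, fun e he => ?_⟩
  · obtain ⟨-, -, -, hC⟩ := mem_decomposition.1 hC
    exact hC
  obtain ⟨i, j, hij, hmem⟩ := exists_forall_mem_iff_of_card_filter_eq_two (h.card_filter_mem e he)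
  obtain ⟨hi, hei⟩ := (hmem i).2 (Or.inl rfl)
  obtain ⟨hj, hej⟩ := (hmem j).2 (Or.inr rfl)
  obtain ⟨C, hC, heC⟩ := (h.isEven i hi).exists_mem_circuitsIn hei
  obtain ⟨C', hC', heC'⟩ := (h.isEven j hj).exists_mem_circuitsIn hej
  have hCi := mem_circuitsIn.1 hC
  have hCj := mem_circuitsIn.1 hC'
  refine card_filter_eq_two_of_forall_mem_iff (i := C) (j := C') ?_ fun X => ?_
  · rintro rfl
    exact h.not_subset_of_ne hG hi hj hij hCi.2 hCi.1 hCj.1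
  rw [mem_decomposition]
  constructor
  · rintro ⟨⟨k, hk, hXk, hX⟩, heX⟩
    rcases (hmem k).1 ⟨hk, hXk heX⟩ with rfl | rfl
    · exact Or.inl (hG.eq_of_mem_circuitsIn (h.isEven _ hk) (mem_circuitsIn.2 ⟨hXk, hX⟩) hC heX heC)
    · exact Or.inr
        (hG.eq_of_mem_circuitsIn (h.isEven _ hk) (mem_circuitsIn.2 ⟨hXk, hX⟩) hC' heX heC')
  · rintro (rfl | rfl)
    · exact ⟨⟨i, hi, hCi⟩, heC⟩
    · exact ⟨⟨j, hj, hCj⟩, heC'⟩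

lemma IsEvenDoubleCover.isFaceSystem_decomposition {ι : Type*} {s : Finset ι}
    {A : ι → Finset E} (h : G.IsEvenDoubleCover s A) (hG : G.IsCubic)
    (hcut : ∀ D ⊆ G.edges, (∀ i ∈ s, Even (D ∩ A i).card) → ∃ S ⊆ G.verts, D = G.cut S) :
    G.IsFaceSystem (G.decomposition s A) := by
  refine ⟨h.isCDC_decomposition hG, fun D hDsub hDeven => hcut D hDsub fun i hi => ?_⟩
  refine hG.even_card_inter_of_circuitsIn (h.isEven i hi) fun C hC => hDeven C ?_
  exact mem_decomposition.2 ⟨i, hi, mem_circuitsIn.1 hC⟩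

lemma IsCubic.cut_sdiff [DecidableEq α] (hG : G.IsCubic) {S : Finset α} (hS : S ⊆ G.verts) :
    G.cut (G.verts \ S) = G.cut S := by
  refine filter_congr fun e he => ?_
  have hdisj : Disjoint ((G.verts \ S).filter fun v => e ∈ G.inc v)
      (S.filter fun v => e ∈ G.inc v) := disjoint_filter_filter disjoint_sdiff_self_left
  have hsum := card_union_of_disjoint hdisj
  rw [← filter_union, sdiff_union_of_subset hS, hG.card_ends e he] at hsum
  have heven : Even (_ + _) := hsum ▸ even_two
  rw [Nat.even_add] at heven
  rw [← Nat.not_even_iff_odd, ← Nat.not_even_iff_odd, heven]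

end Basic

section Ends

variable {α E : Type*} [DecidableEq E] {G : IncGraph α E}

/-- `e` is an edge joining the distinct vertices `u` and `w`. -/
structure Ends (G : IncGraph α E) (e : E) (u w : α) : Prop where
  left_mem : u ∈ G.verts
  right_mem : w ∈ G.verts
  ne : u ≠ w
  mem_inc_iff : ∀ v ∈ G.verts, (e ∈ G.inc v ↔ v = u ∨ v = w)

namespace Ends

variable {e : E} {u w : α}

omit [DecidableEq E] in
lemma symm (h : G.Ends e u w) : G.Ends e w u :=
  ⟨h.right_mem, h.left_mem, h.ne.symm, fun v hv => by rw [h.mem_inc_iff v hv, or_comm]⟩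

omit [DecidableEq E] in
lemma mem_inc_left (h : G.Ends e u w) : e ∈ G.inc u :=
  (h.mem_inc_iff u h.left_mem).2 (Or.inl rfl)

lemma mem_edges (h : G.Ends e u w) : e ∈ G.edges :=
  inc_subset_edges h.left_mem h.mem_inc_left

lemma mem_cut_iff (h : G.Ends e u w) {S : Finset α} (hS : S ⊆ G.verts) :
    e ∈ G.cut S ↔ ¬ (u ∈ S ↔ w ∈ S) := by
  classical
  have hends : (S.filter fun v => e ∈ G.inc v) = ({u, w} : Finset α).filter (· ∈ S) := by
    ext v
    simp only [mem_filter, mem_insert, mem_singleton]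
    exact ⟨fun hv => ⟨(h.mem_inc_iff v (hS hv.1)).1 hv.2, hv.1⟩,
      fun hv => ⟨hv.2, (h.mem_inc_iff v (hS hv.2)).2 hv.1⟩⟩
  rw [cut, mem_filter, hends, filter_insert, filter_singleton]
  by_cases hu : u ∈ S <;> by_cases hw : w ∈ S <;> simp [hu, hw, h.mem_edges, h.ne]

omit [DecidableEq E] in
lemma exists_iff (h : G.Ends e u w) {P : α → Prop} :
    (∃ u' w', G.Ends e u' w' ∧ P u') ↔ P u ∨ P w := by
  constructor
  · rintro ⟨u', w', h', hP⟩
    rcases (h.mem_inc_iff u' h'.left_mem).1 h'.mem_inc_left with rfl | rfl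
    · exact Or.inl hP
    · exact Or.inr hP
  · rintro (hP | hP)
    · exact ⟨u, w, h, hP⟩
    · exact ⟨w, u, h.symm, hP⟩

end Ends

lemma IsCubic.exists_ends (hG : G.IsCubic) {e : E} (he : e ∈ G.edges) : ∃ u w, G.Ends e u w := by
  obtain ⟨u, w, hne, hmem⟩ := exists_forall_mem_iff_of_card_filter_eq_two (hG.card_ends e he)
  refine ⟨u, w, ((hmem u).2 (Or.inl rfl)).1, ((hmem w).2 (Or.inr rfl)).1, hne, fun v hv => ?_⟩
  rw [← hmem v, and_iff_right hv]

lemma IsCubic.exists_ends_of_mem_inc (hG : G.IsCubic) {e : E} {u : α} (hu : u ∈ G.verts)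
    (he : e ∈ G.inc u) : ∃ w, G.Ends e u w := by
  obtain ⟨x, y, h⟩ := hG.exists_ends (inc_subset_edges hu he)
  rcases (h.mem_inc_iff u hu).1 he with rfl | rfl
  · exact ⟨y, h⟩
  · exact ⟨x, h.symm⟩

lemma IsCubic.exists_ends_of_mem_cut (hG : G.IsCubic) {S : Finset α} (hS : S ⊆ G.verts) {e : E}
    (he : e ∈ G.cut S) : ∃ u w, G.Ends e u w ∧ u ∈ S ∧ w ∉ S := by
  obtain ⟨u, w, h⟩ := hG.exists_ends (cut_subset_edges S he)
  have hcut := (h.mem_cut_iff hS).1 he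
  by_cases hu : u ∈ S
  · exact ⟨u, w, h, hu, by tauto⟩
  · exact ⟨w, u, h.symm, by tauto, hu⟩

lemma isCubic_of_ends (hcard : ∀ v ∈ G.verts, (G.inc v).card = 3)
    (hends : ∀ e ∈ G.edges, ∃ u w, G.Ends e u w) : G.IsCubic := by
  refine ⟨hcard, fun e he => ?_⟩
  obtain ⟨u, w, h⟩ := hends e he
  refine card_filter_eq_two_of_forall_mem_iff h.ne fun v => ⟨fun hv => ?_, ?_⟩
  · exact (h.mem_inc_iff v hv.1).1 hv.2
  · rintro (rfl | rfl)
    · exact ⟨h.left_mem, h.mem_inc_left⟩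
    · exact ⟨h.right_mem, h.symm.mem_inc_left⟩

end Ends

section Contraction

variable {α E : Type*} [DecidableEq α] [DecidableEq E] {G : IncGraph α E} {S : Finset α} {v₀ : α}

/-- The graph obtained by contracting the complement of `S` to a single vertex `v₀`. -/
def contract (G : IncGraph α E) (S : Finset α) (v₀ : α) : IncGraph α E :=
  ⟨insert v₀ S, Function.update G.inc v₀ (G.cut S)⟩

lemma card_verts_contract (h₀ : v₀ ∉ S) : (G.contract S v₀).verts.card = S.card + 1 :=
  card_insert_of_notMem h₀

lemma inc_contract_of_mem (h₀ : v₀ ∉ S) {v : α} (hv : v ∈ S) :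
    (G.contract S v₀).inc v = G.inc v :=
  Function.update_of_ne (ne_of_mem_of_not_mem hv h₀) _ _

lemma inc_contract_self : (G.contract S v₀).inc v₀ = G.cut S := Function.update_self _ _ _

lemma mem_edges_contract_iff (hG : G.IsCubic) (hS : S ⊆ G.verts) (h₀ : v₀ ∉ S) {e : E} :
    e ∈ (G.contract S v₀).edges ↔ ∃ u w, G.Ends e u w ∧ u ∈ S := by
  rw [mem_edges]
  constructor
  · rintro ⟨v, hv, he⟩
    rcases mem_insert.1 hv with rfl | hv
    · rw [inc_contract_self] at he
      obtain ⟨u, w, h, hu, -⟩ := hG.exists_ends_of_mem_cut hS he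
      exact ⟨u, w, h, hu⟩
    · rw [inc_contract_of_mem h₀ hv] at he
      obtain ⟨w, h⟩ := hG.exists_ends_of_mem_inc (hS hv) he
      exact ⟨v, w, h, hv⟩
  · rintro ⟨u, w, h, hu⟩
    exact ⟨u, mem_insert_of_mem hu, by rw [inc_contract_of_mem h₀ hu]; exact h.mem_inc_left⟩

lemma Ends.mem_edges_contract_iff {e : E} {u w : α} (h : G.Ends e u w) (hG : G.IsCubic)
    (hS : S ⊆ G.verts) (h₀ : v₀ ∉ S) : e ∈ (G.contract S v₀).edges ↔ u ∈ S ∨ w ∈ S := by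
  rw [IncGraph.mem_edges_contract_iff hG hS h₀, h.exists_iff (P := (· ∈ S))]

lemma edges_contract_subset (hG : G.IsCubic) (hS : S ⊆ G.verts) (h₀ : v₀ ∉ S) :
    (G.contract S v₀).edges ⊆ G.edges := by
  intro e he
  obtain ⟨u, w, h, -⟩ := (mem_edges_contract_iff hG hS h₀).1 he
  exact h.mem_edges

lemma Ends.contract {e : E} {u w : α} (h : G.Ends e u w) (hS : S ⊆ G.verts) (h₀ : v₀ ∉ S)
    (hu : u ∈ S) : (G.contract S v₀).Ends e u (if w ∈ S then w else v₀) := by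
  have hu₀ : u ≠ v₀ := ne_of_mem_of_not_mem hu h₀
  refine ⟨mem_insert_of_mem hu, ?_, ?_, fun v hv => ?_⟩
  · split_ifs with hw
    · exact mem_insert_of_mem hw
    · exact mem_insert_self _ _
  · split_ifs with hw
    · exact h.ne
    · exact hu₀
  · rcases mem_insert.1 hv with rfl | hv
    · rw [inc_contract_self, h.mem_cut_iff hS]
      split_ifs with hw
      · exact iff_of_false (by tauto) (not_or.2 ⟨hu₀.symm, (ne_of_mem_of_not_mem hw h₀).symm⟩)
      · exact iff_of_true (by tauto) (Or.inr rfl)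
    · rw [inc_contract_of_mem h₀ hv, h.mem_inc_iff v (hS hv)]
      split_ifs with hw
      · rfl
      · rw [or_iff_left (ne_of_mem_of_not_mem hv hw), or_iff_left (ne_of_mem_of_not_mem hv h₀)]

lemma IsCubic.contract (hG : G.IsCubic) (hS : S ⊆ G.verts) (h₀ : v₀ ∉ S)
    (h3 : (G.cut S).card = 3) : (G.contract S v₀).IsCubic := by
  refine isCubic_of_ends (fun v hv => ?_) fun e he => ?_
  · rcases mem_insert.1 hv with rfl | hv
    · rw [inc_contract_self, h3]
    · rw [inc_contract_of_mem h₀ hv, hG.card_inc v (hS hv)]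
  · obtain ⟨u, w, h, hu⟩ := (mem_edges_contract_iff hG hS h₀).1 he
    exact ⟨_, _, h.contract hS h₀ hu⟩

lemma cut_contract (hG : G.IsCubic) (hS : S ⊆ G.verts) (h₀ : v₀ ∉ S) {T : Finset α}
    (hT : T ⊆ S) : (G.contract S v₀).cut T = G.cut T := by
  ext e
  by_cases he : e ∈ (G.contract S v₀).edges
  · obtain ⟨u, w, h, hu⟩ := (mem_edges_contract_iff hG hS h₀).1 he
    rw [(h.contract hS h₀ hu).mem_cut_iff (hT.trans (subset_insert _ _)),
      h.mem_cut_iff (hT.trans hS)]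
    split_ifs with hw
    · rfl
    · rw [iff_false_right fun hw' => hw (hT hw'), iff_false_right fun h' => h₀ (hT h')]
  · refine iff_of_false (fun h => he (cut_subset_edges T h)) fun h => he ?_
    obtain ⟨u, w, h, hu, -⟩ := hG.exists_ends_of_mem_cut (hT.trans hS) h
    exact (mem_edges_contract_iff hG hS h₀).2 ⟨u, w, h, hT hu⟩

lemma IsTwoEdgeConnected.contract (hc : G.IsTwoEdgeConnected) (hG : G.IsCubic)
    (hS : S ⊆ G.verts) (h₀ : v₀ ∉ S) (h₀V : v₀ ∈ G.verts) (h3 : (G.cut S).card = 3) :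
    (G.contract S v₀).IsTwoEdgeConnected := by
  have hcut : ∀ T ⊆ (G.contract S v₀).verts, v₀ ∉ T → T.Nonempty →
      2 ≤ ((G.contract S v₀).cut T).card := by
    intro T hT hv hne
    have hTS : T ⊆ S := (subset_insert_iff_of_notMem hv).1 hT
    rw [cut_contract hG hS h₀ hTS]
    exact hc T (hTS.trans hS) hne (by rintro rfl; exact hv h₀V)
  intro T hT hne hproper
  by_cases hv : v₀ ∈ T
  · rw [← (hG.contract hS h₀ h3).cut_sdiff hT]
    exact hcut _ sdiff_subset (fun h => (mem_sdiff.1 h).2 hv)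
      (sdiff_nonempty.2 fun h => hproper (hT.antisymm h))
  · exact hcut T hT hv hne

lemma IsEven.inter_edges_contract {A : Finset E} (hA : G.IsEven A) (hS : S ⊆ G.verts)
    (h₀ : v₀ ∉ S) : (G.contract S v₀).IsEven (A ∩ (G.contract S v₀).edges) := by
  refine ⟨inter_subset_right, fun v hv => ?_⟩
  rw [inter_assoc, inter_eq_right.2 (inc_subset_edges hv)]
  rcases mem_insert.1 hv with rfl | hv
  · rw [inc_contract_self]
    exact hA.even_card_inter_cut hS
  · rw [inc_contract_of_mem h₀ hv]
    exact hA.even v (hS hv)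

-- Otherwise the two parts of the complement of `S` would have disjoint edge cuts, both of size at
-- least two, inside the three edges of the cut of `S`.
lemma IsTwoEdgeConnected.exists_ends_of_card_cut_eq_three (hc : G.IsTwoEdgeConnected)
    (hG : G.IsCubic) (hS : S ⊆ G.verts) (h3 : (G.cut S).card = 3) {T : Finset α}
    (hin : ((G.verts \ S) ∩ T).Nonempty) (hout : ((G.verts \ S) \ T).Nonempty) :
    ∃ e u w, G.Ends e u w ∧ u ∉ S ∧ w ∉ S ∧ u ∈ T ∧ w ∉ T := by
  by_contra! hno
  obtain ⟨a, ha⟩ := hin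
  obtain ⟨b, hb⟩ := hout
  have hAV : (G.verts \ S) ∩ T ⊆ G.verts := inter_subset_left.trans sdiff_subset
  have hBV : (G.verts \ S) \ T ⊆ G.verts := sdiff_subset.trans sdiff_subset
  have hA := hc _ hAV ⟨a, ha⟩ fun h =>
    (mem_sdiff.1 hb).2 (mem_inter.1 (h.symm ▸ hBV hb)).2
  have hB := hc _ hBV ⟨b, hb⟩ fun h =>
    (mem_sdiff.1 (h.symm ▸ hAV ha)).2 (mem_inter.1 ha).2
  have hends : ∀ e ∈ G.edges, (e ∈ G.cut ((G.verts \ S) ∩ T) → e ∈ G.cut S) ∧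
      (e ∈ G.cut ((G.verts \ S) \ T) → e ∈ G.cut S) ∧
      ¬ (e ∈ G.cut ((G.verts \ S) ∩ T) ∧ e ∈ G.cut ((G.verts \ S) \ T)) := by
    intro e he
    obtain ⟨u, w, h⟩ := hG.exists_ends he
    have huw := hno e u w h
    have hwu := hno e w u h.symm
    simp only [h.mem_cut_iff hAV, h.mem_cut_iff hBV, h.mem_cut_iff hS, mem_inter, mem_sdiff,
      h.left_mem, h.right_mem]
    tauto
  have hdisj : Disjoint (G.cut ((G.verts \ S) ∩ T)) (G.cut ((G.verts \ S) \ T)) :=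
    disjoint_left.2 fun e he he' => (hends e (cut_subset_edges _ he)).2.2 ⟨he, he'⟩
  have hunion : G.cut ((G.verts \ S) ∩ T) ∪ G.cut ((G.verts \ S) \ T) ⊆ G.cut S :=
    union_subset (fun e he => (hends e (cut_subset_edges _ he)).1 he)
      fun e he => (hends e (cut_subset_edges _ he)).2.1 he
  have hcard := card_le_card hunion
  rw [card_union_of_disjoint hdisj] at hcard
  omega

lemma IsTwoEdgeConnected.exists_eq_cut_contract (hc : G.IsTwoEdgeConnected) (hG : G.IsCubic)
    (hS : S ⊆ G.verts) (h₀ : v₀ ∉ S) (h3 : (G.cut S).card = 3) {T : Finset α}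
    (hT : T ⊆ G.verts) (hsub : G.cut T ⊆ (G.contract S v₀).edges) :
    ∃ T' ⊆ (G.contract S v₀).verts, G.cut T = (G.contract S v₀).cut T' := by
  have of_subset : ∀ T' ⊆ S, G.cut T = G.cut T' →
      ∃ T' ⊆ (G.contract S v₀).verts, G.cut T = (G.contract S v₀).cut T' := fun T' hT' h =>
    ⟨T', hT'.trans (subset_insert _ _), by rw [cut_contract hG hS h₀ hT', h]⟩
  rcases ((G.verts \ S) ∩ T).eq_empty_or_nonempty with hin | hin
  · refine of_subset T (fun x hx => ?_) rfl
    by_contra hxS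
    exact notMem_empty x (hin ▸ mem_inter.2 ⟨mem_sdiff.2 ⟨hT hx, hxS⟩, hx⟩)
  rcases ((G.verts \ S) \ T).eq_empty_or_nonempty with hout | hout
  · refine of_subset (G.verts \ T) (fun x hx => ?_) (hG.cut_sdiff hT).symm
    obtain ⟨hxV, hxT⟩ := mem_sdiff.1 hx
    by_contra hxS
    exact notMem_empty x (hout ▸ mem_sdiff.2 ⟨mem_sdiff.2 ⟨hxV, hxS⟩, hxT⟩)
  obtain ⟨e, u, w, h, huS, hwS, huT, hwT⟩ :=
    hc.exists_ends_of_card_cut_eq_three hG hS h3 hin hout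
  have he := hsub ((h.mem_cut_iff hT).2 (by tauto))
  rw [h.mem_edges_contract_iff hG hS h₀] at he
  exact absurd he (by tauto)

lemma IsFaceSystem.exists_contract {𝓕 : Finset (Finset E)} (h𝓕 : G.IsFaceSystem 𝓕)
    (hG : G.IsCubic) (hc : G.IsTwoEdgeConnected) (hS : S ⊆ G.verts) (h₀ : v₀ ∉ S)
    (h3 : (G.cut S).card = 3) : ∃ 𝓕', (G.contract S v₀).IsFaceSystem 𝓕' := by
  set G' := G.contract S v₀
  have hG'G : G'.edges ⊆ G.edges := edges_contract_subset hG hS h₀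
  have hcover : G'.IsEvenDoubleCover 𝓕 fun f => f ∩ G'.edges := by
    refine ⟨fun f hf => (h𝓕.isCDC.isCircuit f hf).isEven.inter_edges_contract hS h₀,
      fun e he => ?_⟩
    simp only [mem_inter, he, and_true]
    exact h𝓕.isCDC.card_filter_mem e (hG'G he)
  refine ⟨_, hcover.isFaceSystem_decomposition (hG.contract hS h₀ h3) fun D hD hDeven => ?_⟩
  obtain ⟨T, hT, rfl⟩ := h𝓕.exists_eq_cut D (hD.trans hG'G) fun f hf => by
    have heven := hDeven f hf
    rwa [inter_comm f, ← inter_assoc, inter_eq_left.2 hD] at heven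
  exact hc.exists_eq_cut_contract hG hS h₀ h3 hT hD

end Contraction

section ThreeSum

variable {α E : Type*} [DecidableEq E] {G G₁ G₂ : IncGraph α E} {δ : Finset E}

/-- `G` arises from `G₁` and `G₂` by deleting a vertex of each and joining the resulting six
half-edges to the three edges `δ` of a cut. -/
structure IsThreeSum (G G₁ G₂ : IncGraph α E) (δ : Finset E) : Prop where
  isCubic_left : G₁.IsCubic
  isCubic_right : G₂.IsCubic
  edges_inter : G₁.edges ∩ G₂.edges = δ
  edges_union : G₁.edges ∪ G₂.edges = G.edges
  isEven_left : ∀ X, G.IsEven X → G₁.IsEven (X ∩ G₁.edges)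
  isEven_right : ∀ X, G.IsEven X → G₂.IsEven (X ∩ G₂.edges)
  isEven_union : ∀ C D, G₁.IsEven C → G₂.IsEven D → C ∩ δ = D ∩ δ → G.IsEven (C ∪ D)
  exists_inc_left : ∃ v ∈ G₁.verts, G₁.inc v = δ
  exists_inc_right : ∃ v ∈ G₂.verts, G₂.inc v = δ

open scoped Classical in
/-- The circuits of `G` whose traces on `G₁` and `G₂` are empty or belong to the given covers. -/
noncomputable def glue (G G₁ G₂ : IncGraph α E) (𝒞₁ 𝒞₂ : Finset (Finset E)) :
    Finset (Finset E) :=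
  G.edges.powerset.filter fun X => G.IsCircuit X ∧
    (X ∩ G₁.edges ∈ 𝒞₁ ∨ X ∩ G₁.edges = ∅) ∧ (X ∩ G₂.edges ∈ 𝒞₂ ∨ X ∩ G₂.edges = ∅)

lemma mem_glue {𝒞₁ 𝒞₂ : Finset (Finset E)} {X : Finset E} :
    X ∈ glue G G₁ G₂ 𝒞₁ 𝒞₂ ↔ G.IsCircuit X ∧ (X ∩ G₁.edges ∈ 𝒞₁ ∨ X ∩ G₁.edges = ∅) ∧
      (X ∩ G₂.edges ∈ 𝒞₂ ∨ X ∩ G₂.edges = ∅) := by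
  simp only [glue, mem_filter, mem_powerset, and_iff_right_iff_imp]
  exact fun h => h.1.isEven.subset

lemma glue_comm (𝒞₁ 𝒞₂ : Finset (Finset E)) : glue G G₁ G₂ 𝒞₁ 𝒞₂ = glue G G₂ G₁ 𝒞₂ 𝒞₁ := by
  ext X
  rw [mem_glue, mem_glue, and_comm (a := _ ∨ _)]

lemma mem_of_mem_glue {𝒞₁ 𝒞₂ : Finset (Finset E)} {X : Finset E} (hX : X ∈ glue G G₁ G₂ 𝒞₁ 𝒞₂)
    {e : E} (heX : e ∈ X) (he : e ∈ G₁.edges) : X ∩ G₁.edges ∈ 𝒞₁ :=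
  (mem_glue.1 hX).2.1.resolve_right (nonempty_iff_ne_empty.1 ⟨e, mem_inter.2 ⟨heX, he⟩⟩)

namespace IsThreeSum

lemma symm (h : IsThreeSum G G₁ G₂ δ) : IsThreeSum G G₂ G₁ δ where
  isCubic_left := h.isCubic_right
  isCubic_right := h.isCubic_left
  edges_inter := inter_comm G₁.edges _ ▸ h.edges_inter
  edges_union := union_comm G₁.edges _ ▸ h.edges_union
  isEven_left := h.isEven_right
  isEven_right := h.isEven_left
  isEven_union C D hC hD hCD := union_comm D C ▸ h.isEven_union D C hD hC hCD.symm
  exists_inc_left := h.exists_inc_right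
  exists_inc_right := h.exists_inc_left

lemma inter_edges_left_union_inter_edges_right (h : IsThreeSum G G₁ G₂ δ) {X : Finset E}
    (hX : X ⊆ G.edges) : X ∩ G₁.edges ∪ X ∩ G₂.edges = X := by
  rw [← inter_union_distrib_left, h.edges_union, inter_eq_left.2 hX]

lemma isCircuit_of_disjoint (h : IsThreeSum G G₁ G₂ δ) {C : Finset E} (hC : G₁.IsCircuit C)
    (hdisj : C ∩ δ = ∅) : G.IsCircuit C := by
  refine ⟨?_, hC.nonempty, fun Y hY hYeven hYne => ?_⟩
  · rw [← union_empty C]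
    exact h.isEven_union C ∅ hC.isEven isEven_empty (by rw [hdisj, empty_inter])
  · have hY₁ := h.isEven_left Y hYeven
    rw [inter_eq_left.2 (hY.trans hC.isEven.subset)] at hY₁
    exact hC.eq_of_subset Y hY hY₁ hYne

lemma union_inter_edges_left (h : IsThreeSum G G₁ G₂ δ) {C D : Finset E} (hC : C ⊆ G₁.edges)
    (hD : D ⊆ G₂.edges) (hCD : C ∩ δ = D ∩ δ) : (C ∪ D) ∩ G₁.edges = C := by
  have hDC : D ∩ G₁.edges ⊆ C := calc
    D ∩ G₁.edges ⊆ D ∩ δ := by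
      rw [← h.edges_inter]
      exact fun e he => mem_inter.2 ⟨(mem_inter.1 he).1,
        mem_inter.2 ⟨(mem_inter.1 he).2, hD (mem_inter.1 he).1⟩⟩
    _ = C ∩ δ := hCD.symm
    _ ⊆ C := inter_subset_left
  rw [union_inter_distrib_right, inter_eq_left.2 hC, union_eq_left.2 hDC]

lemma isCircuit_union (h : IsThreeSum G G₁ G₂ δ) {C D : Finset E} (hC : G₁.IsCircuit C)
    (hD : G₂.IsCircuit D) (hCD : C ∩ δ = D ∩ δ) (hne : (C ∩ δ).Nonempty) :
    G.IsCircuit (C ∪ D) := by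
  refine ⟨h.isEven_union C D hC.isEven hD.isEven hCD, hC.nonempty.mono subset_union_left,
    fun Y hY hYeven hYne => ?_⟩
  have hY₁ : (Y ∩ G₁.edges).Nonempty → Y ∩ G₁.edges = C := hC.eq_of_subset _ (by
    rw [← h.union_inter_edges_left hC.isEven.subset hD.isEven.subset hCD]
    exact inter_subset_inter_right hY) (h.isEven_left Y hYeven)
  have hY₂ : (Y ∩ G₂.edges).Nonempty → Y ∩ G₂.edges = D := hD.eq_of_subset _ (by
    rw [← h.symm.union_inter_edges_left hD.isEven.subset hC.isEven.subset hCD.symm, union_comm D]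
    exact inter_subset_inter_right hY) (h.isEven_right Y hYeven)
  obtain ⟨d, hd⟩ := hne
  obtain ⟨hd₁, hd₂⟩ := mem_inter.1 (h.edges_inter ▸ (mem_inter.1 hd).2)
  have hdY : d ∈ Y := by
    rw [← h.inter_edges_left_union_inter_edges_right hYeven.subset, union_nonempty] at hYne
    rcases hYne with hYne | hYne
    · exact (mem_inter.1 ((hY₁ hYne).symm ▸ (mem_inter.1 hd).1)).1
    · exact (mem_inter.1 ((hY₂ hYne).symm ▸ (mem_inter.1 (hCD ▸ hd)).1)).1
  rw [← h.inter_edges_left_union_inter_edges_right hYeven.subset,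
    hY₁ ⟨d, mem_inter.2 ⟨hdY, hd₁⟩⟩, hY₂ ⟨d, mem_inter.2 ⟨hdY, hd₂⟩⟩]

lemma existsUnique_inter_eq_inter (h : IsThreeSum G G₁ G₂ δ) {𝒞₂ : Finset (Finset E)}
    (h₂ : G₂.IsCDC 𝒞₂) {C : Finset E} (hC : G₁.IsEven C) (hne : (C ∩ δ).Nonempty) :
    ∃! D, D ∈ 𝒞₂ ∧ C ∩ δ = D ∩ δ := by
  obtain ⟨v, hv, rfl⟩ := h.exists_inc_left
  obtain ⟨w, hw, hwv⟩ := h.exists_inc_right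
  obtain ⟨a, ha⟩ := hne
  obtain ⟨haC, hav⟩ := mem_inter.1 ha
  obtain ⟨b, hbC, hbv, hab⟩ := hC.exists_ne_mem_inc hv haC hav
  have hCv := h.isCubic_left.inter_inc_eq_pair hC hv haC hbC hav hbv hab
  rw [hCv]
  rw [← hwv] at hav hbv ⊢
  have hpair : ∀ D ∈ 𝒞₂, {a, b} = D ∩ G₂.inc w ↔ a ∈ D ∧ b ∈ D := by
    refine fun D hD => ⟨fun hDw => ?_, fun hmem => ?_⟩
    · have hsub : {a, b} ⊆ D := hDw.trans_subset inter_subset_left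
      exact ⟨hsub (mem_insert_self a _), hsub (mem_insert_of_mem (mem_singleton_self b))⟩
    · exact (h.isCubic_right.inter_inc_eq_pair (h₂.isCircuit D hD).isEven hw hmem.1 hmem.2
        hav hbv hab).symm
  obtain ⟨D, ⟨hD, hmem⟩, huniq⟩ :=
    h₂.isEvenDoubleCover.existsUnique_mem_pair h.isCubic_right hw hav hbv hab
  exact ⟨D, ⟨hD, (hpair D hD).2 hmem⟩, fun D' hD' =>
    huniq D' ⟨hD'.1, (hpair D' hD'.1).1 hD'.2⟩⟩

lemma existsUnique_mem_glue (h : IsThreeSum G G₁ G₂ δ) {𝒞₁ 𝒞₂ : Finset (Finset E)}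
    (h₁ : G₁.IsCDC 𝒞₁) (h₂ : G₂.IsCDC 𝒞₂) {C : Finset E} (hC : C ∈ 𝒞₁) :
    ∃! X, X ∈ glue G G₁ G₂ 𝒞₁ 𝒞₂ ∧ X ∩ G₁.edges = C := by
  have hcirc := h₁.isCircuit C hC
  have hC₁ := inter_eq_left.2 hcirc.isEven.subset
  rcases (C ∩ δ).eq_empty_or_nonempty with hdisj | hne
  · have hC₂ : C ∩ G₂.edges = ∅ := by
      rwa [← h.edges_inter, ← inter_assoc, hC₁] at hdisj
    have hcircG := h.isCircuit_of_disjoint hcirc hdisj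
    refine ⟨C, ⟨mem_glue.2 ⟨hcircG, Or.inl (hC₁.symm ▸ hC), Or.inr hC₂⟩, hC₁⟩, ?_⟩
    rintro Y ⟨hY, rfl⟩
    exact ((mem_glue.1 hY).1.eq_of_subset _ inter_subset_left hcircG.isEven hcirc.nonempty).symm
  · obtain ⟨D, ⟨hD, hCD⟩, huniq⟩ := h.existsUnique_inter_eq_inter h₂ hcirc.isEven hne
    have hDcirc := h₂.isCircuit D hD
    have hleft := h.union_inter_edges_left hcirc.isEven.subset hDcirc.isEven.subset hCD
    have hright := h.symm.union_inter_edges_left hDcirc.isEven.subset hcirc.isEven.subset hCD.symm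
    rw [union_comm] at hright
    refine ⟨C ∪ D, ⟨mem_glue.2 ⟨h.isCircuit_union hcirc hDcirc hCD hne,
      Or.inl (hleft.symm ▸ hC), Or.inl (hright.symm ▸ hD)⟩, hleft⟩, ?_⟩
    rintro Y ⟨hY, rfl⟩
    obtain ⟨d, hd⟩ := hne
    have hd' := mem_inter.1 (h.edges_inter ▸ (mem_inter.1 hd).2)
    have hY₂ : Y ∩ G₂.edges ∈ 𝒞₂ := mem_of_mem_glue (glue_comm 𝒞₁ 𝒞₂ ▸ hY)
      (mem_inter.1 (mem_inter.1 hd).1).1 hd'.2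
    rw [← huniq _ ⟨hY₂, by rw [← h.edges_inter]; grind⟩,
      h.inter_edges_left_union_inter_edges_right (mem_glue.1 hY).1.isEven.subset]

lemma card_filter_mem_glue (h : IsThreeSum G G₁ G₂ δ) {𝒞₁ 𝒞₂ : Finset (Finset E)}
    (h₁ : G₁.IsCDC 𝒞₁) (h₂ : G₂.IsCDC 𝒞₂) {e : E} (he : e ∈ G₁.edges) :
    ((glue G G₁ G₂ 𝒞₁ 𝒞₂).filter fun X => e ∈ X).card = 2 := by
  rw [← h₁.card_filter_mem e he]
  refine card_bij (fun X _ => X ∩ G₁.edges) (fun X hX => ?_) (fun X hX Y hY hXY => ?_)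
    fun C hC => ?_
  · obtain ⟨hX, heX⟩ := mem_filter.1 hX
    exact mem_filter.2 ⟨mem_of_mem_glue hX heX he, mem_inter.2 ⟨heX, he⟩⟩
  · obtain ⟨hX, heX⟩ := mem_filter.1 hX
    exact (h.existsUnique_mem_glue h₁ h₂ (mem_of_mem_glue hX heX he)).unique ⟨hX, rfl⟩
      ⟨(mem_filter.1 hY).1, hXY.symm⟩
  · obtain ⟨hC, heC⟩ := mem_filter.1 hC
    obtain ⟨X, ⟨hX, rfl⟩, -⟩ := h.existsUnique_mem_glue h₁ h₂ hC
    exact ⟨X, mem_filter.2 ⟨hX, (mem_inter.1 heC).1⟩, rfl⟩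

lemma isCDC_glue (h : IsThreeSum G G₁ G₂ δ) {𝒞₁ 𝒞₂ : Finset (Finset E)} (h₁ : G₁.IsCDC 𝒞₁)
    (h₂ : G₂.IsCDC 𝒞₂) : G.IsCDC (glue G G₁ G₂ 𝒞₁ 𝒞₂) := by
  refine ⟨fun C hC => (mem_glue.1 hC).1, fun e he => ?_⟩
  rcases mem_union.1 (h.edges_union.symm ▸ he) with he | he
  · exact h.card_filter_mem_glue h₁ h₂ he
  · rw [glue_comm]
    exact h.symm.card_filter_mem_glue h₂ h₁ he

lemma subset_of_glue_eq (h : IsThreeSum G G₁ G₂ δ) {𝒞₁ 𝒞₂ 𝒞₁' 𝒞₂' : Finset (Finset E)}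
    (h₁ : G₁.IsCDC 𝒞₁) (h₂ : G₂.IsCDC 𝒞₂)
    (heq : glue G G₁ G₂ 𝒞₁ 𝒞₂ = glue G G₁ G₂ 𝒞₁' 𝒞₂') : 𝒞₁ ⊆ 𝒞₁' := by
  intro C hC
  obtain ⟨X, ⟨hX, rfl⟩, -⟩ := h.existsUnique_mem_glue h₁ h₂ hC
  exact (mem_glue.1 (heq ▸ hX)).2.1.resolve_right (h₁.isCircuit _ hC).nonempty.ne_empty

lemma nu_mul_nu_le (h : IsThreeSum G G₁ G₂ δ) : G₁.nu * G₂.nu ≤ G.nu := by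
  unfold nu
  rw [← card_product]
  refine card_le_card_of_injOn (fun p => glue G G₁ G₂ p.1 p.2) ?_ ?_
  · rintro ⟨𝒞₁, 𝒞₂⟩ hp
    simp only [coe_product, Set.mem_prod, mem_coe, mem_cdcs] at hp ⊢
    exact h.isCDC_glue hp.1 hp.2
  · rintro ⟨𝒞₁, 𝒞₂⟩ hp ⟨𝒞₁', 𝒞₂'⟩ hp' heq
    simp only [coe_product, Set.mem_prod, mem_coe, mem_cdcs] at hp hp' heq
    have heq' := heq
    rw [glue_comm, glue_comm 𝒞₁'] at heq'
    exact Prod.ext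
      ((h.subset_of_glue_eq hp.1 hp.2 heq).antisymm (h.subset_of_glue_eq hp'.1 hp'.2 heq.symm))
      ((h.symm.subset_of_glue_eq hp.2 hp.1 heq').antisymm
        (h.symm.subset_of_glue_eq hp'.2 hp'.1 heq'.symm))

end IsThreeSum

end ThreeSum

section CutThreeSum

variable {α E : Type*} [DecidableEq α] [DecidableEq E] {G : IncGraph α E} {S : Finset α}
  {u₀ v₀ : α}

lemma edges_contract_inter_edges_contract (hG : G.IsCubic) (hS : S ⊆ G.verts) (hu₀ : u₀ ∈ S)
    (hv₀ : v₀ ∉ S) :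
    (G.contract S v₀).edges ∩ (G.contract (G.verts \ S) u₀).edges = G.cut S := by
  have hu₀' : u₀ ∉ G.verts \ S := fun h => (mem_sdiff.1 h).2 hu₀
  ext e
  by_cases he : e ∈ G.edges
  · obtain ⟨u, w, h⟩ := hG.exists_ends he
    rw [mem_inter, h.mem_edges_contract_iff hG hS hv₀,
      h.mem_edges_contract_iff hG sdiff_subset hu₀', h.mem_cut_iff hS, mem_sdiff, mem_sdiff,
      and_iff_right h.left_mem, and_iff_right h.right_mem]
    tauto
  · exact iff_of_false (fun h => he (edges_contract_subset hG hS hv₀ (mem_inter.1 h).1))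
      fun h => he (cut_subset_edges S h)

lemma edges_contract_union_edges_contract (hG : G.IsCubic) (hS : S ⊆ G.verts) (hu₀ : u₀ ∈ S)
    (hv₀ : v₀ ∉ S) :
    (G.contract S v₀).edges ∪ (G.contract (G.verts \ S) u₀).edges = G.edges := by
  have hu₀' : u₀ ∉ G.verts \ S := fun h => (mem_sdiff.1 h).2 hu₀
  refine (union_subset (edges_contract_subset hG hS hv₀)
    (edges_contract_subset hG sdiff_subset hu₀')).antisymm fun e he => ?_
  obtain ⟨u, w, h⟩ := hG.exists_ends he
  rw [mem_union, h.mem_edges_contract_iff hG hS hv₀,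
    h.mem_edges_contract_iff hG sdiff_subset hu₀', mem_sdiff, mem_sdiff,
    and_iff_right h.left_mem, and_iff_right h.right_mem]
  tauto

lemma IsEven.even_card_union_inter_inc {C D F : Finset E} (hC : (G.contract S v₀).IsEven C)
    (hv₀ : v₀ ∉ S) (hD : D ⊆ F) (hF : (G.contract S v₀).edges ∩ F = G.cut S)
    (hCD : C ∩ G.cut S = D ∩ G.cut S) {v : α} (hv : v ∈ S) :
    Even ((C ∪ D) ∩ G.inc v).card := by
  have hinc := inc_contract_of_mem (G := G) hv₀ hv
  have heven := hC.even v (mem_insert_of_mem hv)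
  have hsub : G.inc v ⊆ (G.contract S v₀).edges :=
    hinc ▸ inc_subset_edges (mem_insert_of_mem hv)
  have hDC : D ∩ G.inc v ⊆ C ∩ G.inc v := by
    intro e he
    obtain ⟨heD, hev⟩ := mem_inter.1 he
    have hecut : e ∈ G.cut S := hF ▸ mem_inter.2 ⟨hsub hev, hD heD⟩
    have heC : e ∈ C ∩ G.cut S := hCD ▸ mem_inter.2 ⟨heD, hecut⟩
    exact mem_inter.2 ⟨(mem_inter.1 heC).1, hev⟩
  rwa [union_inter_distrib_right, union_eq_left.2 hDC, ← hinc]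

lemma IsCubic.isThreeSum_contract (hG : G.IsCubic) (hS : S ⊆ G.verts) (hu₀ : u₀ ∈ S)
    (hv₀ : v₀ ∉ S) (h3 : (G.cut S).card = 3) :
    IsThreeSum G (G.contract S v₀) (G.contract (G.verts \ S) u₀) (G.cut S) := by
  have hS' : G.verts \ S ⊆ G.verts := sdiff_subset
  have hu₀' : u₀ ∉ G.verts \ S := fun h => (mem_sdiff.1 h).2 hu₀
  have hcut := hG.cut_sdiff hS
  have hinter := edges_contract_inter_edges_contract hG hS hu₀ hv₀
  refine ⟨hG.contract hS hv₀ h3, hG.contract hS' hu₀' (hcut ▸ h3), hinter,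
    edges_contract_union_edges_contract hG hS hu₀ hv₀,
    fun X hX => hX.inter_edges_contract hS hv₀, fun X hX => hX.inter_edges_contract hS' hu₀',
    fun C D hC hD hCD => ⟨?_, fun v hv => ?_⟩, ⟨v₀, mem_insert_self _ _, inc_contract_self⟩,
    ⟨u₀, mem_insert_self _ _, by rw [inc_contract_self, hcut]⟩⟩
  · exact union_subset (hC.subset.trans (edges_contract_subset hG hS hv₀))
      (hD.subset.trans (edges_contract_subset hG hS' hu₀'))
  · by_cases hvS : v ∈ S
    · exact hC.even_card_union_inter_inc hv₀ hD.subset hinter hCD hvS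
    · rw [union_comm]
      exact hD.even_card_union_inter_inc hu₀' hC.subset (by rw [inter_comm, hinter, hcut])
        (by rw [hcut, hCD]) (mem_sdiff.2 ⟨hv, hvS⟩)

end CutThreeSum

section SmallCuts

variable {α E : Type*} [DecidableEq E] {G : IncGraph α E} {S : Finset α} {e : E} {v x y : α}

@[simp]
lemma cut_empty : G.cut ∅ = ∅ := by
  simp [cut]

lemma cut_singleton (hv : v ∈ G.verts) : G.cut {v} = G.inc v := by
  ext e
  rw [cut, mem_filter, filter_singleton]
  by_cases he : e ∈ G.inc v
  · simp [he, inc_subset_edges hv he]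
  · simp [he]

lemma IsCubic.cut_verts (hG : G.IsCubic) : G.cut G.verts = ∅ := by
  classical
  rw [← hG.cut_sdiff Subset.rfl, sdiff_self, bot_eq_empty, cut_empty]

lemma exists_cut_eq_inc_of_card_le_one (hS : S ⊆ G.verts) (h3 : (G.cut S).card = 3)
    (h1 : S.card ≤ 1) : ∃ v ∈ G.verts, G.cut S = G.inc v := by
  rcases S.eq_empty_or_nonempty with rfl | hne
  · simp at h3
  · obtain ⟨v, rfl⟩ := card_eq_one.1 (le_antisymm h1 hne.card_pos)
    have hv : v ∈ G.verts := hS (mem_singleton_self v)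
    exact ⟨v, hv, cut_singleton hv⟩

variable [DecidableEq α]

lemma Ends.cut_insert_subset (hG : G.IsCubic) (hS : S ⊆ G.verts) (hxy : G.Ends e x y)
    (hx : x ∈ S) : G.cut (insert y S) ⊆ (G.cut S).erase e ∪ (G.inc y).erase e := by
  have hT : insert y S ⊆ G.verts := insert_subset hxy.right_mem hS
  intro d hd
  obtain ⟨u, w, huw, hu, hw⟩ := hG.exists_ends_of_mem_cut hT hd
  have hde : d ≠ e := by
    rintro rfl
    simp [hxy.mem_cut_iff hT, hx] at hd
  rw [mem_union, mem_erase, mem_erase]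
  rcases mem_insert.1 hu with rfl | hu
  · exact Or.inr ⟨hde, huw.mem_inc_left⟩
  · have hwS : w ∉ S := fun h => hw (mem_insert_of_mem h)
    exact Or.inl ⟨hde, (huw.mem_cut_iff hS).2 fun h => hwS (h.1 hu)⟩

/-- A `3`-edge-cut with at least two vertices on either side. -/
structure IsNontrivialThreeCut (G : IncGraph α E) (S : Finset α) : Prop where
  subset : S ⊆ G.verts
  card_cut : (G.cut S).card = 3
  two_le_card : 2 ≤ S.card
  two_le_card_sdiff : 2 ≤ (G.verts \ S).card

/-- Cubic graphs in which every edge cut of size at most three consists of the edges at a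
vertex. In the planar case the dual graph is then a simple triangulation without separating
triangles. -/
structure IsEssentiallyFourEdgeConnected (G : IncGraph α E) : Prop where
  isCubic : G.IsCubic
  isTwoEdgeConnected : G.IsTwoEdgeConnected
  card_cut_ne_two : ∀ S ⊆ G.verts, (G.cut S).card ≠ 2
  exists_cut_eq_inc : ∀ S ⊆ G.verts, (G.cut S).card = 3 → ∃ v ∈ G.verts, G.cut S = G.inc v

lemma IsNontrivialThreeCut.sdiff (hG : G.IsCubic) (h : G.IsNontrivialThreeCut S) :
    G.IsNontrivialThreeCut (G.verts \ S) where
  subset := sdiff_subset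
  card_cut := by rw [hG.cut_sdiff h.subset, h.card_cut]
  two_le_card := h.two_le_card_sdiff
  two_le_card_sdiff := by rw [Finset.sdiff_sdiff_eq_self h.subset]; exact h.two_le_card

lemma IsNontrivialThreeCut.three_le_card (hG : G.IsCubic) (h : G.IsNontrivialThreeCut S) :
    3 ≤ S.card := by
  have hodd : ¬ Even S.card := by
    rw [← hG.even_card_cut_iff h.subset, h.card_cut]
    decide
  have hne : S.card ≠ 2 := fun h2 => hodd (h2 ▸ even_two)
  have := h.two_le_card
  omega

lemma IsCubic.exists_cut_eq_inc (hG : G.IsCubic) (hno : ∀ S, ¬ G.IsNontrivialThreeCut S)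
    (hS : S ⊆ G.verts) (h3 : (G.cut S).card = 3) : ∃ v ∈ G.verts, G.cut S = G.inc v := by
  by_cases h1 : S.card ≤ 1
  · exact exists_cut_eq_inc_of_card_le_one hS h3 h1
  · have h1' : (G.verts \ S).card ≤ 1 := by
      by_contra h1'
      exact hno S ⟨hS, h3, by omega, by omega⟩
    rw [← hG.cut_sdiff hS] at h3 ⊢
    exact exists_cut_eq_inc_of_card_le_one sdiff_subset h3 h1'

lemma IsTwoEdgeConnected.exists_isNontrivialThreeCut (hc : G.IsTwoEdgeConnected)
    (hG : G.IsCubic) (hS : S ⊆ G.verts) (h2 : (G.cut S).card = 2)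
    (h3 : 3 ≤ (G.verts \ S).card) : ∃ T, G.IsNontrivialThreeCut T := by
  obtain ⟨e, he⟩ : (G.cut S).Nonempty := card_pos.1 (by omega)
  obtain ⟨x, y, hxy, hx, hy⟩ := hG.exists_ends_of_mem_cut hS he
  have hT : insert y S ⊆ G.verts := insert_subset hxy.right_mem hS
  have hcardT : (insert y S).card = S.card + 1 := card_insert_of_notMem hy
  have hScard : 1 ≤ S.card := card_pos.2 ⟨x, hx⟩
  have hsdiffT := card_sdiff_add_card_eq_card hT
  have hsdiffS := card_sdiff_add_card_eq_card hS
  have hge : 2 ≤ (G.cut (insert y S)).card := by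
    refine hc _ hT ⟨y, mem_insert_self y S⟩ fun h => ?_
    have := congrArg card h
    omega
  have hle : (G.cut (insert y S)).card ≤ 3 := by
    have := (card_le_card (hxy.cut_insert_subset hG hS hx)).trans (card_union_le _ _)
    rw [card_erase_of_mem he, card_erase_of_mem hxy.symm.mem_inc_left,
      hG.card_inc y hxy.right_mem] at this
    omega
  have hne : (G.cut (insert y S)).card ≠ 2 := by
    intro h
    have hevenS := hG.even_card_cut_iff hS
    have hevenT := hG.even_card_cut_iff hT
    rw [h2] at hevenS
    rw [h, hcardT, Nat.even_add_one (n := S.card)] at hevenT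
    tauto
  exact ⟨insert y S, hT, by omega, by omega, by omega⟩

lemma IsTwoEdgeConnected.card_cut_ne_two (hc : G.IsTwoEdgeConnected) (hG : G.IsCubic)
    (hno : ∀ T, ¬ G.IsNontrivialThreeCut T) (hn : 5 ≤ G.verts.card) (hS : S ⊆ G.verts) :
    (G.cut S).card ≠ 2 := by
  intro h2
  have hcard := card_sdiff_add_card_eq_card hS
  have hexists : ∃ T, G.IsNontrivialThreeCut T := by
    by_cases h3 : 3 ≤ (G.verts \ S).card
    · exact hc.exists_isNontrivialThreeCut hG hS h2 h3
    · refine hc.exists_isNontrivialThreeCut hG (S := G.verts \ S) sdiff_subset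
        (by rw [hG.cut_sdiff hS, h2]) ?_
      rw [Finset.sdiff_sdiff_eq_self hS]
      omega
  exact hexists.elim hno

end SmallCuts

section TwoCuts

variable {α E : Type*} [DecidableEq E] {G : IncGraph α E} {𝓕 : Finset (Finset E)}
  {S : Finset α} {X f g : Finset E} {e : E} {v : α}

lemma IsCDC.isEvenDoubleCover_symmDiff (h𝓕 : G.IsCDC 𝓕) (hf : f ∈ 𝓕) (hg : g ∈ 𝓕)
    (hX : G.IsEven X) (hXfg : X ⊆ symmDiff f g) :
    G.IsEvenDoubleCover 𝓕 fun h => if h = f ∨ h = g then symmDiff h X else h := by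
  refine ⟨fun h hh => ?_, fun x hx => ?_⟩
  · have heven := (h𝓕.isCircuit h hh).isEven
    split_ifs
    exacts [heven.symmDiff hX, heven]
  · rw [← h𝓕.card_filter_mem x hx]
    by_cases hxX : x ∈ X
    · have hxor := mem_symmDiff.1 (hXfg hxX)
      have hswap : ∀ h ∈ 𝓕, Equiv.swap f g h ∈ 𝓕 := by
        intro h hh
        rw [Equiv.swap_apply_def]
        split_ifs <;> assumption
      have hmem : ∀ h, (x ∈ if h = f ∨ h = g then symmDiff h X else h) ↔
          x ∈ Equiv.swap f g h := by
        intro h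
        rw [Equiv.swap_apply_def]
        split_ifs <;> grind [mem_symmDiff]
      refine card_nbij' (Equiv.swap f g) (Equiv.swap f g) ?_ ?_ ?_ ?_
      · intro h hh
        simp only [coe_filter, Set.mem_ofPred_eq, hmem] at hh ⊢
        exact ⟨hswap h hh.1, hh.2⟩
      · intro h hh
        simp only [coe_filter, Set.mem_ofPred_eq, hmem, Equiv.swap_apply_self] at hh ⊢
        exact ⟨hswap h hh.1, hh.2⟩
      · exact fun h _ => Equiv.swap_apply_self f g h
      · exact fun h _ => Equiv.swap_apply_self f g h
    · congr 1
      refine filter_congr fun h _ => ?_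
      split_ifs <;> simp [mem_symmDiff, hxX]

lemma IsCDC.exists_mem_inc_notMem (h𝓕 : G.IsCDC 𝓕) (hG : G.IsCubic) (hf : f ∈ 𝓕)
    (hg : g ∈ 𝓕) (hfg : f ≠ g) (hv : v ∈ G.verts) (hev : e ∈ G.inc v) (hef : e ∈ f)
    (heg : e ∈ g) : ∃ a ∈ f, a ∈ G.inc v ∧ a ∉ g := by
  obtain ⟨a, haf, hav, hea⟩ :=
    (h𝓕.isCircuit f hf).isEven.exists_ne_mem_inc hv hef hev
  refine ⟨a, haf, hav, fun hag => hfg ?_⟩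
  exact (h𝓕.isEvenDoubleCover.existsUnique_mem_pair hG hv hev hav hea).unique
    ⟨hf, hef, haf⟩ ⟨hg, heg, hag⟩

lemma IsEven.cut_subset_of_mem (hf : G.IsEven f) (hS : S ⊆ G.verts)
    (h2 : (G.cut S).card = 2) (he : e ∈ G.cut S) (hef : e ∈ f) : G.cut S ⊆ f := by
  have heven := hf.even_card_inter_cut hS
  have hpos : 0 < (f ∩ G.cut S).card := card_pos.2 ⟨e, mem_inter.2 ⟨hef, he⟩⟩
  have hle : (f ∩ G.cut S).card ≤ (G.cut S).card := card_le_card inter_subset_right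
  have hcard : (f ∩ G.cut S).card = (G.cut S).card := by
    obtain ⟨k, hk⟩ := heven
    omega
  exact inter_eq_right.1 (eq_of_subset_of_card_le inter_subset_right hcard.ge)

lemma IsCubic.inc_subset_compl_biUnion_inc (hG : G.IsCubic) (hS : S ⊆ G.verts)
    (hv : v ∈ G.verts) (hvS : v ∉ S) (he : e ∈ G.inc v) (hecut : e ∉ G.cut S) :
    e ∉ S.biUnion G.inc := by
  intro heS
  obtain ⟨u, hu, heu⟩ := mem_biUnion.1 heS
  obtain ⟨w, hvw⟩ := hG.exists_ends_of_mem_inc hv he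
  rw [hvw.mem_cut_iff hS] at hecut
  rcases (hvw.mem_inc_iff u (hS hu)).1 heu with rfl | rfl <;> tauto

lemma IsEven.inter_biUnion_inc (hX : G.IsEven X) (hG : G.IsCubic) (hS : S ⊆ G.verts)
    (hdisj : Disjoint X (G.cut S)) : G.IsEven (X ∩ S.biUnion G.inc) := by
  refine ⟨inter_subset_left.trans hX.subset, fun v hv => ?_⟩
  by_cases hvS : v ∈ S
  · rw [inter_assoc, inter_eq_right.2 (subset_biUnion_of_mem G.inc hvS)]
    exact hX.even v hv
  · have hempty : X ∩ S.biUnion G.inc ∩ G.inc v = ∅ := by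
      refine eq_empty_of_forall_notMem fun a ha => ?_
      obtain ⟨⟨haX, haS⟩, hav⟩ : (a ∈ X ∧ a ∈ S.biUnion G.inc) ∧ a ∈ G.inc v := by
        simpa only [mem_inter] using ha
      exact hG.inc_subset_compl_biUnion_inc hS hv hvS hav (disjoint_left.1 hdisj haX) haS
    rw [hempty]
    exact Even.zero

-- The two circuits through a `2`-edge-cut can exchange their parts on one side of it.
lemma IsCDC.two_le_nu_of_card_cut_eq_two (h𝓕 : G.IsCDC 𝓕) (hG : G.IsCubic)
    (hS : S ⊆ G.verts) (h2 : (G.cut S).card = 2) : 2 ≤ G.nu := by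
  obtain ⟨e, he⟩ : (G.cut S).Nonempty := card_pos.1 (by omega)
  obtain ⟨u, w, huw, hu, hw⟩ := hG.exists_ends_of_mem_cut hS he
  obtain ⟨f, g, hfg, hmem⟩ := exists_forall_mem_iff_of_card_filter_eq_two
    (h𝓕.card_filter_mem e huw.mem_edges)
  obtain ⟨hf, hef⟩ := (hmem f).2 (Or.inl rfl)
  obtain ⟨hg, heg⟩ := (hmem g).2 (Or.inr rfl)
  have hfeven := (h𝓕.isCircuit f hf).isEven
  have hgeven := (h𝓕.isCircuit g hg).isEven
  have hcutf := hfeven.cut_subset_of_mem hS h2 he hef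
  have hcutg := hgeven.cut_subset_of_mem hS h2 he heg
  have hdisj : Disjoint (symmDiff f g) (G.cut S) := by
    refine disjoint_left.2 fun a ha hacut => ?_
    have := hcutf hacut
    have := hcutg hacut
    grind [mem_symmDiff]
  set X := symmDiff f g ∩ S.biUnion G.inc with hXdef
  have hcover := h𝓕.isEvenDoubleCover_symmDiff hf hg
    ((hfeven.symmDiff hgeven).inter_biUnion_inc hG hS hdisj) inter_subset_left
  have hcdc := hcover.isCDC_decomposition hG
  have hne : f ∉ G.decomposition 𝓕 fun h => if h = f ∨ h = g then symmDiff h X else h := by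
    intro hmem'
    obtain ⟨h, hh, hsub, -⟩ := mem_decomposition.1 hmem'
    have heX : e ∉ X := fun heX => disjoint_left.1 hdisj (mem_inter.1 heX).1 he
    have heh : e ∈ h := by grind [mem_symmDiff, hsub hef]
    rcases (hmem h).1 ⟨hh, heh⟩ with rfl | rfl
    · obtain ⟨a, haf, hau, hag⟩ := h𝓕.exists_mem_inc_notMem hG hf hg hfg huw.left_mem
        huw.mem_inc_left hef heg
      have haS : a ∈ S.biUnion G.inc := mem_biUnion.2 ⟨u, hu, hau⟩
      grind [mem_symmDiff, hsub haf]
    · obtain ⟨a, haf, haw, hag⟩ := h𝓕.exists_mem_inc_notMem hG hf hg hfg huw.right_mem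
        huw.symm.mem_inc_left hef heg
      have haS : a ∉ S.biUnion G.inc :=
        hG.inc_subset_compl_biUnion_inc hS huw.right_mem hw haw fun ha => hag (hcutg ha)
      grind [mem_symmDiff, hsub haf]
  exact one_lt_card.2 ⟨_, mem_cdcs.2 h𝓕, _, mem_cdcs.2 hcdc, fun heq => hne (heq ▸ hf)⟩

end TwoCuts

lemma two_rpow_sqrt_div_le_mul {m a b : ℕ} (hm : m ≤ a + b) :
    (2 : ℝ) ^ (√m / 100) ≤ 2 ^ (√a / 100) * 2 ^ (√b / 100) := by
  rw [← Real.rpow_add two_pos, ← add_div]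
  refine Real.rpow_le_rpow_of_exponent_le one_le_two (div_le_div_of_nonneg_right ?_ (by simp))
  have hm' : (m : ℝ) ≤ a + b := mod_cast hm
  have hab : (0 : ℝ) ≤ √a * √b := by positivity
  refine Real.sqrt_le_iff.2 ⟨by positivity, ?_⟩
  nlinarith [Real.sq_sqrt (Nat.cast_nonneg (α := ℝ) a),
    Real.sq_sqrt (Nat.cast_nonneg (α := ℝ) b)]

lemma two_rpow_sqrt_div_le_two {m : ℕ} (hm : m ≤ 100 ^ 2) : (2 : ℝ) ^ (√m / 100) ≤ 2 := by
  have hsqrt : √(m : ℝ) / 100 ≤ 1 := by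
    rw [div_le_one (by norm_num), Real.sqrt_le_left (by norm_num)]
    exact_mod_cast hm
  exact (Real.rpow_le_rpow_of_exponent_le one_le_two hsqrt).trans_eq (Real.rpow_one 2)

section FaceGraph

variable {α E : Type*} [DecidableEq E] {G : IncGraph α E} {𝓕 : Finset (Finset E)}
  {e : E} {f g : Finset E}

/-- `f` and `g` are the two members of `𝓕` containing `e`. -/
structure IsFacePair (𝓕 : Finset (Finset E)) (e : E) (f g : Finset E) : Prop where
  left_mem : f ∈ 𝓕
  right_mem : g ∈ 𝓕
  ne : f ≠ g
  mem_iff : ∀ h ∈ 𝓕, (e ∈ h ↔ h = f ∨ h = g)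

omit [DecidableEq E] in
lemma IsFacePair.symm (h : IsFacePair 𝓕 e f g) : IsFacePair 𝓕 e g f :=
  ⟨h.right_mem, h.left_mem, h.ne.symm, fun k hk => by rw [h.mem_iff k hk, or_comm]⟩

omit [DecidableEq E] in
lemma IsFacePair.mem_left (h : IsFacePair 𝓕 e f g) : e ∈ f :=
  (h.mem_iff f h.left_mem).2 (Or.inl rfl)

lemma IsCDC.exists_isFacePair (h𝓕 : G.IsCDC 𝓕) (he : e ∈ G.edges) :
    ∃ f g, IsFacePair 𝓕 e f g := by
  obtain ⟨f, g, hfg, hmem⟩ :=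
    exists_forall_mem_iff_of_card_filter_eq_two (h𝓕.card_filter_mem e he)
  exact ⟨f, g, ((hmem f).2 (Or.inl rfl)).1, ((hmem g).2 (Or.inr rfl)).1, hfg,
    fun h hh => by rw [← hmem h, and_iff_right hh]⟩

lemma IsCDC.exists_isFacePair_of_mem (h𝓕 : G.IsCDC 𝓕) (hf : f ∈ 𝓕) (hef : e ∈ f) :
    ∃ g, IsFacePair 𝓕 e f g := by
  obtain ⟨f', g, h⟩ := h𝓕.exists_isFacePair ((h𝓕.isCircuit f hf).isEven.subset hef)
  rcases (h.mem_iff f hf).1 hef with rfl | rfl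
  exacts [⟨g, h⟩, ⟨f', h.symm⟩]

lemma IsCDC.isFacePair (h𝓕 : G.IsCDC 𝓕) (hf : f ∈ 𝓕) (hg : g ∈ 𝓕) (hfg : f ≠ g)
    (hef : e ∈ f) (heg : e ∈ g) : IsFacePair 𝓕 e f g := by
  obtain ⟨g', h⟩ := h𝓕.exists_isFacePair_of_mem hf hef
  obtain rfl := ((h.mem_iff g hg).1 heg).resolve_left hfg.symm
  exact h

/-- The adjacency graph of faces, i.e. the simple graph underlying the planar dual. -/
def faceGraph : SimpleGraph (Finset E) where
  Adj f g := f ≠ g ∧ (f ∩ g).Nonempty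
  symm := ⟨fun f g h => ⟨h.1.symm, inter_comm f g ▸ h.2⟩⟩
  loopless := ⟨fun _ h => h.1 rfl⟩

instance : DecidableRel (faceGraph (E := E)).Adj := fun _ _ => instDecidableAnd

/-- The faces in `𝓕` adjacent to `f`. -/
def adjFaces (𝓕 : Finset (Finset E)) (f : Finset E) : Finset (Finset E) :=
  𝓕.filter (faceGraph.Adj f)

lemma mem_adjFaces : g ∈ adjFaces 𝓕 f ↔ g ∈ 𝓕 ∧ faceGraph.Adj f g := mem_filter

lemma faceGraph_adj_of_mem (hfg : f ≠ g) (hf : e ∈ f) (hg : e ∈ g) : faceGraph.Adj f g :=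
  ⟨hfg, e, mem_inter.2 ⟨hf, hg⟩⟩

lemma exists_mem_of_faceGraph_adj (h : faceGraph.Adj f g) : ∃ e, e ∈ f ∧ e ∈ g := by
  obtain ⟨e, he⟩ := h.2
  exact ⟨e, mem_inter.1 he⟩

lemma IsCDC.exists_isFacePair_of_adj (h𝓕 : G.IsCDC 𝓕) (hf : f ∈ 𝓕) (hg : g ∈ 𝓕)
    (hfg : faceGraph.Adj f g) : ∃ e, IsFacePair 𝓕 e f g := by
  obtain ⟨e, hef, heg⟩ := exists_mem_of_faceGraph_adj hfg
  exact ⟨e, h𝓕.isFacePair hf hg hfg.ne hef heg⟩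

lemma IsFacePair.adj (h : IsFacePair 𝓕 e f g) : faceGraph.Adj f g :=
  faceGraph_adj_of_mem h.ne h.mem_left h.symm.mem_left

lemma IsFacePair.mem_adjFaces (h : IsFacePair 𝓕 e f g) : g ∈ adjFaces 𝓕 f :=
  IncGraph.mem_adjFaces.2 ⟨h.right_mem, h.adj⟩

lemma IsCDC.adjFaces_nonempty (h𝓕 : G.IsCDC 𝓕) (hf : f ∈ 𝓕) : (adjFaces 𝓕 f).Nonempty := by
  obtain ⟨e, he⟩ := (h𝓕.isCircuit f hf).nonempty
  obtain ⟨g, h⟩ := h𝓕.exists_isFacePair_of_mem hf he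
  exact ⟨g, h.mem_adjFaces⟩

lemma IsCDC.card_adjFaces_le (h𝓕 : G.IsCDC 𝓕) (hf : f ∈ 𝓕) :
    (adjFaces 𝓕 f).card ≤ f.card := by
  have hedge : ∀ g : adjFaces 𝓕 f, ∃ e, e ∈ f ∧ e ∈ g.1 := fun g =>
    exists_mem_of_faceGraph_adj (mem_adjFaces.1 g.2).2
  choose φ hφf hφ using hedge
  rw [← card_attach]
  refine card_le_card_of_injOn φ (fun g _ => hφf g) fun g _ g' _ heq => ?_
  obtain ⟨hg, hfg⟩ := mem_adjFaces.1 g.2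
  obtain ⟨hg', hfg'⟩ := mem_adjFaces.1 g'.2
  have hpair := h𝓕.isFacePair hf hg hfg.ne (hφf g) (hφ g)
  have hmem := (hpair.mem_iff g'.1 hg').1 (heq ▸ hφ g')
  exact Subtype.ext (hmem.resolve_left hfg'.ne.symm).symm

end FaceGraph

section EssentiallyFourEdgeConnected

variable {α E : Type*} [DecidableEq E] {G : IncGraph α E}
  {𝓕 : Finset (Finset E)} {f g h x y : Finset E} {a b c e : E} {u v w : α}

lemma IsFaceSystem.eq_of_mem (hF : G.IsFaceSystem 𝓕) (hG : G.IsEssentiallyFourEdgeConnected)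
    (hfg : f ≠ g) (hf : f ∈ 𝓕) (hg : g ∈ 𝓕) (haf : a ∈ f) (hag : a ∈ g) (hbf : b ∈ f)
    (hbg : b ∈ g) : a = b := by
  by_contra hab
  have hpair_a := hF.isCDC.isFacePair hf hg hfg haf hag
  have hpair_b := hF.isCDC.isFacePair hf hg hfg hbf hbg
  have hsub : {a, b} ⊆ G.edges :=
    (insert_subset haf (singleton_subset_iff.2 hbf)).trans
      (hF.isCDC.isCircuit f hf).isEven.subset
  obtain ⟨S, hS, hcut⟩ := hF.exists_eq_cut {a, b} hsub fun k hk => by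
    have hiff : a ∈ k ↔ b ∈ k := by rw [hpair_a.mem_iff k hk, hpair_b.mem_iff k hk]
    rw [← filter_mem_eq_inter, filter_insert, filter_singleton]
    by_cases hak : a ∈ k <;> simp [hak, ← hiff, card_pair hab]
  exact hG.card_cut_ne_two S hS (hcut ▸ card_pair hab)

lemma even_card_triple_inter (hab : a ≠ b) (hac : a ≠ c) (hbc : b ≠ c) {k : Finset E}
    (h : c ∈ k ↔ Xor (a ∈ k) (b ∈ k)) : Even (({a, b, c} : Finset E) ∩ k).card := by
  rw [← filter_mem_eq_inter, filter_insert, filter_insert, filter_singleton]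
  by_cases ha : a ∈ k <;> by_cases hb : b ∈ k <;> simp_all [Xor]

lemma IsFaceSystem.exists_inc_eq (hF : G.IsFaceSystem 𝓕)
    (hG : G.IsEssentiallyFourEdgeConnected) (hf : f ∈ 𝓕) (hg : g ∈ 𝓕) (hh : h ∈ 𝓕)
    (hfg : f ≠ g) (hfh : f ≠ h) (hgh : g ≠ h) (haf : a ∈ f) (hag : a ∈ g) (hbg : b ∈ g)
    (hbh : b ∈ h) (hcf : c ∈ f) (hch : c ∈ h) : ∃ v ∈ G.verts, G.inc v = {a, b, c} := by
  have mem_a := (hF.isCDC.isFacePair hf hg hfg haf hag).mem_iff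
  have mem_b := (hF.isCDC.isFacePair hg hh hgh hbg hbh).mem_iff
  have mem_c := (hF.isCDC.isFacePair hf hh hfh hcf hch).mem_iff
  have hab : a ≠ b := by
    rintro rfl
    exact ((mem_a h hh).1 hbh).elim hfh.symm hgh.symm
  have hac : a ≠ c := by
    rintro rfl
    exact ((mem_a h hh).1 hch).elim hfh.symm hgh.symm
  have hbc : b ≠ c := by
    rintro rfl
    exact ((mem_b f hf).1 hcf).elim hfg hfh
  have hsub : {a, b, c} ⊆ G.edges := by
    have hf' := (hF.isCDC.isCircuit f hf).isEven.subset
    have hg' := (hF.isCDC.isCircuit g hg).isEven.subset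
    exact insert_subset (hf' haf) (insert_subset (hg' hbg) (singleton_subset_iff.2 (hf' hcf)))
  obtain ⟨S, hS, hcut⟩ := hF.exists_eq_cut {a, b, c} hsub fun k hk => by
    refine even_card_triple_inter hab hac hbc ?_
    rw [mem_a k hk, mem_b k hk, mem_c k hk, Xor]
    grind
  obtain ⟨v, hv, hinc⟩ := hG.exists_cut_eq_inc S hS (hcut ▸ card_eq_three.2
    ⟨a, b, c, hab, hac, hbc, rfl⟩)
  exact ⟨v, hv, hinc ▸ hcut.symm⟩

lemma IsTwoEdgeConnected.inc_ne_inc (hc : G.IsTwoEdgeConnected) (h3 : 3 ≤ G.verts.card)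
    (hu : u ∈ G.verts) (hw : w ∈ G.verts) (huw : u ≠ w) : G.inc u ≠ G.inc w := by
  classical
  intro hinc
  have hcut : G.cut {u, w} = ∅ := by
    refine filter_false_of_mem fun e _ => ?_
    rw [filter_insert, filter_singleton, ← hinc]
    split_ifs <;> simp [card_pair huw]
  have hge := hc {u, w} (insert_subset hu (singleton_subset_iff.2 hw)) ⟨u, mem_insert_self _ _⟩
    fun h => by rw [← h, card_pair huw] at h3; omega
  rw [hcut, card_empty] at hge
  omega

-- `z` is the third face at the end `v` of the common edge `e` of `g` and `h`.
lemma IsFaceSystem.exists_third_face (hF : G.IsFaceSystem 𝓕)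
    (hG : G.IsEssentiallyFourEdgeConnected) (hg : g ∈ 𝓕) (hh : h ∈ 𝓕) (hgh : g ≠ h)
    (heg : e ∈ g) (heh : e ∈ h) (hv : v ∈ G.verts) (hev : e ∈ G.inc v) :
    ∃ z ∈ 𝓕, ∃ b c, b ∈ h ∧ b ∈ z ∧ c ∈ g ∧ c ∈ z ∧ G.inc v = {e, b, c} ∧
      faceGraph.Adj h z ∧ faceGraph.Adj g z ∧ ∀ x ∈ 𝓕, G.inc v \ {e} ⊆ x → x = z := by
  obtain ⟨b, hbh, hbv, heb⟩ := (hF.isCDC.isCircuit h hh).isEven.exists_ne_mem_inc hv heh hev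
  obtain ⟨c, hcg, hcv, hec⟩ := (hF.isCDC.isCircuit g hg).isEven.exists_ne_mem_inc hv heg hev
  have hbg : b ∉ g := fun hbg => heb (hF.eq_of_mem hG hgh hg hh heg heh hbg hbh)
  have hch : c ∉ h := fun hch => hec (hF.eq_of_mem hG hgh hg hh heg heh hcg hch)
  have hbc : b ≠ c := fun hbc => hbg (hbc ▸ hcg)
  have hinc : G.inc v = {e, b, c} := by
    have hsub : {e, b, c} ⊆ G.inc v :=
      insert_subset hev (insert_subset hbv (singleton_subset_iff.2 hcv))
    refine (eq_of_subset_of_card_le hsub ?_).symm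
    rw [hG.isCubic.card_inc v hv, card_eq_three.2 ⟨e, b, c, heb, hec, hbc, rfl⟩]
  obtain ⟨z, ⟨hz, hbz, hcz⟩, huniq⟩ :=
    hF.isCDC.isEvenDoubleCover.existsUnique_mem_pair hG.isCubic hv hbv hcv hbc
  refine ⟨z, hz, b, c, hbh, hbz, hcg, hcz, hinc, faceGraph_adj_of_mem ?_ hbh hbz,
    faceGraph_adj_of_mem ?_ hcg hcz, fun x hx hsub => huniq x ⟨hx, hsub ?_, hsub ?_⟩⟩
  · exact fun heq => hch (heq ▸ hcz)
  · exact fun heq => hbg (heq ▸ hbz)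
  · exact mem_sdiff.2 ⟨hbv, fun hb => heb (mem_singleton.1 hb).symm⟩
  · exact mem_sdiff.2 ⟨hcv, fun hc => hec (mem_singleton.1 hc).symm⟩

lemma IsFaceSystem.exists_adjFaces_filter_adj_eq_pair (hF : G.IsFaceSystem 𝓕)
    (hG : G.IsEssentiallyFourEdgeConnected) (h3 : 3 ≤ G.verts.card) (hh : h ∈ 𝓕)
    (hg : g ∈ adjFaces 𝓕 h) :
    ∃ z₁ z₂, z₁ ≠ z₂ ∧ (adjFaces 𝓕 h).filter (faceGraph.Adj g) = {z₁, z₂} := by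
  obtain ⟨hg, hhg⟩ := mem_adjFaces.1 hg
  obtain ⟨e, heh, heg⟩ := exists_mem_of_faceGraph_adj hhg
  obtain ⟨u, w, huw⟩ := hG.isCubic.exists_ends ((hF.isCDC.isCircuit h hh).isEven.subset heh)
  obtain ⟨z₁, hz₁, b₁, c₁, hbh₁, hbz₁, hcg₁, hcz₁, hinc₁, hhz₁, hgz₁, huniq₁⟩ :=
    hF.exists_third_face hG hg hh hhg.ne.symm heg heh huw.left_mem huw.mem_inc_left
  obtain ⟨z₂, hz₂, b₂, c₂, hbh₂, hbz₂, hcg₂, hcz₂, hinc₂, hhz₂, hgz₂, huniq₂⟩ :=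
    hF.exists_third_face hG hg hh hhg.ne.symm heg heh huw.right_mem huw.symm.mem_inc_left
  refine ⟨z₁, z₂, ?_, ?_⟩
  · rintro rfl
    refine hG.isTwoEdgeConnected.inc_ne_inc h3 huw.left_mem huw.right_mem huw.ne ?_
    rw [hinc₁, hinc₂, hF.eq_of_mem hG hhz₁.ne hh hz₁ hbh₁ hbz₁ hbh₂ hbz₂,
      hF.eq_of_mem hG hgz₁.ne hg hz₁ hcg₁ hcz₁ hcg₂ hcz₂]
  · ext x
    rw [mem_filter, mem_adjFaces, mem_insert, mem_singleton]
    refine ⟨?_, ?_⟩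
    · rintro ⟨⟨hx, hhx⟩, hgx⟩
      obtain ⟨b, hbg, hbx⟩ := exists_mem_of_faceGraph_adj hgx
      obtain ⟨c, hch, hcx⟩ := exists_mem_of_faceGraph_adj hhx
      obtain ⟨v, hv, hinc⟩ :=
        hF.exists_inc_eq hG hh hg hx hhg.ne hhx.ne hgx.ne heh heg hbg hbx hch hcx
      have hsub : G.inc v \ {e} ⊆ x := by
        intro d hd
        rw [hinc, mem_sdiff, mem_singleton, mem_insert, mem_insert, mem_singleton] at hd
        obtain ⟨rfl | rfl | rfl, hde⟩ := hd
        exacts [absurd rfl hde, hbx, hcx]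
      rcases (huw.mem_inc_iff v hv).1 (hinc ▸ mem_insert_self e _) with rfl | rfl
      exacts [Or.inl (huniq₁ x hx hsub), Or.inr (huniq₂ x hx hsub)]
    · rintro (rfl | rfl)
      exacts [⟨⟨hz₁, hhz₁⟩, hgz₁⟩, ⟨⟨hz₂, hhz₂⟩, hgz₂⟩]

lemma IsFaceSystem.card_adjFaces_filter_adj (hF : G.IsFaceSystem 𝓕)
    (hG : G.IsEssentiallyFourEdgeConnected) (h3 : 3 ≤ G.verts.card) (hh : h ∈ 𝓕)
    (hg : g ∈ adjFaces 𝓕 h) : ((adjFaces 𝓕 h).filter (faceGraph.Adj g)).card = 2 := by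
  obtain ⟨z₁, z₂, hne, heq⟩ := hF.exists_adjFaces_filter_adj_eq_pair hG h3 hh hg
  rw [heq, card_pair hne]

lemma IsFaceSystem.three_le_card_adjFaces (hF : G.IsFaceSystem 𝓕)
    (hG : G.IsEssentiallyFourEdgeConnected) (h3 : 3 ≤ G.verts.card) (hh : h ∈ 𝓕) :
    3 ≤ (adjFaces 𝓕 h).card := by
  obtain ⟨g, hg⟩ := hF.isCDC.adjFaces_nonempty hh
  have hsub : insert g ((adjFaces 𝓕 h).filter (faceGraph.Adj g)) ⊆ adjFaces 𝓕 h :=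
    insert_subset hg (filter_subset _ _)
  have hcard := card_le_card hsub
  rw [card_insert_of_notMem fun hgg => faceGraph.irrefl (mem_filter.1 hgg).2,
    hF.card_adjFaces_filter_adj hG h3 hh hg] at hcard
  exact hcard

-- The edges of the circuit `h` that lie in a face of `M` form an even subset of `h`.
lemma IsFaceSystem.adjFaces_subset_of_forall_adj (hF : G.IsFaceSystem 𝓕)
    (hG : G.IsEssentiallyFourEdgeConnected) (hh : h ∈ 𝓕) {M : Finset (Finset E)}
    (hM : M ⊆ adjFaces 𝓕 h) (hne : M.Nonempty)
    (hclosed : ∀ m ∈ M, ∀ z ∈ adjFaces 𝓕 h, faceGraph.Adj m z → z ∈ M) :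
    adjFaces 𝓕 h ⊆ M := by
  have hcirc := hF.isCDC.isCircuit h hh
  have hX : G.IsEven (h.filter fun e => ∃ m ∈ M, e ∈ m) := by
    refine ⟨(filter_subset _ _).trans hcirc.isEven.subset, fun v hv => ?_⟩
    rcases (h.filter (fun e => ∃ m ∈ M, e ∈ m) ∩ G.inc v).eq_empty_or_nonempty with
      hempty | ⟨a, ha⟩
    · rw [hempty]
      exact Even.zero
    · obtain ⟨⟨hah, m, hm, ham⟩, hav⟩ : (a ∈ h ∧ ∃ m ∈ M, a ∈ m) ∧ a ∈ G.inc v := by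
        simpa only [mem_inter, mem_filter] using ha
      obtain ⟨hm𝓕, hhm⟩ := mem_adjFaces.1 (hM hm)
      obtain ⟨z, hz, b, c, hbh, hbz, hcm, -, hinc, hhz, hmz, -⟩ :=
        hF.exists_third_face hG hm𝓕 hh hhm.ne.symm ham hah hv hav
      have hzM := hclosed m hm z (mem_adjFaces.2 ⟨hz, hhz⟩) hmz
      have hcX : c ∈ h → c = a := fun hch =>
        hF.eq_of_mem hG hhm.ne hh hm𝓕 hch hcm hah ham
      have heq : h.filter (fun e => ∃ m ∈ M, e ∈ m) ∩ G.inc v = h ∩ G.inc v := by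
        rw [hinc]
        grind
      rw [heq]
      exact hcirc.isEven.even v hv
  have hXne : (h.filter fun e => ∃ m ∈ M, e ∈ m).Nonempty := by
    obtain ⟨m, hm⟩ := hne
    obtain ⟨e, heh, hem⟩ := exists_mem_of_faceGraph_adj (mem_adjFaces.1 (hM hm)).2
    exact ⟨e, mem_filter.2 ⟨heh, m, hm, hem⟩⟩
  have hXh := hcirc.eq_of_subset _ (filter_subset _ _) hX hXne
  intro z hz
  obtain ⟨hz, hhz⟩ := mem_adjFaces.1 hz
  obtain ⟨e, heh, hez⟩ := exists_mem_of_faceGraph_adj hhz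
  obtain ⟨m, hm, hem⟩ := (filter_eq_self.1 hXh) e heh
  obtain ⟨hm𝓕, hhm⟩ := mem_adjFaces.1 (hM hm)
  have hmem := (hF.isCDC.isFacePair hh hz hhz.ne heh hez).mem_iff m hm𝓕
  exact (hmem.1 hem).resolve_left hhm.ne.symm ▸ hm

lemma IsFaceSystem.not_adj_of_four_le_card_adjFaces (hF : G.IsFaceSystem 𝓕)
    (hG : G.IsEssentiallyFourEdgeConnected) (h3 : 3 ≤ G.verts.card) (hh : h ∈ 𝓕)
    (h4 : 4 ≤ (adjFaces 𝓕 h).card) (hg : g ∈ adjFaces 𝓕 h) (hx : x ∈ adjFaces 𝓕 h)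
    (hy : y ∈ adjFaces 𝓕 h) (hgx : faceGraph.Adj g x) (hxy : faceGraph.Adj x y) :
    ¬ faceGraph.Adj g y := by
  intro hgy
  have hfilter : ∀ {p q r : Finset E}, p ∈ adjFaces 𝓕 h → q ∈ adjFaces 𝓕 h →
      r ∈ adjFaces 𝓕 h → faceGraph.Adj p q → faceGraph.Adj p r → q ≠ r →
      ∀ z ∈ adjFaces 𝓕 h, faceGraph.Adj p z → z = q ∨ z = r := by
    intro p q r hp hq hr hpq hpr hqr z hz hpz
    have hsub : {q, r} ⊆ (adjFaces 𝓕 h).filter (faceGraph.Adj p) :=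
      insert_subset (mem_filter.2 ⟨hq, hpq⟩) (singleton_subset_iff.2 (mem_filter.2 ⟨hr, hpr⟩))
    have heq := eq_of_subset_of_card_le hsub (by
      rw [hF.card_adjFaces_filter_adj hG h3 hh hp, card_pair hqr])
    have hzqr : z ∈ ({q, r} : Finset (Finset E)) := by
      rw [heq]
      exact mem_filter.2 ⟨hz, hpz⟩
    simpa only [mem_insert, mem_singleton] using hzqr
  have hsub : adjFaces 𝓕 h ⊆ {g, x, y} := by
    refine hF.adjFaces_subset_of_forall_adj hG hh
      (insert_subset hg (insert_subset hx (singleton_subset_iff.2 hy)))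
      ⟨g, mem_insert_self _ _⟩ fun m hm z hz hmz => ?_
    simp only [mem_insert, mem_singleton] at hm ⊢
    rcases hm with rfl | rfl | rfl
    · have := hfilter hg hx hy hgx hgy hxy.ne z hz hmz
      tauto
    · have := hfilter hx hg hy hgx.symm hxy hgy.ne z hz hmz
      tauto
    · have := hfilter hy hg hx hgy.symm hxy.symm hgx.ne z hz hmz
      tauto
  have := (card_le_card hsub).trans card_le_three
  omega

end EssentiallyFourEdgeConnected

end IncGraph

open Finset

section Combinatorics

variable {β γ : Type*}

lemma exists_subset_pairwise_not_and_card_le_card_mul {T : Finset β} {R : β → β → Prop}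
    [DecidableRel R] (hrefl : ∀ x, R x x) (hsymm : ∀ ⦃x y⦄, R x y → R y x) {K : ℕ}
    (hK : ∀ x ∈ T, (T.filter (R x)).card ≤ K) :
    ∃ I ⊆ T, (I : Set β).Pairwise (fun x y => ¬ R x y) ∧ T.card ≤ I.card * K := by
  classical
  obtain ⟨I, hI, hmax⟩ := (T.powerset.filter fun I : Finset β =>
    (I : Set β).Pairwise fun x y => ¬ R x y).exists_max_image card ⟨∅, by simp⟩
  simp only [mem_filter, mem_powerset] at hI hmax
  refine ⟨I, hI.1, hI.2, ?_⟩
  have hcover : T ⊆ I.biUnion fun x => T.filter (R x) := by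
    intro y hy
    by_contra hnot
    simp only [mem_biUnion, mem_filter, not_exists, not_and] at hnot
    have hyI : y ∉ I := fun h => hnot y h hy (hrefl y)
    have hins : ((insert y I : Finset β) : Set β).Pairwise fun x y => ¬ R x y := by
      rw [coe_insert]
      exact hI.2.insert fun x hx _ => ⟨fun h => hnot x hx hy (hsymm h), hnot x hx hy⟩
    have hcard := hmax (insert y I) ⟨insert_subset hy hI.1, hins⟩
    rw [card_insert_of_notMem hyI] at hcard
    omega
  exact (card_le_card hcover).trans (card_biUnion_le_card_mul _ _ _ fun x hx => hK x (hI.1 hx))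

lemma sum_ite_mem_of_pairwiseDisjoint [DecidableEq β] {ι : Type*} {J : Finset ι}
    {s : ι → Finset β} (hJ : (J : Set ι).PairwiseDisjoint s) (b : β) :
    ∑ i ∈ J, (if b ∈ s i then 1 else 0) = if b ∈ J.biUnion s then 1 else 0 := by
  rw [← card_filter]
  split_ifs with hb
  · obtain ⟨i, hi, hbi⟩ := mem_biUnion.1 hb
    refine card_eq_one.2 ⟨i, eq_singleton_iff_unique_mem.2 ⟨mem_filter.2 ⟨hi, hbi⟩, ?_⟩⟩
    intro j hj
    obtain ⟨hj, hbj⟩ := mem_filter.1 hj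
    exact hJ.elim_finset hj hi b hbj hbi
  · exact card_eq_zero.2 (filter_false_of_mem fun i hi hbi => hb (mem_biUnion.2 ⟨i, hi, hbi⟩))

/-- `c` is a proper colouring of the subgraph of `H` induced on `A`. -/
def IsColoringOn (H : SimpleGraph β) (A : Finset β) (c : β → γ) : Prop :=
  ∀ x ∈ A, ∀ y ∈ A, H.Adj x y → c x ≠ c y

variable [Fintype γ] {H : SimpleGraph β} [DecidableRel H.Adj] {A N : Finset β} {c : β → γ}

lemma IsColoringOn.exists_insert [DecidableEq β] (hc : IsColoringOn H A c) {a : β} (ha : a ∉ A)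
    (hdeg : (A.filter (H.Adj a)).card < Fintype.card γ) :
    ∃ c' : β → γ, (∀ x ∈ A, c' x = c x) ∧ IsColoringOn H (insert a A) c' := by
  classical
  obtain ⟨k, hk⟩ : ∃ k, k ∉ (A.filter (H.Adj a)).image c := by
    by_contra! hall
    have hcard := card_le_card (fun k _ => hall k : univ ⊆ (A.filter (H.Adj a)).image c)
    rw [card_univ] at hcard
    exact (hcard.trans card_image_le).not_gt hdeg
  have hk' : ∀ x ∈ A, H.Adj a x → c x ≠ k := fun x hx hax heq =>
    hk (mem_image.2 ⟨x, mem_filter.2 ⟨hx, hax⟩, heq⟩)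
  have hupd : ∀ x ∈ A, Function.update c a k x = c x := fun x hx =>
    Function.update_of_ne (ne_of_mem_of_not_mem hx ha) _ _
  refine ⟨Function.update c a k, hupd, fun x hx y hy hxy => ?_⟩
  rcases mem_insert.1 hx with rfl | hxA <;> rcases mem_insert.1 hy with rfl | hyA
  · exact (H.irrefl hxy).elim
  · rw [Function.update_self, hupd y hyA]
    exact (hk' y hyA hxy).symm
  · rw [Function.update_self, hupd x hxA]
    exact hk' x hxA hxy.symm
  · rw [hupd x hxA, hupd y hyA]
    exact hc x hxA y hyA hxy

lemma IsColoringOn.exists_extension (hc : IsColoringOn H A c) (hA : A ⊆ N)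
    (hdeg : ∀ x ∈ N, (N.filter (H.Adj x)).card < Fintype.card γ) :
    ∃ c' : β → γ, (∀ x ∈ A, c' x = c x) ∧ IsColoringOn H N c' := by
  classical
  suffices h : ∀ Q ⊆ N, ∃ c' : β → γ, (∀ x ∈ A, c' x = c x) ∧ IsColoringOn H (A ∪ Q) c' by
    simpa only [union_eq_right.2 hA] using h N Subset.rfl
  intro Q
  induction Q using Finset.induction_on with
  | empty => exact fun _ => ⟨c, fun _ _ => rfl, by rwa [union_empty]⟩
  | insert a Q _ ih =>
    intro hQ
    obtain ⟨haN, hQN⟩ := insert_subset_iff.1 hQ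
    obtain ⟨c', hext, hc'⟩ := ih hQN
    rw [union_insert]
    by_cases ha : a ∈ A ∪ Q
    · exact ⟨c', hext, by rwa [insert_eq_of_mem ha]⟩
    · have hlt := (card_le_card (filter_subset_filter _ (union_subset hA hQN))).trans_lt
        (hdeg a haN)
      obtain ⟨c'', hext', hc''⟩ := hc'.exists_insert ha hlt
      exact ⟨c'', fun x hx => (hext' x (mem_union_left _ hx)).trans (hext x hx), hc''⟩

lemma exists_isColoringOn_forall_exists_eq [Nonempty γ]
    (hdeg : ∀ x ∈ N, (N.filter (H.Adj x)).card < Fintype.card γ)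
    (hN : Fintype.card γ ≤ N.card) :
    ∃ c : β → γ, IsColoringOn H N c ∧ ∀ k, ∃ x ∈ N, c x = k := by
  obtain ⟨A, hA, hcard⟩ := exists_subset_card_eq hN
  let φ : A ≃ γ := Fintype.equivOfCardEq (by rw [Fintype.card_coe, hcard])
  let c₀ : β → γ := Function.extend Subtype.val φ fun _ => Classical.arbitrary γ
  have hc₀ : ∀ x : A, c₀ x = φ x := fun x => Subtype.val_injective.extend_apply _ _ x
  have hcol : IsColoringOn H A c₀ := fun x hx y hy hxy heq => by
    rw [hc₀ ⟨x, hx⟩, hc₀ ⟨y, hy⟩] at heq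
    exact hxy.ne (Subtype.ext_iff.1 (φ.injective heq))
  obtain ⟨c, hext, hc⟩ := hcol.exists_extension hA hdeg
  refine ⟨c, hc, fun k => ⟨φ.symm k, hA (φ.symm k).2, ?_⟩⟩
  rw [hext _ (φ.symm k).2, hc₀, φ.apply_symm_apply]

end Combinatorics

namespace IncGraph

section ModifiedCover

variable {α E : Type*} [DecidableEq E] {G : IncGraph α E} {𝓕 J M : Finset (Finset E)}
  {e : E} {f f' g g₁ g₂ C : Finset E} {k : Fin 3}

lemma IsFacePair.card_filter_mem (h : IsFacePair 𝓕 e g₁ g₂) (hM : M ⊆ 𝓕) :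
    (M.filter fun g => e ∈ g).card =
      (if g₁ ∈ M then 1 else 0) + (if g₂ ∈ M then 1 else 0) := by
  have heq : M.filter (fun g => e ∈ g) = ({g₁, g₂} : Finset (Finset E)).filter (· ∈ M) := by
    ext g
    rw [mem_filter, mem_filter, mem_insert, mem_singleton, and_comm]
    exact and_congr_left fun hg => h.mem_iff g (hM hg)
  rw [heq, card_filter, sum_pair h.ne]

lemma IsFacePair.mem_symmSum_iff (h : IsFacePair 𝓕 e g₁ g₂) (he : e ∈ G.edges) (hM : M ⊆ 𝓕) :
    e ∈ G.symmSum M ↔ ¬ (g₁ ∈ M ↔ g₂ ∈ M) := by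
  rw [symmSum, mem_filter, h.card_filter_mem hM]
  by_cases h₁ : g₁ ∈ M <;> by_cases h₂ : g₂ ∈ M <;> simp [h₁, h₂, he]

/-- The face `f` together with the faces adjacent to it. -/
def closedNhd (𝓕 : Finset (Finset E)) (f : Finset E) : Finset (Finset E) :=
  insert f (adjFaces 𝓕 f)

lemma self_mem_closedNhd : f ∈ closedNhd 𝓕 f := mem_insert_self _ _

lemma closedNhd_subset (hf : f ∈ 𝓕) : closedNhd 𝓕 f ⊆ 𝓕 :=
  insert_subset hf (filter_subset _ _)

/-- The face `f` together with the faces adjacent to it that have colour `k`. -/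
def colorStar (𝓕 : Finset (Finset E)) (f : Finset E) (c : Finset E → Fin 3) (k : Fin 3) :
    Finset (Finset E) :=
  insert f ((adjFaces 𝓕 f).filter fun g => c g = k)

lemma mem_colorStar {c : Finset E → Fin 3} :
    g ∈ colorStar 𝓕 f c k ↔ g = f ∨ g ∈ adjFaces 𝓕 f ∧ c g = k := by
  rw [colorStar, mem_insert, mem_filter]

lemma colorStar_subset_closedNhd {c : Finset E → Fin 3} :
    colorStar 𝓕 f c k ⊆ closedNhd 𝓕 f :=
  insert_subset_insert _ (filter_subset _ _)

lemma colorStar_subset (hf : f ∈ 𝓕) {c : Finset E → Fin 3} : colorStar 𝓕 f c k ⊆ 𝓕 :=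
  colorStar_subset_closedNhd.trans (closedNhd_subset hf)

lemma IsFacePair.sum_mem_symmSum_colorStar {c : Finset E → Fin 3} (hf : f ∈ 𝓕)
    (hc : IsColoringOn faceGraph (adjFaces 𝓕 f) c) (he : e ∈ G.edges)
    (h : IsFacePair 𝓕 e g₁ g₂) :
    ∑ k, (if e ∈ G.symmSum (colorStar 𝓕 f c k) then 1 else 0) =
      (if g₁ ∈ closedNhd 𝓕 f then 1 else 0) + (if g₂ ∈ closedNhd 𝓕 f then 1 else 0) := by
  have sum_ne : ∀ a : Fin 3, ∑ k : Fin 3, (if ¬ a = k then 1 else 0) = 2 := by decide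
  have sum_eq : ∀ a : Fin 3, ∑ k : Fin 3, (if a = k then 1 else 0) = 1 := by decide
  have sum_pair : ∀ a b : Fin 3, a ≠ b →
      ∑ k : Fin 3, (if ¬ (a = k ↔ b = k) then 1 else 0) = 2 := by decide
  simp only [h.mem_symmSum_iff he (colorStar_subset hf), mem_colorStar, closedNhd, mem_insert]
  by_cases h₁ : g₁ = f
  · subst h₁
    simp only [h.ne.symm, h.mem_adjFaces, true_and, false_or, true_or, true_iff, if_true]
    exact sum_ne _
  by_cases h₂ : g₂ = f
  · subst h₂
    simp only [h.ne, h.symm.mem_adjFaces, true_and, false_or, true_or, iff_true, if_true]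
    exact sum_ne _
  by_cases hadj₁ : g₁ ∈ adjFaces 𝓕 f <;> by_cases hadj₂ : g₂ ∈ adjFaces 𝓕 f <;>
    simp only [h₁, h₂, hadj₁, hadj₂, true_and, false_and, false_or, if_true, if_false, iff_false,
      false_iff, not_not]
  · exact sum_pair _ _ (hc _ hadj₁ _ hadj₂ h.adj)
  · exact sum_eq _
  · exact sum_eq _
  · simp

/-- The index set of `modifiedFamily`: the faces of `𝓕` outside all closed neighbourhoods of
members of `J`, and three indices for every member of `J`. -/
def modifiedIdx (𝓕 J : Finset (Finset E)) : Finset (Finset E ⊕ (Finset E × Fin 3)) :=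
  (𝓕 \ J.biUnion (closedNhd 𝓕)).disjSum (J ×ˢ univ)

/-- The even sets replacing `𝓕` when, for every `f ∈ J`, the faces in the closed neighbourhood
of `f` are replaced by the three sums over the colour stars of the colouring `c f`. -/
def modifiedFamily (G : IncGraph α E) (𝓕 : Finset (Finset E))
    (c : Finset E → Finset E → Fin 3) : Finset E ⊕ (Finset E × Fin 3) → Finset E
  | Sum.inl g => g
  | Sum.inr p => G.symmSum (colorStar 𝓕 p.1 (c p.1) p.2)

/-- The circuit double cover obtained from `𝓕` by recolouring around every member of `J`. -/
noncomputable def modifiedCover (G : IncGraph α E) (𝓕 J : Finset (Finset E))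
    (c : Finset E → Finset E → Fin 3) : Finset (Finset E) :=
  G.decomposition (modifiedIdx 𝓕 J) (modifiedFamily G 𝓕 c)

variable {c : Finset E → Finset E → Fin 3}

lemma IsCDC.isEvenDoubleCover_modifiedFamily (h𝓕 : G.IsCDC 𝓕) (hJ : J ⊆ 𝓕)
    (hdisj : (J : Set (Finset E)).PairwiseDisjoint (closedNhd 𝓕))
    (hc : ∀ f ∈ J, IsColoringOn faceGraph (adjFaces 𝓕 f) (c f)) :
    G.IsEvenDoubleCover (modifiedIdx 𝓕 J) (modifiedFamily G 𝓕 c) := by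
  refine ⟨?_, fun e he => ?_⟩
  · rintro (g | ⟨f, k⟩) hi
    · rw [modifiedIdx, inl_mem_disjSum, mem_sdiff] at hi
      exact (h𝓕.isCircuit g hi.1).isEven
    · rw [modifiedIdx, inr_mem_disjSum, mem_product] at hi
      exact isEven_symmSum fun g hg =>
        (h𝓕.isCircuit g (colorStar_subset (hJ hi.1) hg)).isEven
  · obtain ⟨g₁, g₂, h⟩ := h𝓕.exists_isFacePair he
    have hstars : ∑ f ∈ J, ∑ k, (if e ∈ G.symmSum (colorStar 𝓕 f (c f) k) then 1 else 0) =
        (if g₁ ∈ J.biUnion (closedNhd 𝓕) then 1 else 0) +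
          (if g₂ ∈ J.biUnion (closedNhd 𝓕) then 1 else 0) := by
      rw [sum_congr rfl fun f hf => h.sum_mem_symmSum_colorStar (hJ hf) (hc f hf) he,
        sum_add_distrib, sum_ite_mem_of_pairwiseDisjoint hdisj,
        sum_ite_mem_of_pairwiseDisjoint hdisj]
    have hrest := h.card_filter_mem (sdiff_subset (s := 𝓕) (t := J.biUnion (closedNhd 𝓕)))
    rw [card_filter] at hrest
    rw [card_filter, modifiedIdx, sum_disjSum, sum_product]
    refine (congrArg₂ (· + ·) hrest hstars).trans ?_
    simp only [mem_sdiff, h.left_mem, h.right_mem, true_and]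
    split_ifs <;> rfl

lemma IsCDC.isCDC_modifiedCover (h𝓕 : G.IsCDC 𝓕) (hG : G.IsCubic) (hJ : J ⊆ 𝓕)
    (hdisj : (J : Set (Finset E)).PairwiseDisjoint (closedNhd 𝓕))
    (hc : ∀ f ∈ J, IsColoringOn faceGraph (adjFaces 𝓕 f) (c f)) :
    G.IsCDC (modifiedCover G 𝓕 J c) :=
  (h𝓕.isEvenDoubleCover_modifiedFamily hJ hdisj hc).isCDC_decomposition hG

lemma mem_modifiedCover : C ∈ modifiedCover G 𝓕 J c ↔
    (∃ g ∈ 𝓕, g ∉ J.biUnion (closedNhd 𝓕) ∧ C ⊆ g ∧ G.IsCircuit C) ∨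
      ∃ f ∈ J, ∃ k, C ⊆ G.symmSum (colorStar 𝓕 f (c f) k) ∧ G.IsCircuit C := by
  rw [modifiedCover, mem_decomposition]
  simp only [modifiedIdx, Sum.exists, Prod.exists, inl_mem_disjSum, inr_mem_disjSum, mem_sdiff,
    mem_product, mem_univ, and_true, modifiedFamily, and_assoc, exists_and_left]

lemma IsCDC.not_subset_symmSum_colorStar_self (h𝓕 : G.IsCDC 𝓕) (hf : f ∈ 𝓕)
    {c : Finset E → Fin 3} (hg : g ∈ adjFaces 𝓕 f) (hgk : c g = k) :
    ¬ f ⊆ G.symmSum (colorStar 𝓕 f c k) := by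
  intro hsub
  obtain ⟨hg𝓕, hfg⟩ := mem_adjFaces.1 hg
  obtain ⟨e, hef, heg⟩ := exists_mem_of_faceGraph_adj hfg
  have hiff := (h𝓕.isFacePair hf hg𝓕 hfg.ne hef heg).mem_symmSum_iff
    ((h𝓕.isCircuit f hf).isEven.subset hef) (colorStar_subset (c := c) (k := k) hf)
  exact hiff.1 (hsub hef) (iff_of_true (mem_colorStar.2 (Or.inl rfl))
    (mem_colorStar.2 (Or.inr ⟨hg, hgk⟩)))

lemma IsCDC.not_subset_symmSum_colorStar_of_disjoint (h𝓕 : G.IsCDC 𝓕) (hf : f ∈ 𝓕)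
    (hf' : f' ∈ 𝓕) (hdisj : Disjoint (closedNhd 𝓕 f) (closedNhd 𝓕 f'))
    {c : Finset E → Fin 3} : ¬ f ⊆ G.symmSum (colorStar 𝓕 f' c k) := by
  intro hsub
  obtain ⟨e, he⟩ := (h𝓕.isCircuit f hf).nonempty
  obtain ⟨g, h⟩ := h𝓕.exists_isFacePair_of_mem hf he
  have hiff := h.mem_symmSum_iff ((h𝓕.isCircuit f hf).isEven.subset he)
    (colorStar_subset (c := c) (k := k) hf')
  have hnot : ∀ g ∈ closedNhd 𝓕 f, g ∉ colorStar 𝓕 f' c k := fun g hg hg' =>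
    disjoint_left.1 hdisj hg (colorStar_subset_closedNhd hg')
  exact hiff.1 (hsub he) (iff_of_false (hnot f self_mem_closedNhd)
    (hnot g (mem_insert_of_mem h.mem_adjFaces)))

lemma two_pow_card_le_nu {ι : Type*} {I : Finset ι} {𝒟 : Finset ι → Finset (Finset E)}
    (h𝒟 : ∀ J ⊆ I, G.IsCDC (𝒟 J)) (P : ι → Finset (Finset E) → Prop)
    (hP : ∀ J ⊆ I, ∀ i ∈ I, P i (𝒟 J) ↔ i ∈ J) : 2 ^ I.card ≤ G.nu := by
  rw [← card_powerset]
  refine card_le_card_of_injOn 𝒟 (fun J hJ => mem_cdcs.2 (h𝒟 J (mem_powerset.1 hJ)))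
    fun J hJ J' hJ' heq => ?_
  rw [mem_coe, mem_powerset] at hJ hJ'
  ext i
  by_cases hi : i ∈ I
  · rw [← hP J hJ i hi, ← hP J' hJ' i hi, heq]
  · exact iff_of_false (fun h => hi (hJ h)) fun h => hi (hJ' h)

lemma IsCDC.notMem_modifiedCover_iff (h𝓕 : G.IsCDC 𝓕) {I : Finset (Finset E)} (hI : I ⊆ 𝓕)
    (hdisj : (I : Set (Finset E)).PairwiseDisjoint (closedNhd 𝓕)) (hJ : J ⊆ I) (hf : f ∈ I)
    (hc : ∀ k, ∃ g ∈ adjFaces 𝓕 f, c f g = k) : f ∉ modifiedCover G 𝓕 J c ↔ f ∈ J := by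
  have hcirc := h𝓕.isCircuit f (hI hf)
  refine not_iff_comm.1 ⟨fun hfJ => mem_modifiedCover.2 (Or.inl
    ⟨f, hI hf, fun hmem => ?_, Subset.rfl, hcirc⟩), fun hmem hfJ => ?_⟩
  · obtain ⟨f', hf', hff'⟩ := mem_biUnion.1 hmem
    have hne : f ≠ f' := fun heq => hfJ (heq ▸ hf')
    exact disjoint_left.1 (hdisj hf (hJ hf') hne) self_mem_closedNhd hff'
  · rcases mem_modifiedCover.1 hmem with ⟨g, hg, hgJ, hfg, -⟩ | ⟨f', hf', k, hsub, -⟩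
    · obtain rfl := (h𝓕.isCircuit g hg).eq_of_subset f hfg hcirc.isEven hcirc.nonempty
      exact hgJ (mem_biUnion.2 ⟨f, hfJ, self_mem_closedNhd⟩)
    · rcases eq_or_ne f f' with rfl | hne
      · obtain ⟨g, hg, hgk⟩ := hc k
        exact h𝓕.not_subset_symmSum_colorStar_self (hI hf) hg hgk hsub
      · exact h𝓕.not_subset_symmSum_colorStar_of_disjoint (hI hf) (hI (hJ hf'))
          (hdisj hf (hJ hf') hne) hsub

lemma IsFaceSystem.two_pow_card_le_nu_of_pairwiseDisjoint (hF : G.IsFaceSystem 𝓕)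
    (hG : G.IsEssentiallyFourEdgeConnected) (h3 : 3 ≤ G.verts.card) {I : Finset (Finset E)}
    (hI : I ⊆ 𝓕) (hdisj : (I : Set (Finset E)).PairwiseDisjoint (closedNhd 𝓕)) :
    2 ^ I.card ≤ G.nu := by
  have hcol : ∀ f, ∃ c : Finset E → Fin 3, f ∈ I →
      IsColoringOn faceGraph (adjFaces 𝓕 f) c ∧ ∀ k, ∃ g ∈ adjFaces 𝓕 f, c g = k := by
    intro f
    by_cases hf : f ∈ I
    · obtain ⟨c, hc⟩ := exists_isColoringOn_forall_exists_eq (γ := Fin 3) (N := adjFaces 𝓕 f)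
        (H := faceGraph)
        (fun x hx => (hF.card_adjFaces_filter_adj hG h3 (hI hf) hx).trans_lt (by simp))
        (by simpa only [Fintype.card_fin] using hF.three_le_card_adjFaces hG h3 (hI hf))
      exact ⟨c, fun _ => hc⟩
    · exact ⟨0, fun h => (hf h).elim⟩
  choose c hc using hcol
  refine two_pow_card_le_nu (𝒟 := fun J => modifiedCover G 𝓕 J c)
    (fun J hJ => hF.isCDC.isCDC_modifiedCover hG.isCubic (hJ.trans hI)
      (hdisj.subset (coe_subset.2 hJ)) fun f hf => (hc f (hJ hf)).1)
    (fun f 𝒞 => f ∉ 𝒞) fun J hJ f hf => ?_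
  exact hF.isCDC.notMem_modifiedCover_iff hI hdisj hJ hf (hc f hf).2

end ModifiedCover

end IncGraph

section SeparatedPaths

variable {β γ ι : Type*} [DecidableEq β] {H : SimpleGraph β} [DecidableRel H.Adj] {N : Finset β}
  {a b g : β} {k l : ℕ}

/-- The vertices reachable from `g` by at most `k` steps of `H` into `N`. Re-inserting only `g`
at each step makes `card_ballIn_lt` immediate. -/
def ballIn (H : SimpleGraph β) [DecidableRel H.Adj] (N : Finset β) (g : β) : ℕ → Finset β
  | 0 => {g}
  | k + 1 => insert g ((ballIn H N g k).biUnion fun u => N.filter (H.Adj u))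

lemma ballIn_zero : ballIn H N g 0 = {g} := rfl

lemma mem_ballIn_succ :
    a ∈ ballIn H N g (k + 1) ↔ a = g ∨ ∃ u ∈ ballIn H N g k, a ∈ N ∧ H.Adj u a := by
  rw [ballIn, mem_insert, mem_biUnion]
  simp only [mem_filter]

lemma self_mem_ballIn : g ∈ ballIn H N g k := by
  cases k with
  | zero => exact mem_singleton_self g
  | succ k => exact mem_insert_self g _

lemma mem_ballIn_one_of_adj (hb : b ∈ N) (hab : H.Adj a b) : b ∈ ballIn H N a 1 :=
  mem_ballIn_succ.2 (Or.inr ⟨a, self_mem_ballIn, hb, hab⟩)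

lemma ballIn_subset (hg : g ∈ N) : ballIn H N g k ⊆ N := by
  cases k with
  | zero => exact singleton_subset_iff.2 hg
  | succ k => exact insert_subset hg (biUnion_subset.2 fun u _ => filter_subset _ _)

lemma ballIn_subset_succ : ballIn H N g k ⊆ ballIn H N g (k + 1) := by
  induction k with
  | zero => exact singleton_subset_iff.2 self_mem_ballIn
  | succ k ih => exact insert_subset_insert _ (biUnion_subset_biUnion_of_subset_left _ ih)

lemma ballIn_mono : Monotone (ballIn H N g) :=
  monotone_nat_of_le_succ fun _ => ballIn_subset_succ

lemma mem_ballIn_add (hag : a ∈ ballIn H N g k) (hba : b ∈ ballIn H N a l) :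
    b ∈ ballIn H N g (k + l) := by
  induction l generalizing b with
  | zero =>
    rw [ballIn_zero, mem_singleton] at hba
    exact hba ▸ hag
  | succ l ih =>
    rcases mem_ballIn_succ.1 hba with rfl | ⟨u, hu, hbN, hub⟩
    · exact ballIn_mono (Nat.le_add_right k (l + 1)) hag
    · exact mem_ballIn_succ.2 (Or.inr ⟨u, ih hu, hbN, hub⟩)

lemma mem_ballIn_comm (hg : g ∈ N) (hag : a ∈ ballIn H N g k) : g ∈ ballIn H N a k := by
  induction k generalizing a with
  | zero =>
    rw [ballIn_zero, mem_singleton] at hag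
    exact hag ▸ self_mem_ballIn
  | succ k ih =>
    rcases mem_ballIn_succ.1 hag with rfl | ⟨u, hu, -, hua⟩
    · exact self_mem_ballIn
    · rw [add_comm]
      exact mem_ballIn_add (mem_ballIn_one_of_adj (ballIn_subset hg hu) hua.symm) (ih hu)

lemma card_ballIn_lt (hdeg : ∀ x ∈ N, (N.filter (H.Adj x)).card ≤ 2) (hg : g ∈ N) :
    (ballIn H N g k).card < 2 ^ (k + 1) := by
  induction k with
  | zero => simp [ballIn_zero]
  | succ k ih =>
    have hunion := card_biUnion_le_card_mul (ballIn H N g k) (fun u => N.filter (H.Adj u)) 2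
      fun u hu => hdeg u (ballIn_subset hg hu)
    have hinsert := card_insert_le g ((ballIn H N g k).biUnion fun u => N.filter (H.Adj u))
    rw [ballIn, pow_succ]
    omega

/-- The vertex sets `A` and `B` are disjoint and no edge of `H` joins them. -/
def IsSeparated (H : SimpleGraph β) (A B : Finset β) : Prop :=
  ∀ a ∈ A, ∀ b ∈ B, a ≠ b ∧ ¬ H.Adj a b

lemma exists_subset_pairwise_isSeparated (hdeg : ∀ x ∈ N, (N.filter (H.Adj x)).card ≤ 2)
    {P : β → Finset β} {r : ℕ} (hself : ∀ g, g ∈ P g) (hP : ∀ g ∈ N, P g ⊆ ballIn H N g r) :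
    ∃ I ⊆ N, (I : Set β).Pairwise (fun g g' => IsSeparated H (P g) (P g')) ∧
      N.card ≤ I.card * (2 ^ (2 * r + 2) - 1) := by
  classical
  let R : β → β → Prop := fun g g' => ∃ a ∈ P g, ∃ b ∈ P g', a = b ∨ H.Adj a b
  have hR : ∀ g ∈ N, (N.filter (R g)).card ≤ 2 ^ (2 * r + 2) - 1 := by
    refine fun g hg => Nat.le_sub_one_of_lt (lt_of_le_of_lt (card_le_card fun g' hg' => ?_)
      (card_ballIn_lt hdeg hg))
    obtain ⟨hg', a, ha, b, hb, hab⟩ := mem_filter.1 hg'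
    have hba : b ∈ ballIn H N a 1 := by
      rcases hab with rfl | hab
      exacts [self_mem_ballIn, mem_ballIn_one_of_adj (ballIn_subset hg' (hP g' hg' hb)) hab]
    have hmem := mem_ballIn_add (mem_ballIn_add (hP g hg ha) hba)
      (mem_ballIn_comm hg' (hP g' hg' hb))
    rwa [show r + 1 + r = 2 * r + 1 by ring] at hmem
  obtain ⟨I, hI, hpair, hcard⟩ := exists_subset_pairwise_not_and_card_le_card_mul
    (fun g => ⟨g, hself g, g, hself g, Or.inl rfl⟩)
    (fun g g' ⟨a, ha, b, hb, hab⟩ => ⟨b, hb, a, ha, hab.imp Eq.symm fun h => h.symm⟩) hR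
  exact ⟨I, hI, hpair.imp fun g g' hnot a ha b hb => not_or.1 fun hab => hnot ⟨a, ha, b, hb, hab⟩,
    hcard⟩

omit [DecidableRel H.Adj] in
lemma exists_isColoringOn_biUnion [Nonempty γ] {I : Finset ι} {s : ι → Finset β} {c : ι → β → γ}
    (hsep : (I : Set ι).Pairwise fun i j => IsSeparated H (s i) (s j))
    (hc : ∀ i ∈ I, IsColoringOn H (s i) (c i)) :
    ∃ c' : β → γ, IsColoringOn H (I.biUnion s) c' ∧ ∀ i ∈ I, ∀ b ∈ s i, c' b = c i b := by
  classical
  let c' : β → γ := fun b =>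
    if h : ∃ i, i ∈ I ∧ b ∈ s i then c h.choose b else Classical.arbitrary γ
  have hc' : ∀ i ∈ I, ∀ b ∈ s i, c' b = c i b := by
    intro i hi b hb
    have hex : ∃ i, i ∈ I ∧ b ∈ s i := ⟨i, hi, hb⟩
    have heq : hex.choose = i := hsep.eq hex.choose_spec.1 hi fun hsep' =>
      (hsep' b hex.choose_spec.2 b hb).1 rfl
    simp only [c', dif_pos hex, heq]
  refine ⟨c', fun a ha b hb hab => ?_, hc'⟩
  obtain ⟨i, hi, hai⟩ := mem_biUnion.1 ha
  obtain ⟨j, hj, hbj⟩ := mem_biUnion.1 hb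
  obtain rfl : i = j := hsep.eq hi hj fun hsep' => (hsep' a hai b hbj).2 hab
  rw [hc' i hi a hai, hc' i hi b hbj]
  exact hc i hi a hai b hbj hab

/-- `g, x, y` is an induced path of `H` with two edges. -/
structure IsInducedPath (H : SimpleGraph β) (g x y : β) : Prop where
  adj_left : H.Adj g x
  adj_right : H.Adj x y
  ne : g ≠ y
  not_adj : ¬ H.Adj g y

omit [DecidableRel H.Adj] in
lemma IsInducedPath.exists_isColoringOn {x y : β} (h : IsInducedPath H g x y) (p : Prop) :
    ∃ c : β → Fin 3, IsColoringOn H {g, x, y} c ∧ (c g = c y ↔ p) := by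
  classical
  have hgx := h.adj_left.ne
  have hxy := h.adj_right.ne
  let c : β → Fin 3 := fun b => if b = x then 0 else if b = y ∨ p then 1 else 2
  refine ⟨c, fun a ha b hb hab => ?_, ?_⟩
  · have hnot := h.not_adj
    have hnot' : ¬ H.Adj y g := fun hyg => hnot hyg.symm
    simp only [mem_insert, mem_singleton] at ha hb
    rcases ha with rfl | rfl | rfl <;> rcases hb with rfl | rfl | rfl <;>
      first
      | exact absurd hab H.irrefl
      | exact absurd hab hnot
      | exact absurd hab hnot'
      | by_cases hp : p <;> simp [c, hp, hgx, hxy.symm, h.ne]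
  · by_cases hp : p <;> simp [c, hp, hgx, hxy.symm, h.ne]

lemma exists_isColoringOn_of_isInducedPath (hdeg : ∀ x ∈ N, (N.filter (H.Adj x)).card ≤ 2)
    {I : Finset β} {x y : β → β} (hN : ∀ g ∈ I, {g, x g, y g} ⊆ N)
    (hpath : ∀ g ∈ I, IsInducedPath H g (x g) (y g))
    (hsep : (I : Set β).Pairwise
      fun g g' => IsSeparated H {g, x g, y g} {g', x g', y g'}) (J : Finset β) :
    ∃ c : β → Fin 3, IsColoringOn H N c ∧ ∀ g ∈ I, c g = c (y g) ↔ g ∈ J := by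
  have hlocal : ∀ g, ∃ c : β → Fin 3, g ∈ I →
      IsColoringOn H {g, x g, y g} c ∧ (c g = c (y g) ↔ g ∈ J) := by
    intro g
    by_cases hg : g ∈ I
    · obtain ⟨c, hc⟩ := (hpath g hg).exists_isColoringOn (g ∈ J)
      exact ⟨c, fun _ => hc⟩
    · exact ⟨0, fun h => (hg h).elim⟩
  choose c hc using hlocal
  obtain ⟨c', hcol', hc'⟩ := exists_isColoringOn_biUnion hsep fun g hg => (hc g hg).1
  obtain ⟨c'', hext, hcol⟩ := hcol'.exists_extension (biUnion_subset.2 hN)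
    fun g hg => (hdeg g hg).trans_lt (by simp)
  refine ⟨c'', hcol, fun g hg => ?_⟩
  have hmem : ∀ a ∈ ({g, x g, y g} : Finset β), c'' a = c g a := fun a ha =>
    (hext a (mem_biUnion.2 ⟨g, hg, ha⟩)).trans (hc' g hg a ha)
  rw [hmem g (by simp), hmem (y g) (by simp)]
  exact (hc g hg).2

end SeparatedPaths

namespace IncGraph

section LargeFace

variable {α E : Type*} [DecidableEq E] {G : IncGraph α E} {𝓕 : Finset (Finset E)}
  {s e s' : E} {h g x y z C : Finset E} {c : Finset E → Fin 3} {k : Fin 3}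

lemma mem_colorStar_of_mem_adjFaces (hz : z ∈ adjFaces 𝓕 h) :
    z ∈ colorStar 𝓕 h c k ↔ c z = k := by
  rw [mem_colorStar, or_iff_right (mem_adjFaces.1 hz).2.ne.symm, and_iff_right hz]

lemma color_eq_of_mem_modifiedCover (hg : g ∈ adjFaces 𝓕 h) (hx : x ∈ adjFaces 𝓕 h)
    (hy : y ∈ adjFaces 𝓕 h) (hs : IsFacePair 𝓕 s g x) (he : IsFacePair 𝓕 e h x)
    (hs' : IsFacePair 𝓕 s' x y) (hC : C ∈ modifiedCover G 𝓕 {h} fun _ => c) (hsC : s ∈ C)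
    (heC : e ∈ C) (hs'C : s' ∈ C) : c g = c y := by
  rcases mem_modifiedCover.1 hC with ⟨f, hf, hfh, hCf, -⟩ | ⟨f, hf, k, hCf, -⟩
  · refine absurd ?_ hfh
    rw [singleton_biUnion]
    rcases (he.mem_iff f hf).1 (hCf heC) with rfl | rfl
    exacts [self_mem_closedNhd, mem_insert_of_mem hx]
  · obtain rfl := mem_singleton.1 hf
    have hsub : colorStar 𝓕 f c k ⊆ 𝓕 := colorStar_subset he.left_mem
    have hedges : ∀ d ∈ C, d ∈ G.edges := fun d hd => (mem_filter.1 (hCf hd)).1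
    have hfstar : f ∈ colorStar 𝓕 f c k := mem_colorStar.2 (Or.inl rfl)
    have hmem_s := (hs.mem_symmSum_iff (hedges s hsC) hsub).1 (hCf hsC)
    have hmem_e := (he.mem_symmSum_iff (hedges e heC) hsub).1 (hCf heC)
    have hmem_s' := (hs'.mem_symmSum_iff (hedges s' hs'C) hsub).1 (hCf hs'C)
    have hgstar : g ∈ colorStar 𝓕 f c k := by tauto
    have hystar : y ∈ colorStar 𝓕 f c k := by tauto
    rw [(mem_colorStar_of_mem_adjFaces hg).1 hgstar, (mem_colorStar_of_mem_adjFaces hy).1 hystar]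

lemma IsFaceSystem.mem_of_isEven_of_subset (hF : G.IsFaceSystem 𝓕)
    (hG : G.IsEssentiallyFourEdgeConnected) (hg : g ∈ adjFaces 𝓕 h) (hs : IsFacePair 𝓕 s g x)
    (he : IsFacePair 𝓕 e h x) {A : Finset E} (hA : G.IsEven A) (hC : G.IsEven C) (hCA : C ⊆ A)
    (heC : e ∈ C) (hsA : s ∈ A) : s ∈ C := by
  obtain ⟨hg𝓕, hhg⟩ := mem_adjFaces.1 hg
  obtain ⟨p, hph, hpg⟩ := exists_mem_of_faceGraph_adj hhg
  obtain ⟨v, hv, hinc⟩ := hF.exists_inc_eq hG he.left_mem hg𝓕 hs.right_mem hhg.ne he.ne hs.ne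
    hph hpg hs.mem_left hs.symm.mem_left he.mem_left he.symm.mem_left
  have hsv : s ∈ G.inc v := by rw [hinc]; simp
  have hev : e ∈ G.inc v := by rw [hinc]; simp
  have heq := hG.isCubic.inter_inc_eq_of_subset hA hC hCA hv heC hev
  exact (mem_inter.1 (heq ▸ mem_inter.2 ⟨hsA, hsv⟩)).1

lemma IsFaceSystem.exists_mem_modifiedCover (hF : G.IsFaceSystem 𝓕)
    (hG : G.IsEssentiallyFourEdgeConnected) (hg : g ∈ adjFaces 𝓕 h) (hx : x ∈ adjFaces 𝓕 h)
    (hy : y ∈ adjFaces 𝓕 h) (hs : IsFacePair 𝓕 s g x) (he : IsFacePair 𝓕 e h x)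
    (hs' : IsFacePair 𝓕 s' x y) (hcx : c x ≠ c y) (hcg : c g = c y) :
    ∃ C ∈ modifiedCover G 𝓕 {h} fun _ => c, s ∈ C ∧ e ∈ C ∧ s' ∈ C := by
  have hsub : colorStar 𝓕 h c (c y) ⊆ 𝓕 := colorStar_subset he.left_mem
  have hedges : ∀ {d f}, d ∈ f → f ∈ 𝓕 → d ∈ G.edges := fun hd hf =>
    (hF.isCDC.isCircuit _ hf).isEven.subset hd
  have hxstar : x ∉ colorStar 𝓕 h c (c y) := mt (mem_colorStar_of_mem_adjFaces hx).1 hcx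
  have hsum : ∀ {d f}, IsFacePair 𝓕 d f x → f ∈ colorStar 𝓕 h c (c y) →
      d ∈ G.symmSum (colorStar 𝓕 h c (c y)) := fun hd hf =>
    (hd.mem_symmSum_iff (hedges hd.mem_left hd.left_mem) hsub).2 fun hiff => hxstar (hiff.1 hf)
  have hA : G.IsEven (G.symmSum (colorStar 𝓕 h c (c y))) :=
    isEven_symmSum fun f hf => (hF.isCDC.isCircuit f (hsub hf)).isEven
  obtain ⟨C, hC, heC⟩ := hA.exists_mem_circuitsIn (hsum he (mem_colorStar.2 (Or.inl rfl)))
  obtain ⟨hCA, hCcirc⟩ := mem_circuitsIn.1 hC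
  refine ⟨C, mem_modifiedCover.2 (Or.inr ⟨h, mem_singleton_self h, c y, hCA, hCcirc⟩), ?_, heC, ?_⟩
  · exact hF.mem_of_isEven_of_subset hG hg hs he hA hCcirc.isEven hCA heC
      (hsum hs ((mem_colorStar_of_mem_adjFaces hg).2 hcg))
  · exact hF.mem_of_isEven_of_subset hG hy hs'.symm he hA hCcirc.isEven hCA heC
      (hsum hs'.symm ((mem_colorStar_of_mem_adjFaces hy).2 rfl))

lemma IsFaceSystem.exists_isInducedPath (hF : G.IsFaceSystem 𝓕)
    (hG : G.IsEssentiallyFourEdgeConnected) (h3 : 3 ≤ G.verts.card) (hh : h ∈ 𝓕)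
    (h4 : 4 ≤ (adjFaces 𝓕 h).card) (hg : g ∈ adjFaces 𝓕 h) :
    ∃ x ∈ adjFaces 𝓕 h, ∃ y ∈ adjFaces 𝓕 h, IsInducedPath faceGraph g x y := by
  obtain ⟨x, hx⟩ := card_pos.1 (two_pos.trans_eq
    (hF.card_adjFaces_filter_adj hG h3 hh hg).symm)
  obtain ⟨hx, hgx⟩ := mem_filter.1 hx
  obtain ⟨y, hy, hyg⟩ := exists_mem_ne
    (one_lt_two.trans_eq (hF.card_adjFaces_filter_adj hG h3 hh hx).symm) g
  obtain ⟨hy, hxy⟩ := mem_filter.1 hy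
  exact ⟨x, hx, y, hy, hgx, hxy, hyg.symm,
    hF.not_adj_of_four_le_card_adjFaces hG h3 hh h4 hg hx hy hgx hxy⟩

lemma IsFaceSystem.exists_isSeparated_isInducedPath (hF : G.IsFaceSystem 𝓕)
    (hG : G.IsEssentiallyFourEdgeConnected) (h3 : 3 ≤ G.verts.card) (hh : h ∈ 𝓕)
    (h4 : 4 ≤ (adjFaces 𝓕 h).card) :
    ∃ I ⊆ adjFaces 𝓕 h, ∃ x y : Finset E → Finset E, (adjFaces 𝓕 h).card ≤ I.card * 63 ∧
      (∀ g ∈ I, {g, x g, y g} ⊆ adjFaces 𝓕 h) ∧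
      (∀ g ∈ I, IsInducedPath faceGraph g (x g) (y g)) ∧
      (I : Set (Finset E)).Pairwise
        fun g g' => IsSeparated faceGraph {g, x g, y g} {g', x g', y g'} := by
  choose! x hx y hy hpath using fun g (hg : g ∈ adjFaces 𝓕 h) =>
    hF.exists_isInducedPath hG h3 hh h4 hg
  have hball : ∀ g ∈ adjFaces 𝓕 h,
      {g, x g, y g} ⊆ ballIn faceGraph (adjFaces 𝓕 h) g 2 := by
    intro g hg
    have hxball := mem_ballIn_one_of_adj (hx g hg) (hpath g hg).adj_left
    have hyball := mem_ballIn_one_of_adj (hy g hg) (hpath g hg).adj_right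
    exact insert_subset self_mem_ballIn (insert_subset (ballIn_mono one_le_two hxball)
      (singleton_subset_iff.2 (mem_ballIn_add hxball hyball)))
  obtain ⟨I, hI, hsep, hcard⟩ := exists_subset_pairwise_isSeparated
    (fun g hg => (hF.card_adjFaces_filter_adj hG h3 hh hg).le) (fun g => mem_insert_self g _)
    hball
  exact ⟨I, hI, x, y, hcard, fun g hg => (hball g (hI hg)).trans (ballIn_subset (hI hg)),
    fun g hg => hpath g (hI hg), hsep⟩

lemma IsFaceSystem.exists_card_adjFaces_le_mul (hF : G.IsFaceSystem 𝓕)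
    (hG : G.IsEssentiallyFourEdgeConnected) (h3 : 3 ≤ G.verts.card) (hh : h ∈ 𝓕)
    (h4 : 4 ≤ (adjFaces 𝓕 h).card) : ∃ k, (adjFaces 𝓕 h).card ≤ k * 63 ∧ 2 ^ k ≤ G.nu := by
  obtain ⟨I, hI, x, y, hcard, hN, hpath, hsep⟩ :=
    hF.exists_isSeparated_isInducedPath hG h3 hh h4
  choose c hc hJ using exists_isColoringOn_of_isInducedPath
    (fun g hg => (hF.card_adjFaces_filter_adj hG h3 hh hg).le) hN hpath hsep
  refine ⟨I.card, hcard, two_pow_card_le_nu (𝒟 := fun J => modifiedCover G 𝓕 {h} fun _ => c J)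
    (fun J _ => ?_) (fun g 𝒞 => ∃ s e s', IsFacePair 𝓕 s g (x g) ∧ IsFacePair 𝓕 e h (x g) ∧
      IsFacePair 𝓕 s' (x g) (y g) ∧ ∃ C ∈ 𝒞, s ∈ C ∧ e ∈ C ∧ s' ∈ C) fun J _ g hg => ?_⟩
  · refine hF.isCDC.isCDC_modifiedCover hG.isCubic (singleton_subset_iff.2 hh)
      (by simp) fun f hf => ?_
    rw [mem_singleton.1 hf]
    exact hc J
  · have hx : x g ∈ adjFaces 𝓕 h := hN g hg (by simp)
    have hy : y g ∈ adjFaces 𝓕 h := hN g hg (by simp)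
    rw [← hJ J g hg]
    refine ⟨fun ⟨s, e, s', hs, he, hs', C, hC, hsC, heC, hs'C⟩ =>
      color_eq_of_mem_modifiedCover (hI hg) hx hy hs he hs' hC hsC heC hs'C, fun hcg => ?_⟩
    obtain ⟨hg𝓕, -⟩ := mem_adjFaces.1 (hI hg)
    obtain ⟨hx𝓕, hhx⟩ := mem_adjFaces.1 hx
    obtain ⟨hy𝓕, -⟩ := mem_adjFaces.1 hy
    have hgx := (hpath g hg).adj_left
    have hxy := (hpath g hg).adj_right
    obtain ⟨s, hs⟩ := hF.isCDC.exists_isFacePair_of_adj hg𝓕 hx𝓕 hgx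
    obtain ⟨e, he⟩ := hF.isCDC.exists_isFacePair_of_adj hh hx𝓕 hhx
    obtain ⟨s', hs'⟩ := hF.isCDC.exists_isFacePair_of_adj hx𝓕 hy𝓕 hxy
    exact ⟨s, e, s', hs, he, hs', hF.exists_mem_modifiedCover hG (hI hg) hx hy hs he hs'
      (hc J _ hx _ hy hxy) hcg⟩

end LargeFace

section Counting

variable {α E : Type*} [DecidableEq E] {G : IncGraph α E} {𝓕 : Finset (Finset E)}

lemma IsCubic.two_mul_card_edges (hG : G.IsCubic) : 2 * G.edges.card = 3 * G.verts.card := by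
  have hvertex : ∀ v ∈ G.verts, (G.edges.bipartiteAbove (fun v e => e ∈ G.inc v) v).card = 3 := by
    intro v hv
    rw [bipartiteAbove, filter_mem_eq_inter, inter_eq_right.2 (inc_subset_edges hv),
      hG.card_inc v hv]
  rw [mul_comm, mul_comm 3, card_mul_eq_card_mul _ hvertex hG.card_ends]

lemma IsCDC.sum_card (h𝓕 : G.IsCDC 𝓕) : ∑ f ∈ 𝓕, f.card = 2 * G.edges.card := by
  have hcount := sum_card_bipartiteAbove_eq_sum_card_bipartiteBelow (s := 𝓕) (t := G.edges)
    fun f e => e ∈ f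
  have hface : ∀ f ∈ 𝓕, (G.edges.bipartiteAbove (fun f e => e ∈ f) f).card = f.card := by
    intro f hf
    rw [bipartiteAbove, filter_mem_eq_inter,
      inter_eq_right.2 (h𝓕.isCircuit f hf).isEven.subset]
  rw [← sum_congr rfl hface, hcount, mul_comm]
  exact sum_const_nat h𝓕.card_filter_mem

-- Two edge sets with the same face parities differ by a cut, and there are at most
-- `2 ^ G.verts.card` cuts.
lemma IsFaceSystem.card_filter_parity_le (hF : G.IsFaceSystem 𝓕) (p : Finset (Finset E)) :
    (G.edges.powerset.filter fun D => (𝓕.filter fun f => Even (D ∩ f).card) = p).card ≤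
      2 ^ G.verts.card := by
  classical
  set fibre := G.edges.powerset.filter fun D => (𝓕.filter fun f => Even (D ∩ f).card) = p
  rcases fibre.eq_empty_or_nonempty with hempty | ⟨D₀, hD₀⟩
  · simp [hempty]
  obtain ⟨hD₀E, hD₀p⟩ := mem_filter.1 hD₀
  rw [mem_powerset] at hD₀E
  have hmaps : Set.MapsTo (fun D => symmDiff D D₀) fibre (G.verts.powerset.image G.cut) := by
    intro D hD
    obtain ⟨hDE, hDp⟩ := mem_filter.1 hD
    rw [mem_powerset] at hDE
    obtain ⟨S, hS, hcut⟩ := hF.exists_eq_cut (symmDiff D D₀)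
      (symmDiff_subset_union.trans (union_subset hDE hD₀E)) fun f hf => by
        have hparity := Finset.ext_iff.1 (hDp.trans hD₀p.symm) f
        simp only [mem_filter, hf, true_and] at hparity
        rwa [← inf_eq_inter, inf_symmDiff_distrib_right, even_card_symmDiff_iff]
    exact mem_coe.2 (mem_image.2 ⟨S, mem_powerset.2 hS, hcut.symm⟩)
  calc fibre.card ≤ (G.verts.powerset.image G.cut).card :=
        card_le_card_of_injOn _ hmaps (symmDiff_left_injective D₀).injOn
    _ ≤ G.verts.powerset.card := card_image_le
    _ = 2 ^ G.verts.card := card_powerset _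

lemma IsFaceSystem.card_edges_le (hF : G.IsFaceSystem 𝓕) :
    G.edges.card ≤ G.verts.card + 𝓕.card := by
  have hcard := card_le_mul_card_image_of_maps_to
    (fun D _ => mem_powerset.2 (filter_subset (fun f => Even (D ∩ f).card) 𝓕)) _
    fun p _ => hF.card_filter_parity_le p
  rw [card_powerset, card_powerset, ← pow_add] at hcard
  exact (Nat.pow_le_pow_iff_right one_lt_two).1 hcard

lemma IsFaceSystem.card_verts_le_mul (hF : G.IsFaceSystem 𝓕) (hG : G.IsCubic) :
    G.verts.card ≤ 14 * (𝓕.filter fun f => (adjFaces 𝓕 f).card ≤ 6).card := by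
  have hlarge : (𝓕.filter fun f => ¬ (adjFaces 𝓕 f).card ≤ 6).card * 7 ≤ ∑ f ∈ 𝓕, f.card := by
    calc (𝓕.filter fun f => ¬ (adjFaces 𝓕 f).card ≤ 6).card * 7
        ≤ ∑ f ∈ 𝓕.filter fun f => ¬ (adjFaces 𝓕 f).card ≤ 6, f.card := by
          refine card_nsmul_le_sum _ card 7 fun f hf => ?_
          obtain ⟨hf, hf7⟩ := mem_filter.1 hf
          have := hF.isCDC.card_adjFaces_le hf
          omega
      _ ≤ ∑ f ∈ 𝓕, f.card := sum_le_sum_of_subset (filter_subset _ _)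
  have hsplit := card_filter_add_card_filter_not (s := 𝓕) fun f => (adjFaces 𝓕 f).card ≤ 6
  have hedges := hG.two_mul_card_edges
  have hsum := hF.isCDC.sum_card
  have heuler := hF.card_edges_le
  omega

end Counting

section LowerBound

variable {α E : Type*} [DecidableEq E] {G : IncGraph α E} {𝓕 : Finset (Finset E)}

lemma card_closedNhd_le (f : Finset E) : (closedNhd 𝓕 f).card ≤ (adjFaces 𝓕 f).card + 1 :=
  card_insert_le _ _

lemma mem_closedNhd_comm {f g : Finset E} (hf : f ∈ 𝓕) (h : g ∈ closedNhd 𝓕 f) :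
    f ∈ closedNhd 𝓕 g := by
  rcases mem_insert.1 h with rfl | hg
  · exact self_mem_closedNhd
  · exact mem_insert_of_mem (mem_adjFaces.2 ⟨hf, (mem_adjFaces.1 hg).2.symm⟩)

lemma exists_subset_pairwiseDisjoint_closedNhd {T : Finset (Finset E)} {d D : ℕ} (hT : T ⊆ 𝓕)
    (hd : ∀ f ∈ T, (adjFaces 𝓕 f).card ≤ d) (hD : ∀ f ∈ 𝓕, (adjFaces 𝓕 f).card ≤ D) :
    ∃ I ⊆ T, (I : Set (Finset E)).PairwiseDisjoint (closedNhd 𝓕) ∧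
      T.card ≤ I.card * ((d + 1) * (D + 1)) := by
  have hmeet : ∀ f ∈ T, (T.filter fun f' => ¬ Disjoint (closedNhd 𝓕 f) (closedNhd 𝓕 f')).card ≤
      (d + 1) * (D + 1) := by
    intro f hf
    have hsub : (T.filter fun f' => ¬ Disjoint (closedNhd 𝓕 f) (closedNhd 𝓕 f')) ⊆
        (closedNhd 𝓕 f).biUnion (closedNhd 𝓕) := by
      intro f' hf'
      obtain ⟨hf', hmeet⟩ := mem_filter.1 hf'
      obtain ⟨g, hg, hg'⟩ := not_disjoint_iff.1 hmeet
      exact mem_biUnion.2 ⟨g, hg, mem_closedNhd_comm (hT hf') hg'⟩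
    calc _ ≤ ((closedNhd 𝓕 f).biUnion (closedNhd 𝓕)).card := card_le_card hsub
      _ ≤ (closedNhd 𝓕 f).card * (D + 1) := card_biUnion_le_card_mul _ _ _ fun g hg =>
          (card_closedNhd_le g).trans (Nat.succ_le_succ (hD g (closedNhd_subset (hT hf) hg)))
      _ ≤ (d + 1) * (D + 1) := Nat.mul_le_mul_right _
          ((card_closedNhd_le f).trans (Nat.succ_le_succ (hd f hf)))
  obtain ⟨I, hI, hpair, hcard⟩ := exists_subset_pairwise_not_and_card_le_card_mul
    (R := fun f f' => ¬ Disjoint (closedNhd 𝓕 f) (closedNhd 𝓕 f'))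
    (fun f => not_disjoint_iff.2 ⟨f, self_mem_closedNhd, self_mem_closedNhd⟩)
    (fun f f' h h' => h h'.symm) hmeet
  exact ⟨I, hI, hpair.imp fun _ _ => not_not.1, hcard⟩

lemma two_rpow_le_nu {t : ℝ} {k : ℕ} (ht : t ≤ k) (hk : 2 ^ k ≤ G.nu) : (2 : ℝ) ^ t ≤ G.nu :=
  calc (2 : ℝ) ^ t ≤ (2 : ℝ) ^ (k : ℝ) := Real.rpow_le_rpow_of_exponent_le one_le_two ht
    _ = (2 : ℝ) ^ k := Real.rpow_natCast _ _
    _ ≤ G.nu := mod_cast hk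

lemma IsFaceSystem.two_le_nu (hF : G.IsFaceSystem 𝓕) (hG : G.IsEssentiallyFourEdgeConnected)
    (h3 : 3 ≤ G.verts.card) : 2 ≤ G.nu := by
  have hsmall := hF.card_verts_le_mul hG.isCubic
  obtain ⟨f, hf⟩ := card_pos.1 (show 0 < (𝓕.filter fun f => (adjFaces 𝓕 f).card ≤ 6).card by omega)
  simpa using hF.two_pow_card_le_nu_of_pairwiseDisjoint hG h3 (I := {f})
    (singleton_subset_iff.2 (mem_filter.1 hf).1) (by simp)

lemma IsFaceSystem.exists_card_verts_le_mul (hF : G.IsFaceSystem 𝓕)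
    (hG : G.IsEssentiallyFourEdgeConnected) (h3 : 3 ≤ G.verts.card) {D : ℕ}
    (hD : ∀ f ∈ 𝓕, (adjFaces 𝓕 f).card ≤ D) :
    ∃ k, G.verts.card ≤ 98 * k * (D + 1) ∧ 2 ^ k ≤ G.nu := by
  obtain ⟨I, hI, hdisj, hcard⟩ := exists_subset_pairwiseDisjoint_closedNhd
    (filter_subset (fun f => (adjFaces 𝓕 f).card ≤ 6) 𝓕) (fun f hf => (mem_filter.1 hf).2) hD
  refine ⟨I.card, ?_, hF.two_pow_card_le_nu_of_pairwiseDisjoint hG h3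
    (hI.trans (filter_subset _ _)) hdisj⟩
  calc G.verts.card ≤ 14 * (𝓕.filter fun f => (adjFaces 𝓕 f).card ≤ 6).card :=
        hF.card_verts_le_mul hG.isCubic
    _ ≤ 14 * (I.card * ((6 + 1) * (D + 1))) := Nat.mul_le_mul_left _ hcard
    _ = 98 * I.card * (D + 1) := by ring

-- With `r = √n`, a face with at least `0.63 * r` neighbours gives `r / 100` independent choices by
-- itself; otherwise the small faces give `n / (98 * 0.64 * r) ≥ r / 64` of them.
lemma IsFaceSystem.two_rpow_le_nu_of_isEssentiallyFourEdgeConnected (hF : G.IsFaceSystem 𝓕)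
    (hG : G.IsEssentiallyFourEdgeConnected) (h3 : 3 ≤ G.verts.card) :
    (2 : ℝ) ^ (√G.verts.card / 100) ≤ G.nu := by
  set r : ℝ := √G.verts.card
  have hr : r * r = G.verts.card := Real.mul_self_sqrt (Nat.cast_nonneg _)
  rcases le_or_gt r 100 with hr100 | hr100
  · exact two_rpow_le_nu (k := 1) (by push_cast; linarith) (by simpa using hF.two_le_nu hG h3)
  by_cases hlarge : ∃ h ∈ 𝓕, 0.63 * r ≤ (adjFaces 𝓕 h).card
  · obtain ⟨h, hh, hlarge⟩ := hlarge
    have h4 : 4 ≤ (adjFaces 𝓕 h).card := by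
      rw [← Nat.cast_le (α := ℝ)]
      push_cast
      linarith
    obtain ⟨k, hk, hnu⟩ := hF.exists_card_adjFaces_le_mul hG h3 hh h4
    refine two_rpow_le_nu ?_ hnu
    have hk' : ((adjFaces 𝓕 h).card : ℝ) ≤ k * 63 := mod_cast hk
    linarith
  · push Not at hlarge
    obtain ⟨k, hk, hnu⟩ := hF.exists_card_verts_le_mul hG h3
      fun f hf => Nat.le_floor (hlarge f hf).le
    refine two_rpow_le_nu ?_ hnu
    have hk' : (G.verts.card : ℝ) ≤ 98 * k * (⌊0.63 * r⌋₊ + 1) := mod_cast hk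
    have hfloor : (⌊0.63 * r⌋₊ : ℝ) ≤ 0.63 * r := Nat.floor_le (by linarith)
    have hmul : r * r ≤ 64 * k * r :=
      calc r * r ≤ 98 * k * (⌊0.63 * r⌋₊ + 1) := hr.trans_le hk'
        _ ≤ 98 * k * (0.64 * r) := by gcongr; linarith
        _ ≤ 64 * k * r := by nlinarith [Nat.cast_nonneg (α := ℝ) k]
    have hrk : r ≤ 64 * k := le_of_mul_le_mul_right hmul (by linarith)
    linarith

lemma IsFaceSystem.two_rpow_le_nu_of_forall_not_isNontrivialThreeCut [DecidableEq α]
    (hF : G.IsFaceSystem 𝓕) (hG : G.IsCubic) (hc : G.IsTwoEdgeConnected)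
    (h4 : 4 ≤ G.verts.card) (hno : ∀ S, ¬ G.IsNontrivialThreeCut S) :
    (2 : ℝ) ^ (√G.verts.card / 100) ≤ G.nu := by
  by_cases h2 : ∃ S ⊆ G.verts, (G.cut S).card = 2
  · obtain ⟨S, hS, h2⟩ := h2
    have hle : G.verts.card ≤ 4 := not_lt.1 fun h5 => hc.card_cut_ne_two hG hno h5 hS h2
    exact (two_rpow_sqrt_div_le_two (by omega)).trans
      (mod_cast hF.isCDC.two_le_nu_of_card_cut_eq_two hG hS h2)
  · push Not at h2
    exact hF.two_rpow_le_nu_of_isEssentiallyFourEdgeConnected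
      ⟨hG, hc, h2, fun S hS h3 => hG.exists_cut_eq_inc hno hS h3⟩ (by omega)

lemma IsFaceSystem.two_rpow_le_nu (hF : G.IsFaceSystem 𝓕) (hG : G.IsCubic)
    (hc : G.IsTwoEdgeConnected) (h4 : 4 ≤ G.verts.card) :
    (2 : ℝ) ^ (√G.verts.card / 100) ≤ G.nu := by
  classical
  induction hn : G.verts.card using Nat.strong_induction_on generalizing G 𝓕 with
  | _ n ih =>
  subst hn
  by_cases hno : ∀ S, ¬ G.IsNontrivialThreeCut S
  · exact hF.two_rpow_le_nu_of_forall_not_isNontrivialThreeCut hG hc h4 hno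
  push Not at hno
  obtain ⟨S, hS⟩ := hno
  have hside : ∀ {S}, G.IsNontrivialThreeCut S → ∀ v₀ ∈ G.verts \ S,
      (2 : ℝ) ^ (√(S.card + 1 : ℕ) / 100) ≤ (G.contract S v₀).nu := by
    intro S hS v₀ hv₀
    obtain ⟨hv₀, hv₀S⟩ := mem_sdiff.1 hv₀
    obtain ⟨𝓕', hF'⟩ := hF.exists_contract hG hc hS.subset hv₀S hS.card_cut
    have hcard := card_verts_contract (G := G) hv₀S
    have h3 := hS.three_le_card hG
    have h2 := hS.two_le_card_sdiff
    have hsum := card_sdiff_add_card_eq_card hS.subset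
    exact ih _ (by omega) hF' (hG.contract hS.subset hv₀S hS.card_cut)
      (hc.contract hG hS.subset hv₀S hv₀ hS.card_cut) (by omega) hcard
  obtain ⟨u₀, hu₀⟩ := card_pos.1 (two_pos.trans_le hS.two_le_card)
  obtain ⟨v₀, hv₀⟩ := card_pos.1 (two_pos.trans_le hS.two_le_card_sdiff)
  have hsum := card_sdiff_add_card_eq_card hS.subset
  calc (2 : ℝ) ^ (√G.verts.card / 100)
      ≤ 2 ^ (√(S.card + 1 : ℕ) / 100) * 2 ^ (√((G.verts \ S).card + 1 : ℕ) / 100) :=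
        two_rpow_sqrt_div_le_mul (by omega)
    _ ≤ (G.contract S v₀).nu * (G.contract (G.verts \ S) u₀).nu := by
        gcongr
        · exact hside hS v₀ hv₀
        · exact hside (hS.sdiff hG) u₀ (by simp [hu₀, hS.subset hu₀])
    _ ≤ G.nu := mod_cast (hG.isThreeSum_contract hS.subset hu₀ (mem_sdiff.1 hv₀).2
        hS.card_cut).nu_mul_nu_le

end LowerBound

end IncGraph

section LinearAlgebra

variable {K m n l : Type*} [Field K] [Fintype n]

lemma finrank_ker_mulVecLin_le_one (M : Matrix m n K)
    (hM : ∀ x : n → K, M.mulVec x = 0 → ∃ c, x = fun _ => c) :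
    Module.finrank K (LinearMap.ker M.mulVecLin) ≤ 1 := by
  have hle : LinearMap.ker M.mulVecLin ≤ K ∙ (fun _ => 1 : n → K) := by
    intro x hx
    obtain ⟨c, rfl⟩ := hM x (by simpa using hx)
    exact Submodule.mem_span_singleton.2 ⟨c, by ext; simp⟩
  calc Module.finrank K (LinearMap.ker M.mulVecLin)
      ≤ Module.finrank K (K ∙ (fun _ => 1 : n → K)) := Submodule.finrank_mono hle
    _ ≤ 1 := by simpa using finrank_span_le_card (R := K) {(fun _ => 1 : n → K)}

lemma exists_mulVec_eq_of_mulVec_eq_zero [Fintype m] [Fintype l] (M : Matrix m n K)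
    (N : Matrix n l K) (hMN : M * N = 0)
    (hM : ∀ x : m → K, M.transpose.mulVec x = 0 → ∃ c, x = fun _ => c)
    (hN : ∀ x : l → K, N.mulVec x = 0 → ∃ c, x = fun _ => c)
    (hcard : Fintype.card n + 2 ≤ Fintype.card l + Fintype.card m) {x : n → K}
    (hx : M.mulVec x = 0) : ∃ s, N.mulVec s = x := by
  have hkerM := finrank_ker_mulVecLin_le_one M.transpose hM
  have hkerN := finrank_ker_mulVecLin_le_one N hN
  have hdimM' := LinearMap.finrank_range_add_finrank_ker M.transpose.mulVecLin
  have hdimN := LinearMap.finrank_range_add_finrank_ker N.mulVecLin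
  have hdimM := LinearMap.finrank_range_add_finrank_ker M.mulVecLin
  rw [Module.finrank_fintype_fun_eq_card] at hdimM' hdimN hdimM
  have hrank : Module.finrank K (LinearMap.range M.transpose.mulVecLin) =
      Module.finrank K (LinearMap.range M.mulVecLin) := Matrix.rank_transpose M
  have hle : LinearMap.range N.mulVecLin ≤ LinearMap.ker M.mulVecLin := by
    rintro _ ⟨s, rfl⟩
    simp [Matrix.mulVec_mulVec, hMN]
  have heq := Submodule.eq_of_le_of_finrank_le hle (by omega)
  have hmem : x ∈ LinearMap.range N.mulVecLin := heq ▸ LinearMap.mem_ker.2 hx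
  exact hmem

end LinearAlgebra

section Transfer

variable {V : Type*} {G : SimpleGraph V}

lemma apply_eq_of_reachable {β : Type*} {f : V → β} (hf : ∀ u w, G.Adj u w → f u = f w)
    {u w : V} (h : G.Reachable u w) : f u = f w := by
  obtain ⟨p⟩ := h
  induction p with
  | nil => rfl
  | cons hadj _ ih => exact (hf _ _ hadj).trans ih

variable [Fintype V] [DecidableEq V]

/-- A simple graph on a finite type, with its edges identified with unordered pairs. -/
noncomputable def IncGraph.ofSimpleGraph (G : SimpleGraph V) : IncGraph V (Sym2 V) where
  verts := univ
  inc v := (Set.toFinite (G.incidenceSet v)).toFinset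

open IncGraph

omit [DecidableEq V] in
lemma mem_verts_ofSimpleGraph (v : V) : v ∈ (ofSimpleGraph G).verts := mem_univ v

omit [DecidableEq V] in
lemma mem_inc_ofSimpleGraph {v : V} {e : Sym2 V} :
    e ∈ (ofSimpleGraph G).inc v ↔ e ∈ G.edgeSet ∧ v ∈ e :=
  Set.Finite.mem_toFinset _

lemma mem_edges_ofSimpleGraph {e : Sym2 V} : e ∈ (ofSimpleGraph G).edges ↔ e ∈ G.edgeSet := by
  rw [mem_edges]
  refine ⟨fun ⟨v, _, hv⟩ => (mem_inc_ofSimpleGraph.1 hv).1, fun he => ?_⟩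
  exact ⟨_, mem_verts_ofSimpleGraph _, mem_inc_ofSimpleGraph.2 ⟨he, e.out_fst_mem⟩⟩

lemma filter_mem_inc_ofSimpleGraph {a b : V} (h : G.Adj a b) (S : Finset V) :
    S.filter (fun v => s(a, b) ∈ (ofSimpleGraph G).inc v) = ({a, b} : Finset V).filter (· ∈ S) := by
  ext v
  have he : s(a, b) ∈ G.edgeSet := h
  simp only [mem_filter, mem_inc_ofSimpleGraph, he, true_and, Sym2.mem_iff, mem_insert,
    mem_singleton, and_comm]

lemma isCubic_ofSimpleGraph (hG : IsCubic G) : (ofSimpleGraph G).IsCubic := by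
  refine ⟨fun v _ => ?_, fun e he => ?_⟩
  · rw [← hG v, ← Set.ncard_coe_finset, ofSimpleGraph, Set.Finite.coe_toFinset]
    exact Nat.card_congr (G.incidenceSetEquivNeighborSet v)
  · induction e with
    | _ a b =>
      have h : G.Adj a b := mem_edges_ofSimpleGraph.1 he
      rw [filter_mem_inc_ofSimpleGraph h,
        filter_true_of_mem fun v _ => mem_verts_ofSimpleGraph v, card_pair h.ne]

lemma mem_cut_ofSimpleGraph {a b : V} (h : G.Adj a b) (S : Finset V) :
    s(a, b) ∈ (ofSimpleGraph G).cut S ↔ ¬ (a ∈ S ↔ b ∈ S) := by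
  have he : s(a, b) ∈ (ofSimpleGraph G).edges := mem_edges_ofSimpleGraph.2 h
  have h2 : ¬ Odd 2 := by decide
  rw [cut, mem_filter, filter_mem_inc_ofSimpleGraph h, filter_insert, filter_singleton]
  by_cases ha : a ∈ S <;> by_cases hb : b ∈ S <;> simp [ha, hb, he, h.ne, h2]

lemma isTwoEdgeConnected_ofSimpleGraph (hconn : G.Connected)
    (hbridgeless : ∀ e : Sym2 V, ¬ G.IsBridge e) : (ofSimpleGraph G).IsTwoEdgeConnected := by
  intro S hS ⟨u, hu⟩ hne
  obtain ⟨w, -, hw⟩ := exists_of_ssubset (hS.ssubset_of_ne hne)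
  have : Nonempty (Sym2 V) := ⟨s(u, u)⟩
  by_contra! hlt
  obtain ⟨e, he⟩ := card_le_one_iff_subset_singleton.1 (Nat.le_of_lt_succ hlt)
  have hdel : (G.deleteEdges {e}).Connected := by
    induction e with
    | _ a b => exact hconn.connected_delete_edge_of_not_isBridge (hbridgeless _)
  have hside : ∀ a b, (G.deleteEdges {e}).Adj a b → (a ∈ S) = (b ∈ S) := by
    intro a b hab
    rw [SimpleGraph.deleteEdges_adj] at hab
    by_contra hcross
    exact hab.2 (mem_singleton.1 (he ((mem_cut_ofSimpleGraph hab.1 S).2 (mt propext hcross))))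
  exact hw ((apply_eq_of_reachable hside (hdel.preconnected u w)).mp hu)

end Transfer

section Faces

lemma even_card_filter_not_iff_apply {β : Type*} (σ : Equiv.Perm β) {T : Finset β}
    (hT : ∀ d, σ d ∈ T ↔ d ∈ T) (p : β → Prop) [DecidablePred p] :
    Even (T.filter fun d => ¬ (p d ↔ p (σ d))).card := by
  classical
  have hsymm : (T.filter fun d => ¬ (p d ↔ p (σ d))) =
      symmDiff (T.filter p) (T.filter fun d => p (σ d)) := by
    ext d
    simp only [mem_filter, mem_symmDiff]
    tauto
  have hcard : (T.filter fun d => p (σ d)).card = (T.filter p).card :=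
    card_equiv σ fun d => by simp [hT]
  rw [hsymm, even_card_symmDiff_iff, hcard]

lemma filter_not_eq_iff_eq {β : Type*} [Fintype β] [DecidableEq β] {a b : β} (h : a ≠ b) :
    (univ.filter fun x => ¬ (a = x ↔ b = x)) = {a, b} := by
  ext x
  rw [mem_filter_univ, mem_insert, mem_singleton, eq_comm (a := x), eq_comm (a := x)]
  by_cases ha : a = x
  · simp [ha, ha ▸ h.symm]
  · simp [ha]

variable {V : Type*} {G : SimpleGraph V} (rs : RotationSystem G)

/-- The face lying along a dart. -/
def RotationSystem.face (d : G.Dart) : Quotient rs.faceSetoid := Quotient.mk rs.faceSetoid d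

lemma face_symm (d : G.Dart) : rs.face d.symm = rs.face (rs.σ d) := by
  refine Quotient.sound (s := rs.faceSetoid) ⟨1, ?_⟩
  change rs.σ d.symm.symm = rs.σ d
  rw [SimpleGraph.Dart.symm_symm]

lemma face_surjective : Function.Surjective rs.face := Quotient.exists_rep

variable [Fintype V]

open scoped Classical in
/-- The edges having the face `x` on exactly one side. An edge with `x` on both sides is left out,
so that the boundary is an even set. -/
noncomputable def RotationSystem.boundary (x : Quotient rs.faceSetoid) : Finset (Sym2 V) :=
  univ.filter fun e => ∃ d : G.Dart, d.edge = e ∧ rs.face d = x ∧ rs.face d.symm ≠ x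

variable {rs} {x : Quotient rs.faceSetoid}

lemma edge_mem_boundary (d : G.Dart) :
    d.edge ∈ rs.boundary x ↔ ¬ (rs.face d = x ↔ rs.face d.symm = x) := by
  simp only [RotationSystem.boundary, mem_filter_univ]
  constructor
  · rintro ⟨d', hd', hx, hx'⟩
    rcases (SimpleGraph.dart_edge_eq_iff d' d).1 hd' with rfl | rfl
    · tauto
    · rw [SimpleGraph.Dart.symm_symm] at hx'
      tauto
  · intro hside
    by_cases hx : rs.face d = x
    · exact ⟨d, rfl, hx, by tauto⟩
    · exact ⟨d.symm, d.edge_symm, by tauto, by rwa [SimpleGraph.Dart.symm_symm]⟩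

omit [Fintype V] in
lemma exists_dart_edge_eq {e : Sym2 V} (he : e ∈ G.edgeSet) : ∃ d : G.Dart, d.edge = e := by
  induction e with
  | _ a b => exact ⟨⟨(a, b), he⟩, rfl⟩

variable [DecidableEq V]

open IncGraph

lemma boundary_subset_edges : rs.boundary x ⊆ (ofSimpleGraph G).edges := by
  intro e he
  simp only [RotationSystem.boundary, mem_filter_univ] at he
  obtain ⟨d, rfl, -⟩ := he
  exact mem_edges_ofSimpleGraph.2 d.edge_mem

-- The darts at `v` are permuted by `rs.σ`, and `d.edge` lies on the boundary of `x` iff exactly one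
-- of `d` and `rs.σ d` has `x` along it.
lemma isEven_boundary : (ofSimpleGraph G).IsEven (rs.boundary x) := by
  classical
  refine ⟨boundary_subset_edges, fun v _ => ?_⟩
  have hchange := even_card_filter_not_iff_apply rs.σ
    (T := univ.filter fun d : G.Dart => d.fst = v) (fun d => by simp [rs.fst_eq])
    fun d => rs.face d = x
  convert hchange
  refine (card_bij (fun d _ => d.edge) ?_ ?_ ?_).symm
  · intro d hd
    obtain ⟨hfst, hside⟩ := mem_filter.1 hd
    obtain rfl := (mem_filter.1 hfst).2
    rw [mem_inter, edge_mem_boundary, face_symm, mem_inc_ofSimpleGraph]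
    exact ⟨hside, d.edge_mem, Sym2.mem_mk_left _ _⟩
  · intro a ha b hb hab
    have hfst : a.fst = b.fst :=
      (mem_filter.1 (mem_filter.1 ha).1).2.trans (mem_filter.1 (mem_filter.1 hb).1).2.symm
    refine ((SimpleGraph.dart_edge_eq_iff a b).1 hab).resolve_right ?_
    rintro rfl
    exact b.adj.ne hfst.symm
  · intro e he
    rw [mem_inter, mem_inc_ofSimpleGraph] at he
    obtain ⟨hx, hvw, w, rfl⟩ := he
    refine ⟨⟨(v, w), hvw⟩, ?_, rfl⟩
    rw [mem_filter, mem_filter_univ, ← face_symm, ← edge_mem_boundary]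
    exact ⟨rfl, hx⟩

variable (rs G) in
/-- The incidence matrix over `𝔽₂` of the faces against the edges on their boundary. -/
noncomputable def RotationSystem.faceEdgeMatrix :
    Matrix (Quotient rs.faceSetoid) G.edgeSet (ZMod 2) :=
  fun x e => if e.1 ∈ rs.boundary x then 1 else 0

variable (G) in
/-- The incidence matrix over `𝔽₂` of the edges against their ends. -/
def edgeVertexMatrix : Matrix G.edgeSet V (ZMod 2) := fun e v => if v ∈ e.1 then 1 else 0

lemma edgeVertexMatrix_mulVec (s : V → ZMod 2) {a b : V} (h : G.Adj a b) :
    (edgeVertexMatrix G).mulVec s ⟨s(a, b), h⟩ = s a + s b := by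
  have hends : (univ.filter fun v => v = a ∨ v = b) = {a, b} := by ext; simp
  simp only [Matrix.mulVec, dotProduct, edgeVertexMatrix, ite_mul, one_mul, zero_mul, Sym2.mem_iff]
  rw [← sum_filter, hends, sum_pair h.ne]

lemma faceEdgeMatrix_transpose_mulVec [Fintype (Quotient rs.faceSetoid)]
    (y : Quotient rs.faceSetoid → ZMod 2) (d : G.Dart) :
    rs.faceEdgeMatrix.transpose.mulVec y ⟨d.edge, d.edge_mem⟩ =
      y (rs.face d) + y (rs.face d.symm) := by
  classical
  simp only [Matrix.mulVec, dotProduct, Matrix.transpose_apply, RotationSystem.faceEdgeMatrix,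
    ite_mul, one_mul, zero_mul, edge_mem_boundary]
  rw [← sum_filter]
  by_cases hface : rs.face d = rs.face d.symm
  · simp [hface, CharTwo.add_self_eq_zero]
  · rw [filter_not_eq_iff_eq hface, sum_pair hface]

lemma sum_edgeSet_ite_mem_eq_zero [Fintype G.edgeSet] {P : Finset (Sym2 V)}
    (hP : P ⊆ (ofSimpleGraph G).edges) (heven : Even P.card) :
    ∑ e : G.edgeSet, (if e.1 ∈ P then (1 : ZMod 2) else 0) = 0 := by
  have hcard : (univ.filter fun e : G.edgeSet => e.1 ∈ P).card = P.card :=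
    card_bij (fun e _ => e.1) (fun e he => (mem_filter.1 he).2)
      (fun _ _ _ _ => Subtype.ext)
      fun e he => ⟨⟨e, mem_edges_ofSimpleGraph.1 (hP he)⟩, (mem_filter_univ _).2 he, rfl⟩
  rw [sum_boole, hcard]
  exact ZMod.natCast_eq_zero_iff_even.2 heven

lemma faceEdgeMatrix_mulVec_eq_zero [Fintype G.edgeSet] {D : Finset (Sym2 V)}
    (heven : ∀ x, Even (D ∩ rs.boundary x).card) :
    rs.faceEdgeMatrix.mulVec (fun e => if e.1 ∈ D then 1 else 0) = 0 := by
  ext x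
  refine Eq.trans (sum_congr rfl fun e _ => ?_) (sum_edgeSet_ite_mem_eq_zero
    (inter_subset_right.trans boundary_subset_edges) (heven x))
  simp only [RotationSystem.faceEdgeMatrix, ite_zero_mul_ite_zero, one_mul, mem_inter, and_comm]

lemma faceEdgeMatrix_mul_edgeVertexMatrix [Fintype G.edgeSet] :
    rs.faceEdgeMatrix * edgeVertexMatrix G = 0 := by
  ext x v
  have hcol : (edgeVertexMatrix G).col v =
      fun e => if e.1 ∈ (ofSimpleGraph G).inc v then 1 else 0 := by
    ext e
    simp [edgeVertexMatrix, mem_inc_ofSimpleGraph]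
  have hzero := congrFun (faceEdgeMatrix_mulVec_eq_zero (rs := rs)
    (D := (ofSimpleGraph G).inc v) fun x => by
      rw [inter_comm]
      exact isEven_boundary.even v (mem_verts_ofSimpleGraph v)) x
  rwa [← hcol] at hzero

lemma eq_const_of_edgeVertexMatrix_mulVec_eq_zero (hconn : G.Connected) {s : V → ZMod 2}
    (hs : (edgeVertexMatrix G).mulVec s = 0) : ∃ c, s = fun _ => c := by
  obtain ⟨v₀⟩ := hconn.nonempty
  refine ⟨s v₀, funext fun v => apply_eq_of_reachable (fun a b hab => ?_)
    (hconn.preconnected v v₀)⟩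
  rw [← CharTwo.add_eq_zero, ← edgeVertexMatrix_mulVec s hab, hs, Pi.zero_apply]

omit [Fintype V] [DecidableEq V] in
lemma apply_face_eq_of_fst_eq {β : Type*} {y : Quotient rs.faceSetoid → β}
    (hy : ∀ d, y (rs.face d) = y (rs.face d.symm)) {d d' : G.Dart} (h : d.fst = d'.fst) :
    y (rs.face d) = y (rs.face d') := by
  obtain ⟨n, rfl⟩ := rs.cyclic d d' h
  clear h
  induction n with
  | zero => rfl
  | succ n ih => rw [ih, pow_succ', Equiv.Perm.mul_apply, ← face_symm, ← hy]

lemma eq_const_of_faceEdgeMatrix_transpose_mulVec_eq_zero [Fintype (Quotient rs.faceSetoid)]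
    (hconn : G.Connected) {y : Quotient rs.faceSetoid → ZMod 2}
    (hy : rs.faceEdgeMatrix.transpose.mulVec y = 0) : ∃ c, y = fun _ => c := by
  have hsymm : ∀ d, y (rs.face d) = y (rs.face d.symm) := by
    intro d
    rw [← CharTwo.add_eq_zero, ← faceEdgeMatrix_transpose_mulVec, hy, Pi.zero_apply]
  rcases isEmpty_or_nonempty G.Dart with hempty | ⟨⟨d₀⟩⟩
  · exact ⟨0, funext fun x => (hempty.false (face_surjective rs x).choose).elim⟩
  refine ⟨y (rs.face d₀), funext fun x => ?_⟩
  obtain ⟨d, rfl⟩ := face_surjective rs x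
  let P : V → Prop := fun v => ∀ d : G.Dart, d.fst = v → y (rs.face d) = y (rs.face d₀)
  have hstep : ∀ {u w}, G.Adj u w → P u → P w := fun {u w} huw hu d hd =>
    (apply_face_eq_of_fst_eq hsymm hd).trans ((hsymm ⟨(u, w), huw⟩).symm.trans (hu _ rfl))
  have hP : P d₀.fst = P d.fst := apply_eq_of_reachable
    (fun u w huw => propext ⟨hstep huw, hstep huw.symm⟩) (hconn.preconnected _ _)
  exact hP.mp (fun d hd => apply_face_eq_of_fst_eq hsymm hd) d rfl

lemma exists_eq_cut_of_even_inter_boundary (hconn : G.Connected)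
    (heuler : Fintype.card V + rs.numFaces = 2 + G.edgeSet.ncard) {D : Finset (Sym2 V)}
    (hD : D ⊆ (ofSimpleGraph G).edges) (heven : ∀ x, Even (D ∩ rs.boundary x).card) :
    ∃ S ⊆ (ofSimpleGraph G).verts, D = (ofSimpleGraph G).cut S := by
  classical
  have : Fintype (Quotient rs.faceSetoid) := Fintype.ofFinite _
  have hcard : Fintype.card G.edgeSet + 2 ≤
      Fintype.card V + Fintype.card (Quotient rs.faceSetoid) := by
    rw [← Nat.card_eq_fintype_card (α := G.edgeSet),
      ← Nat.card_eq_fintype_card (α := Quotient rs.faceSetoid), add_comm]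
    exact heuler.ge
  obtain ⟨s, hs⟩ := exists_mulVec_eq_of_mulVec_eq_zero rs.faceEdgeMatrix (edgeVertexMatrix G)
    faceEdgeMatrix_mul_edgeVertexMatrix
    (fun _ => eq_const_of_faceEdgeMatrix_transpose_mulVec_eq_zero hconn)
    (fun _ => eq_const_of_edgeVertexMatrix_mulVec_eq_zero hconn) hcard
    (faceEdgeMatrix_mulVec_eq_zero heven)
  refine ⟨univ.filter fun v => s v = 1, fun v _ => mem_verts_ofSimpleGraph v, ?_⟩
  have hsum : ∀ a b : ZMod 2, a + b = 1 ↔ ¬ (a = 1 ↔ b = 1) := by decide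
  have hmem : ∀ e ∈ G.edgeSet,
      e ∈ D ↔ e ∈ (ofSimpleGraph G).cut (univ.filter fun v => s v = 1) := by
    intro e he
    induction e with
    | _ a b =>
      have hab := congrFun hs ⟨s(a, b), he⟩
      rw [edgeVertexMatrix_mulVec s he] at hab
      rw [mem_cut_ofSimpleGraph he, mem_filter_univ, mem_filter_univ, ← hsum, hab]
      simp
  ext e
  exact ⟨fun he => (hmem e (mem_edges_ofSimpleGraph.1 (hD he))).1 he,
    fun he => (hmem e (mem_edges_ofSimpleGraph.1 (cut_subset_edges _ he))).2 he⟩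

omit [DecidableEq V] in
lemma face_ne_face_symm (hconn : G.Connected) (hbridgeless : ∀ e : Sym2 V, ¬ G.IsBridge e)
    (hcubic : IsCubic G) (heuler : Fintype.card V + rs.numFaces = 2 + G.edgeSet.ncard)
    (d : G.Dart) : rs.face d ≠ rs.face d.symm := by
  classical
  intro hface
  have hnot : ∀ x, d.edge ∉ rs.boundary x := fun x => by simp [edge_mem_boundary, hface]
  obtain ⟨S, hS, hcut⟩ := exists_eq_cut_of_even_inter_boundary hconn heuler (D := {d.edge})
    (singleton_subset_iff.2 (mem_edges_ofSimpleGraph.2 d.edge_mem))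
    fun x => by simp [singleton_inter_of_notMem (hnot x)]
  have hcard : ((ofSimpleGraph G).cut S).card = 1 := by rw [← hcut, card_singleton]
  have htwo := isTwoEdgeConnected_ofSimpleGraph hconn hbridgeless S hS
    (nonempty_iff_ne_empty.2 fun h => by simp [h] at hcard)
    fun h => by simp [h, (isCubic_ofSimpleGraph hcubic).cut_verts] at hcard
  omega

lemma exists_isFaceSystem_ofSimpleGraph (hconn : G.Connected)
    (hbridgeless : ∀ e : Sym2 V, ¬ G.IsBridge e) (hcubic : IsCubic G)
    (hplanar : HasPlanarEmbedding G) : ∃ 𝓕, (ofSimpleGraph G).IsFaceSystem 𝓕 := by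
  classical
  obtain ⟨rs, heuler⟩ := hplanar
  have : Fintype (Quotient rs.faceSetoid) := Fintype.ofFinite _
  have hcover : (ofSimpleGraph G).IsEvenDoubleCover univ rs.boundary := by
    refine ⟨fun x _ => isEven_boundary, fun e he => ?_⟩
    obtain ⟨d, rfl⟩ := exists_dart_edge_eq (mem_edges_ofSimpleGraph.1 he)
    have hface := face_ne_face_symm hconn hbridgeless hcubic heuler d
    simp only [edge_mem_boundary]
    rw [filter_not_eq_iff_eq hface, card_pair hface]
  exact ⟨_, hcover.isFaceSystem_decomposition (isCubic_ofSimpleGraph hcubic) fun D hD heven =>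
    exists_eq_cut_of_even_inter_boundary hconn heuler hD fun x => heven x (mem_univ x)⟩

end Faces

section Circuits

variable {V : Type*} {G : SimpleGraph V} {C : Finset (Sym2 V)}

variable (G) in
/-- The subgraph of `G` spanned by a set of edges, without isolated vertices. Elements of `C` that
are not edges of `G` are ignored. -/
def subgraphOf (C : Finset (Sym2 V)) : G.Subgraph where
  verts := {v | ∃ w, G.Adj v w ∧ s(v, w) ∈ C}
  Adj u w := G.Adj u w ∧ s(u, w) ∈ C
  adj_sub h := h.1
  edge_vert h := ⟨_, h⟩
  symm := ⟨fun _ _ h => ⟨h.1.symm, Sym2.eq_swap ▸ h.2⟩⟩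

lemma mem_edgeSet_subgraphOf {e : Sym2 V} :
    e ∈ (subgraphOf G C).edgeSet ↔ e ∈ G.edgeSet ∧ e ∈ C := by
  induction e with
  | _ a b => exact Iff.rfl

variable [Fintype V] [DecidableEq V]

open IncGraph

lemma card_inter_inc_ofSimpleGraph (v : V) :
    (C ∩ (ofSimpleGraph G).inc v).card = ((subgraphOf G C).neighborSet v).ncard := by
  have himage : (↑(C ∩ (ofSimpleGraph G).inc v) : Set (Sym2 V)) =
      (fun w => s(v, w)) '' (subgraphOf G C).neighborSet v := by
    ext e
    simp only [mem_coe, mem_inter, mem_inc_ofSimpleGraph, Set.mem_image]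
    constructor
    · rintro ⟨heC, hvw, w, rfl⟩
      exact ⟨w, ⟨hvw, heC⟩, rfl⟩
    · rintro ⟨w, ⟨hvw, heC⟩, rfl⟩
      exact ⟨heC, hvw, Sym2.mem_mk_left v w⟩
  rw [← Set.ncard_coe_finset, himage,
    Set.ncard_image_of_injective _ fun _ _ h => Sym2.congr_right.1 h]

lemma ncard_neighborSet_subgraphOf (hcubic : IsCubic G) (hC : (ofSimpleGraph G).IsEven C) {v : V}
    (hv : v ∈ (subgraphOf G C).verts) : ((subgraphOf G C).neighborSet v).ncard = 2 := by
  obtain ⟨w, hvw⟩ := hv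
  have hpos : 0 < ((subgraphOf G C).neighborSet v).ncard := (Set.ncard_pos).2 ⟨w, hvw⟩
  have heven := hC.even v (mem_verts_ofSimpleGraph v)
  have hle := (isCubic_ofSimpleGraph hcubic).card_inter_inc_le_two hC (mem_verts_ofSimpleGraph v)
  rw [card_inter_inc_ofSimpleGraph, Nat.even_iff] at heven
  rw [card_inter_inc_ofSimpleGraph] at hle
  omega

lemma isEven_filter_forall_mem (hC : (ofSimpleGraph G).IsEven C) {P : V → Prop} [DecidablePred P]
    (hP : ∀ u w, (subgraphOf G C).Adj u w → P u → P w) :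
    (ofSimpleGraph G).IsEven (C.filter fun e => ∀ v ∈ e, P v) := by
  refine ⟨(filter_subset _ _).trans hC.subset, fun v hv => ?_⟩
  have hmem : ∀ e ∈ C ∩ (ofSimpleGraph G).inc v, (∀ u ∈ e, P u) ↔ P v := by
    intro e he
    obtain ⟨heC, hinc⟩ := mem_inter.1 he
    obtain ⟨hvw, w, rfl⟩ := mem_inc_ofSimpleGraph.1 hinc
    exact ⟨fun h => h v (Sym2.mem_mk_left v w),
      fun h => Sym2.ball.2 ⟨h, hP v w ⟨hvw, heC⟩ h⟩⟩
  rw [filter_inter, filter_congr hmem]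
  by_cases hPv : P v
  · rw [filter_true_of_mem fun _ _ => hPv]
    exact hC.even v hv
  · rw [filter_false_of_mem fun _ _ => hPv, card_empty]
    exact Even.zero

-- The edges of `C` in the component of a vertex form a nonempty even set, hence all of `C`.
lemma connected_subgraphOf (hC : (ofSimpleGraph G).IsCircuit C) : (subgraphOf G C).Connected := by
  classical
  obtain ⟨e, he⟩ := hC.nonempty
  have hverts : (subgraphOf G C).verts.Nonempty := by
    induction e with
    | _ a b => exact ⟨a, b, mem_edges_ofSimpleGraph.1 (hC.isEven.subset he), he⟩
  rw [SimpleGraph.Subgraph.connected_iff]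
  refine ⟨⟨?_⟩, hverts⟩
  rintro ⟨v₀, hv₀⟩ ⟨v₁, hv₁⟩
  let P : V → Prop := fun v => ∃ hv, (subgraphOf G C).coe.Reachable ⟨v₀, hv₀⟩ ⟨v, hv⟩
  have hP : ∀ u w, (subgraphOf G C).Adj u w → P u → P w := by
    rintro u w huw ⟨hu, hreach⟩
    have hadj : (subgraphOf G C).coe.Adj ⟨u, hu⟩ ⟨w, huw.snd_mem⟩ := huw
    exact ⟨huw.snd_mem, hreach.trans hadj.reachable⟩
  have hP₀ : P v₀ := ⟨hv₀, .rfl⟩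
  obtain ⟨w₀, hw₀⟩ := id hv₀
  obtain ⟨w₁, hw₁⟩ := id hv₁
  have heq := hC.eq_of_subset _ (filter_subset _ _) (isEven_filter_forall_mem hC.isEven hP)
    ⟨s(v₀, w₀), mem_filter.2 ⟨hw₀.2, Sym2.ball.2 ⟨hP₀, hP v₀ w₀ hw₀ hP₀⟩⟩⟩
  obtain ⟨_, hreach⟩ := filter_eq_self.1 heq _ hw₁.2 v₁ (Sym2.mem_mk_left v₁ w₁)
  exact hreach

lemma isCircuit_subgraphOf (hcubic : IsCubic G) (hC : (ofSimpleGraph G).IsCircuit C) :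
    IsCircuit (subgraphOf G C) :=
  ⟨connected_subgraphOf hC, fun _ => ncard_neighborSet_subgraphOf hcubic hC.isEven⟩

lemma subgraphOf_injOn : Set.InjOn (subgraphOf G) {C | C ⊆ (ofSimpleGraph G).edges} := by
  intro C hC D hD h
  ext e
  have hiff := congrArg (e ∈ ·.edgeSet) h
  simp only [mem_edgeSet_subgraphOf, ← mem_edges_ofSimpleGraph, eq_iff_iff] at hiff
  exact ⟨fun he => (hiff.1 ⟨hC he, he⟩).2, fun he => (hiff.2 ⟨hD he, he⟩).2⟩

omit [Fintype V] [DecidableEq V] in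
lemma IsCircuit.exists_adj {H : G.Subgraph} (hH : IsCircuit H) : ∃ v w, H.Adj v w := by
  obtain ⟨v, hv⟩ := (SimpleGraph.Subgraph.connected_iff.1 hH.1).2
  obtain ⟨w, hw⟩ := Set.nonempty_of_ncard_ne_zero (by rw [hH.2 v hv]; exact two_ne_zero)
  exact ⟨v, w, hw⟩

omit [Fintype V] [DecidableEq V] in
open scoped Classical in
lemma IsCiDC.count_le_two {𝒞 : Multiset G.Subgraph} (h : IsCiDC G 𝒞) (H : G.Subgraph) :
    𝒞.count H ≤ 2 := by
  by_cases hH : H ∈ 𝒞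
  · obtain ⟨v, w, hvw⟩ := (h.1 H hH).exists_adj
    rw [← h.2 s(v, w) hvw.adj_sub, Multiset.count, Multiset.countP_eq_card_filter,
      Multiset.countP_eq_card_filter]
    refine Multiset.card_le_card (Multiset.monotone_filter_right _ ?_)
    rintro K rfl
    exact hvw
  · rw [Multiset.count_eq_zero_of_notMem hH]
    exact Nat.zero_le _

variable (G) in
omit [Fintype V] [DecidableEq V] in
lemma finite_setOf_isCiDC [Finite V] : {𝒞 : Multiset G.Subgraph | IsCiDC G 𝒞}.Finite := by
  classical
  have : Fintype G.Subgraph := Fintype.ofFinite _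
  refine (Set.finite_Iic (2 • (univ : Finset G.Subgraph).val)).subset fun 𝒞 h𝒞 => ?_
  rw [Set.mem_Iic, Multiset.le_iff_count]
  intro H
  rw [Multiset.count_nsmul, Multiset.count_univ, mul_one]
  exact h𝒞.count_le_two H

lemma isCiDC_map_subgraphOf (hcubic : IsCubic G) {𝒞 : Finset (Finset (Sym2 V))}
    (h𝒞 : (ofSimpleGraph G).IsCDC 𝒞) : IsCiDC G (𝒞.val.map (subgraphOf G)) := by
  classical
  refine ⟨fun H hH => ?_, fun e he => ?_⟩
  · obtain ⟨C, hC, rfl⟩ := Multiset.mem_map.1 hH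
    exact isCircuit_subgraphOf hcubic (h𝒞.isCircuit C hC)
  · rw [Multiset.countP_map, ← h𝒞.card_filter_mem e (mem_edges_ofSimpleGraph.2 he), card_def,
      filter_val]
    exact congrArg _ (Multiset.filter_congr fun C _ => by
      rw [mem_edgeSet_subgraphOf, and_iff_right he])

lemma nu_ofSimpleGraph_le (hcubic : IsCubic G) : (ofSimpleGraph G).nu ≤ nu G := by
  rw [IncGraph.nu, nu, ← Set.ncard_coe_finset]
  refine Set.ncard_le_ncard_of_injOn (fun 𝒞 => 𝒞.val.map (subgraphOf G))
    (fun 𝒞 h𝒞 => isCiDC_map_subgraphOf hcubic (mem_cdcs.1 h𝒞)) ?_ (finite_setOf_isCiDC G)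
  have hsub : ∀ 𝒜 ∈ (ofSimpleGraph G).cdcs, ∀ C ∈ 𝒜, C ⊆ (ofSimpleGraph G).edges :=
    fun 𝒜 h𝒜 C hC => ((mem_cdcs.1 h𝒜).isCircuit C hC).isEven.subset
  have hle : ∀ 𝒜 ∈ (ofSimpleGraph G).cdcs, ∀ ℬ ∈ (ofSimpleGraph G).cdcs,
      𝒜.val.map (subgraphOf G) = ℬ.val.map (subgraphOf G) → 𝒜 ⊆ ℬ := by
    intro 𝒜 h𝒜 ℬ hℬ heq C hC
    have hmem : subgraphOf G C ∈ ℬ.val.map (subgraphOf G) :=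
      heq ▸ Multiset.mem_map_of_mem _ hC
    obtain ⟨D, hD, hDC⟩ := Multiset.mem_map.1 hmem
    rwa [← subgraphOf_injOn (hsub ℬ hℬ D hD) (hsub 𝒜 h𝒜 C hC) hDC]
  exact fun 𝒜 h𝒜 ℬ hℬ heq => Subset.antisymm (hle 𝒜 h𝒜 ℬ hℬ heq) (hle ℬ hℬ 𝒜 h𝒜 heq.symm)

end Circuits

/-- Every connected bridgeless cubic planar simple graph with `n ≥ 4` vertices has at
least `2^(√n / 100)` circuit double covers. -/
theorem stmt15 {V : Type*} [Fintype V] (G : SimpleGraph V)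
    (hconn : G.Connected) (hbridgeless : ∀ e : Sym2 V, ¬ G.IsBridge e)
    (hcubic : IsCubic G) (hplanar : HasPlanarEmbedding G)
    (hn : 4 ≤ Fintype.card V) :
    (2 : ℝ) ^ (Real.sqrt (Fintype.card V) / 100) ≤ (nu G : ℝ) := by
  classical
  obtain ⟨𝓕, h𝓕⟩ := exists_isFaceSystem_ofSimpleGraph hconn hbridgeless hcubic hplanar
  calc (2 : ℝ) ^ (Real.sqrt (Fintype.card V) / 100)
      ≤ (IncGraph.ofSimpleGraph G).nu := h𝓕.two_rpow_le_nu (isCubic_ofSimpleGraph hcubic)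
        (isTwoEdgeConnected_ofSimpleGraph hconn hbridgeless) hn
    _ ≤ nu G := mod_cast nu_ofSimpleGraph_le hcubic

end CiDC
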